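/- (Theorem 1.4: Aronson–Caffarelli type estimate without the extinction time, via the L^{p_c} norm.) Let d ≥ 3 and 0 < m < m_c, where m_c = (d−2)/d, and let p_c = d(1−m)/2. There exist positive constants C₁ and C₃ depending only on d and m with the following property. Let u be a classical solution of the FDE ∂ₜu = Δ(u^m) on (0,T)×Ω taking nonnegative initial data u₀ with u₀ ∈ L^{p_c}(B_R(x₀)), having finite extinction time T, where x₀ ∈ Ω and R > 0 are such that the closed ball of radius 3R about x₀ is contained in Ω. Then for every 0 < t < T: R^{−d} ‖u₀‖_{L¹(B_R(x₀))} ≤ C₁ R^{−2/(1−m)} t^{1/(1−m)} + C₃ ‖u₀‖_{L^{p_c}(B_R(x₀))} R^{−2} t^{−m/(1−m)} u(t,x₀)^m. -/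

import Mathlib

open MeasureTheory Metric Set Real

/-- The spatial Laplacian of `f : ℝ^d → ℝ` at a point, as the sum of second
coordinate derivatives. -/
noncomputable def spaceLap {d : ℕ} (f : EuclideanSpace ℝ (Fin d) → ℝ)
    (x : EuclideanSpace ℝ (Fin d)) : ℝ :=
  ∑ i : Fin d, fderiv ℝ (fun y => fderiv ℝ f y (EuclideanSpace.single i 1)) x
    (EuclideanSpace.single i 1)

/-- `u` is a classical solution of the fast diffusion equation `∂ₜ u = Δ(u^m)`
on the space-time set `Q`: it is positive and smooth on `Q` and satisfies the
equation pointwise on `Q`. -/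
def IsFDESol {d : ℕ} (m : ℝ) (Q : Set (ℝ × EuclideanSpace ℝ (Fin d)))
    (u : ℝ → EuclideanSpace ℝ (Fin d) → ℝ) : Prop :=
  (∀ p ∈ Q, 0 < u p.1 p.2) ∧
  ContDiffOn ℝ (⊤ : ℕ∞) (fun p : ℝ × EuclideanSpace ℝ (Fin d) => u p.1 p.2) Q ∧
  ∀ p ∈ Q, deriv (fun s => u s p.2) p.1 = spaceLap (fun y => u p.1 y ^ m) p.2

/-- `u` (defined for `0 < t < T` on `Ω`) takes the initial data `u₀`:
it extends continuously to `{0} × Ω` with value `u₀` there. -/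
def TakesInit {d : ℕ} (T : ℝ) (Ω : Set (EuclideanSpace ℝ (Fin d)))
    (u : ℝ → EuclideanSpace ℝ (Fin d) → ℝ) (u₀ : EuclideanSpace ℝ (Fin d) → ℝ) : Prop :=
  ContinuousOn (fun p : ℝ × EuclideanSpace ℝ (Fin d) => u p.1 p.2) (Ico 0 T ×ˢ Ω) ∧
  ∀ x ∈ Ω, u 0 x = u₀ x

/-- `u` has finite extinction time `T` on `Ω`: it extends continuously to
`{T} × Ω` with value `0` there, while `u(t,·)` is not identically zero for `0 < t < T`. -/
def ExtinctAt {d : ℕ} (T : ℝ) (Ω : Set (EuclideanSpace ℝ (Fin d)))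
    (u : ℝ → EuclideanSpace ℝ (Fin d) → ℝ) : Prop :=
  ContinuousOn (fun p : ℝ × EuclideanSpace ℝ (Fin d) => u p.1 p.2) (Ioc 0 T ×ˢ Ω) ∧
  (∀ x ∈ Ω, u T x = 0) ∧
  ∀ t ∈ Ioo 0 T, ∃ x ∈ Ω, u t x ≠ 0


lemma line_le (a : ℤ → ℝ) (ha : a.support.Finite) (s : ℤ) :
    ENNReal.ofReal |a s| ≤ ∑' t : ℤ, ENNReal.ofReal |a (t + 1) - a t| := by
  obtain ⟨N, hN⟩ : ∃ N : ℕ, a (s + N) = 0 := by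
    by_contra! h
    have : (Set.range (fun n : ℕ => s + (n : ℤ))) ⊆ a.support := by
      rintro _ ⟨n, rfl⟩; exact h n
    exact (Set.infinite_range_of_injective (fun x y hxy => by simpa using hxy)) (ha.subset this)
  have h1 : |a s| ≤ ∑ j ∈ Finset.range N, |a (s + j + 1) - a (s + j)| := by
    have := Finset.sum_range_sub (fun j : ℕ => a (s + j)) N
    have h2 : a s = - ∑ j ∈ Finset.range N, (a (s + j + 1) - a (s + j)) := by
      have h3 : ∑ j ∈ Finset.range N, (a (s + j + 1) - a (s + j)) = a (s + N) - a (s + (0:ℕ)) := by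
        rw [← this]; refine Finset.sum_congr rfl fun j _ => ?_
        push_cast; rw [add_assoc]
      rw [h3, hN]; simp
    conv_lhs => rw [h2]
    rw [abs_neg]
    exact Finset.abs_sum_le_sum_abs _ _
  calc ENNReal.ofReal |a s| ≤ ENNReal.ofReal (∑ j ∈ Finset.range N, |a (s + j + 1) - a (s + j)|) :=
        ENNReal.ofReal_le_ofReal h1
    _ = ∑ j ∈ Finset.range N, ENNReal.ofReal |a (s + j + 1) - a (s + j)| :=
        ENNReal.ofReal_sum_of_nonneg (fun _ _ => abs_nonneg _)
    _ ≤ ∑' j : ℕ, ENNReal.ofReal |a (s + j + 1) - a (s + j)| := ENNReal.sum_le_tsum _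
    _ ≤ _ := ENNReal.tsum_comp_le_tsum_of_injective (f := fun j : ℕ => s + (j : ℤ))
        (fun x y hxy => by simpa using hxy) (fun t => ENNReal.ofReal |a (t + 1) - a t|)

lemma sob1_enn (d : ℕ) (hd : 3 ≤ d) (g : (Fin d → ℤ) → ℝ) (hg : g.support.Finite) :
    ∑' k, ENNReal.ofReal |g k| ^ ((d : ℝ) / (d - 1)) ≤
      (∑' k, ∑ i, ENNReal.ofReal |g (k + Pi.single i 1) - g k|) ^ ((d : ℝ) / (d - 1)) := by
  have hd' : (3 : ℝ) ≤ d := by exact_mod_cast hd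
  have hconj : Real.HolderConjugate (Fintype.card (Fin d)) ((d : ℝ) / (d - 1)) := by
    rw [Fintype.card_fin]
    have := Real.HolderConjugate.conjExponent (p := d) (by linarith)
    simpa [Real.conjExponent] using this
  have key := lintegral_prod_lintegral_pow_le (fun _ : Fin d => (Measure.count : Measure ℤ)) hconj
    (f := fun k => ∑ i, ENNReal.ofReal |g (k + Pi.single i 1) - g k|) (measurable_of_countable _)
  have hpi : ∀ F : (Fin d → ℤ) → ENNReal, ∫⁻ x, F x ∂(Measure.pi fun _ : Fin d => (Measure.count : Measure ℤ))
      = ∑' k, F k := by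
    intro F
    rw [lintegral_countable']
    simp
  rw [hpi, hpi] at key
  refine le_trans (ENNReal.tsum_le_tsum fun k => ?_) key
  have h1 : ∀ i : Fin d, ENNReal.ofReal |g k| ≤ ∫⁻ xᵢ : ℤ, ∑ j, ENNReal.ofReal
      |g (Function.update k i xᵢ + Pi.single j 1) - g (Function.update k i xᵢ)| ∂Measure.count := by
    intro i
    rw [lintegral_count]
    have hl := line_le (fun t => g (Function.update k i t))
      (hg.preimage (f := fun t => Function.update k i t)
        (Function.update_injective k i).injOn) (k i)
    simp only [Function.update_eq_self] at hl
    refine hl.trans (ENNReal.tsum_le_tsum fun t => ?_)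
    have : Function.update k i (t + 1) = Function.update k i t + Pi.single i 1 := by
      ext j; by_cases h : j = i
      · subst h; simp
      · simp [h]
    rw [this]
    exact Finset.single_le_sum (f := fun j => ENNReal.ofReal
      |g (Function.update k i t + Pi.single j 1) - g (Function.update k i t)|)
      (fun _ _ => zero_le) (Finset.mem_univ i)
  calc ENNReal.ofReal |g k| ^ ((d : ℝ) / (d - 1))
      = ∏ i : Fin d, ENNReal.ofReal |g k| ^ ((1 : ℝ) / (Fintype.card (Fin d) - 1 : ℝ)) := by
        rw [Finset.prod_const, Finset.card_univ, Fintype.card_fin, ← ENNReal.rpow_natCast,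
          ← ENNReal.rpow_mul]
        congr 1; ring
    _ ≤ _ := by
        refine Finset.prod_le_prod' fun i _ => ENNReal.rpow_le_rpow (h1 i) ?_
        rw [Fintype.card_fin]
        have : (0:ℝ) < d - 1 := by linarith
        positivity

lemma diff_supp {d : ℕ} (g : (Fin d → ℤ) → ℝ) (hg : g.support.Finite) (e : Fin d → ℤ) :
    (fun k => g (k + e)).support.Finite :=
  hg.preimage (f := fun k => k + e) (add_left_injective e).injOn

lemma sob1 (d : ℕ) (hd : 3 ≤ d) (g : (Fin d → ℤ) → ℝ) (hg : g.support.Finite) (h0 : ∀ k, 0 ≤ g k) :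
    ∑' k, g k ^ ((d : ℝ) / (d - 1)) ≤
      (∑' k, ∑ i, |g (k + Pi.single i 1) - g k|) ^ ((d : ℝ) / (d - 1)) := by
  have hd' : (3 : ℝ) ≤ d := by exact_mod_cast hd
  have hp : 0 < (d : ℝ) / (d - 1) := by apply div_pos <;> linarith
  have key := sob1_enn d hd g hg
  have e1 : ∑' k, ENNReal.ofReal |g k| ^ ((d : ℝ) / (d - 1)) =
      ENNReal.ofReal (∑' k, g k ^ ((d : ℝ) / (d - 1))) := by
    rw [ENNReal.ofReal_tsum_of_nonneg (fun k => Real.rpow_nonneg (h0 k) _)]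
    · refine tsum_congr fun k => ?_
      rw [ENNReal.ofReal_rpow_of_nonneg (abs_nonneg _) hp.le, abs_of_nonneg (h0 k)]
    · refine summable_of_hasFiniteSupport (hg.subset ?_)
      intro k hk hk'
      apply hk; simp [hk', hp.ne']
  have e2 : ∑' k, ∑ i, ENNReal.ofReal |g (k + Pi.single i 1) - g k| =
      ENNReal.ofReal (∑' k, ∑ i, |g (k + Pi.single i 1) - g k|) := by
    rw [ENNReal.ofReal_tsum_of_nonneg (fun k => Finset.sum_nonneg fun _ _ => abs_nonneg _)]
    · refine tsum_congr fun k => ?_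
      rw [ENNReal.ofReal_sum_of_nonneg (fun _ _ => abs_nonneg _)]
    · refine summable_sum fun i _ => ?_
      refine summable_of_hasFiniteSupport (((diff_supp g hg (Pi.single i 1)).union hg).subset ?_)
      intro k hk
      by_contra h
      simp only [Set.mem_union, Function.mem_support, not_or, not_not] at h
      apply hk; simp [h.1, h.2]
  rw [e1, e2, ENNReal.ofReal_rpow_of_nonneg (tsum_nonneg fun k => Finset.sum_nonneg fun _ _ => abs_nonneg _) hp.le] at key
  refine (ENNReal.ofReal_le_ofReal_iff ?_).1 key
  exact Real.rpow_nonneg (tsum_nonneg fun k => Finset.sum_nonneg fun _ _ => abs_nonneg _) _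

lemma rpow_sub_le {γ : ℝ} (hγ : 1 ≤ γ) {x y : ℝ} (hx : 0 ≤ x) (hy : 0 ≤ y) :
    |x ^ γ - y ^ γ| ≤ γ * (x ^ (γ - 1) + y ^ (γ - 1)) * |x - y| := by
  wlog h : y ≤ x generalizing x y
  · have := this hy hx (by linarith)
    rw [abs_sub_comm, abs_sub_comm x y, add_comm]; exact this
  rw [abs_of_nonneg (sub_nonneg.2 (Real.rpow_le_rpow hy h (by linarith))), abs_of_nonneg (sub_nonneg.2 h)]
  have h2 : x ^ γ - y ^ γ ≤ γ * x ^ (γ - 1) * (x - y) := by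
    rcases hx.eq_or_lt with h0 | h0
    · have : y = 0 := by linarith
      subst this; rw [← h0]; simp
    · have hb := one_add_mul_self_le_rpow_one_add (s := y / x - 1) (by
        have : 0 ≤ y / x := by positivity
        linarith) hγ
      have e : 1 + (y / x - 1) = y / x := by ring
      rw [e, Real.div_rpow hy hx, le_div_iff₀ (by positivity)] at hb
      have e2 : x ^ γ = x ^ (γ - 1) * x := by
        rw [Real.rpow_sub_one h0.ne']; field_simp
      have e3 : (1 + γ * (y / x - 1)) * x ^ γ = x ^ γ + γ * x ^ (γ - 1) * (y - x) := by
        rw [e2]; field_simp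
      rw [e3] at hb; nlinarith
  refine h2.trans ?_
  have : 0 ≤ y ^ (γ - 1) := Real.rpow_nonneg hy _
  gcongr
  linarith

lemma fsum {α : Type*} {f g : α → ℝ} (hf : f.support.Finite) (h : ∀ k, f k = 0 → g k = 0) : Summable g :=
  summable_of_hasFiniteSupport (hf.subset fun k hk hk' => hk (h k hk'))

lemma sob_term {γ q l : ℝ} (hγ1 : 1 < γ) (hq : q = 2 * (γ - 1)) (hl : 0 < l) {x y : ℝ} (hx : 0 ≤ x) (hy : 0 ≤ y) :
    |x ^ γ - y ^ γ| ≤ γ * (l * (x ^ q + y ^ q) + (x - y) ^ 2 / l) := by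
  refine (rpow_sub_le hγ1.le hx hy).trans ?_
  rw [mul_assoc]
  refine mul_le_mul_of_nonneg_left ?_ (by linarith)
  have hsq : ∀ x : ℝ, 0 ≤ x → x ^ q = (x ^ (γ - 1)) ^ 2 := by
    intro x hx
    rw [← Real.rpow_natCast, ← Real.rpow_mul hx, hq]; congr 1; push_cast; ring
  rw [hsq _ hx, hsq _ hy]
  generalize x ^ (γ - 1) = a
  generalize y ^ (γ - 1) = b
  rw [← sq_abs (x - y)]
  generalize |x - y| = c
  rw [← sub_nonneg]
  have : l * (a ^ 2 + b ^ 2) + c ^ 2 / l - (a + b) * c =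
    ((l * a - c / 2) ^ 2 + (l * b - c / 2) ^ 2 + c ^ 2 / 2) / l := by field_simp; ring
  rw [this]; positivity

lemma sob_alg {d γ X D : ℝ} (hd' : 3 ≤ d) (hγ : 1 < γ) (hX : 0 < X)
    (h : ∀ l : ℝ, 0 < l → X ^ ((d - 1) / d) ≤ γ * (2 * d * l * X + D / l)) :
    X ^ ((d - 2) / d) ≤ 8 * d * γ ^ 2 * D := by
  have hd0 : (0:ℝ) < d := by linarith
  have hY : 0 < X ^ (-(1:ℝ) / d) := Real.rpow_pos_of_pos hX _
  have h3 := h (X ^ (-(1:ℝ) / d) / (4 * d * γ)) (by positivity)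
  have e4 : X ^ (((d : ℝ) - 1) / d) = X ^ (-(1:ℝ) / d) * X := by
    rw [← Real.rpow_add_one hX.ne']; congr 1; field_simp; ring
  have e5 : X ^ (((d : ℝ) - 2) / d) = X ^ (-(1:ℝ) / d) * (X ^ (-(1:ℝ) / d) * X) := by
    rw [← e4, ← Real.rpow_add hX]; congr 1; field_simp; ring
  rw [e4] at h3
  rw [e5]
  generalize X ^ (-(1:ℝ) / d) = Y at *
  have e6 : γ * (2 * d * (Y / (4 * d * γ)) * X + D / (Y / (4 * d * γ))) = Y * X / 2 + 4 * d * γ ^ 2 * D / Y := by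
    field_simp; ring
  rw [e6] at h3
  have h7 : Y * X / 2 ≤ 4 * d * γ ^ 2 * D / Y := by linarith
  rw [le_div_iff₀ hY] at h7
  nlinarith

lemma tsum_shift {d : ℕ} (f : (Fin d → ℤ) → ℝ) (e : Fin d → ℤ) : ∑' k, f (k + e) = ∑' k, f k :=
  (Equiv.addRight e).tsum_eq f

lemma sob_sum {d : ℕ} {γ q l : ℝ} (hγ1 : 1 < γ) (hq : q = 2 * (γ - 1)) (hl : 0 < l)
    (f : (Fin d → ℤ) → ℝ) (hf : f.support.Finite) (h0 : ∀ k, 0 ≤ f k) :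
    (∑' k, ∑ i, |f (k + Pi.single i 1) ^ γ - f k ^ γ|) ≤
      γ * (2 * d * l * (∑' k, f k ^ q) + (∑' k, ∑ i, (f (k + Pi.single i 1) - f k) ^ 2) / l) := by
  have hq0 : 0 < q := by linarith
  have hqs : Summable fun k => f k ^ q := fsum hf fun k hk => by rw [hk, Real.zero_rpow hq0.ne']
  have hqs' : ∀ i : Fin d, Summable fun k => f (k + Pi.single i 1) ^ q := fun i =>
    hqs.comp_injective (add_left_injective (Pi.single i 1 : Fin d → ℤ))
  have hds : ∀ i : Fin d, Summable fun k => (f (k + Pi.single i 1) - f k) ^ 2 := fun i => by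
    refine summable_of_hasFiniteSupport (((diff_supp f hf (Pi.single i 1)).union hf).subset ?_)
    intro k hk
    by_contra h
    simp only [Set.mem_union, Function.mem_support, not_or, not_not] at h
    apply hk; simp [h.1, h.2]
  have hbi : ∀ i : Fin d, Summable fun k => γ * (l * (f (k + Pi.single i 1) ^ q + f k ^ q) + (f (k + Pi.single i 1) - f k) ^ 2 / l) :=
    fun i => ((((hqs' i).add hqs).mul_left l).add ((hds i).div_const l)).mul_left γ
  have hb : Summable fun k => ∑ i : Fin d, γ * (l * (f (k + Pi.single i 1) ^ q + f k ^ q) + (f (k + Pi.single i 1) - f k) ^ 2 / l) :=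
    summable_sum fun i _ => hbi i
  have hle : ∀ k, ∑ i : Fin d, |f (k + Pi.single i 1) ^ γ - f k ^ γ| ≤ ∑ i : Fin d, γ * (l * (f (k + Pi.single i 1) ^ q + f k ^ q) + (f (k + Pi.single i 1) - f k) ^ 2 / l) :=
    fun k => Finset.sum_le_sum fun i _ => sob_term hγ1 hq hl (h0 _) (h0 _)
  have hs : Summable fun k => ∑ i : Fin d, |f (k + Pi.single i 1) ^ γ - f k ^ γ| :=
    Summable.of_nonneg_of_le (fun k => Finset.sum_nonneg fun _ _ => abs_nonneg _) hle hb
  refine (hs.tsum_le_tsum hle hb).trans (le_of_eq ?_)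
  rw [Summable.tsum_finsetSum (fun i _ => hbi i), Summable.tsum_finsetSum (fun i _ => hds i)]
  have : ∀ i : Fin d, ∑' k, γ * (l * (f (k + Pi.single i 1) ^ q + f k ^ q) + (f (k + Pi.single i 1) - f k) ^ 2 / l)
     = γ * (l * ((∑' k, f k ^ q) + (∑' k, f k ^ q)) + (∑' k, (f (k + Pi.single i 1) - f k) ^ 2) / l) := by
    intro i
    rw [tsum_mul_left, Summable.tsum_add ((((hqs' i).add hqs).mul_left l)) ((hds i).div_const l), tsum_mul_left,
      Summable.tsum_add (hqs' i) hqs, tsum_div_const]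
    have : ∑' k : (Fin d → ℤ), f (k + Pi.single i 1) ^ q = ∑' k, f k ^ q :=
      tsum_shift (fun k => f k ^ q) _
    rw [this]
  rw [Finset.sum_congr rfl fun i _ => this i, ← Finset.mul_sum, Finset.sum_add_distrib, ← Finset.sum_div,
    Finset.sum_const, Finset.card_univ, Fintype.card_fin, nsmul_eq_mul]
  ring

lemma sob2 (d : ℕ) (hd : 3 ≤ d) : ∃ C : ℝ, 0 < C ∧ ∀ (f : (Fin d → ℤ) → ℝ), f.support.Finite →
    (∀ k, 0 ≤ f k) →
    (∑' k, f k ^ (2 * (d : ℝ) / (d - 2))) ^ (((d : ℝ) - 2) / d) ≤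
      C * ∑' k, ∑ i, (f (k + Pi.single i 1) - f k) ^ 2 := by
  have hd' : (3 : ℝ) ≤ d := by exact_mod_cast hd
  have hd2 : (0:ℝ) < d - 2 := by linarith
  have hd1 : (0:ℝ) < d - 1 := by linarith
  have hd0 : (0:ℝ) < d := by linarith
  obtain ⟨γ, hγ⟩ : ∃ γ : ℝ, γ = 2 * (d - 1) / (d - 2) := ⟨_, rfl⟩
  have hγ1 : 1 < γ := by rw [hγ, lt_div_iff₀ hd2]; linarith
  refine ⟨8 * d * γ ^ 2, by positivity, fun f hf h0 => ?_⟩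
  obtain ⟨q, hq⟩ : ∃ q : ℝ, q = 2 * (d : ℝ) / (d - 2) := ⟨_, rfl⟩
  rw [← hq]
  have hq0 : 0 < q := by rw [hq]; positivity
  have hX0 : 0 ≤ ∑' k, f k ^ q := tsum_nonneg fun k => Real.rpow_nonneg (h0 k) _
  have hD0 : 0 ≤ ∑' k, ∑ i, (f (k + Pi.single i 1) - f k) ^ 2 := tsum_nonneg fun k => Finset.sum_nonneg fun _ _ => sq_nonneg _
  rcases hX0.eq_or_lt with hX' | hXpos
  · rw [← hX', Real.zero_rpow (by positivity)]; positivity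
  refine sob_alg hd' hγ1 hXpos fun l hl => ?_
  refine le_trans ?_ (sob_sum hγ1 (by rw [hγ, hq]; field_simp; ring) hl f hf h0)
  have h1 := sob1 d hd (fun k => f k ^ γ) (hf.subset fun k hk hk' => hk (by
    simp only [hk']; rw [Real.zero_rpow (by linarith)])) (fun k => Real.rpow_nonneg (h0 k) _)
  have e1 : ∑' k, (f k ^ γ) ^ ((d : ℝ) / (d - 1)) = ∑' k, f k ^ q := by
    refine tsum_congr fun k => ?_
    rw [← Real.rpow_mul (h0 k)]; congr 1; rw [hγ, hq]; field_simp
  rw [e1] at h1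
  have := Real.rpow_le_rpow hX0 h1 (z := ((d : ℝ) - 1) / d) (by positivity)
  rw [← Real.rpow_mul (tsum_nonneg fun k => Finset.sum_nonneg fun _ _ => abs_nonneg _)] at this
  have e : (d : ℝ) / (d - 1) * ((d - 1) / d) = 1 := by field_simp
  rwa [e, Real.rpow_one] at this

/-- discrete Laplacian -/
noncomputable def lap {d : ℕ} (f : (Fin d → ℤ) → ℝ) (k : Fin d → ℤ) : ℝ :=
  ∑ i : Fin d, (f (k + Pi.single i 1) + f (k - Pi.single i 1) - 2 * f k)

lemma hasSum_of_eq {α : Type*} {f g : α → ℝ} {a : ℝ} (h : HasSum f a) (e : ∀ k, g k = f k) : HasSum g a := by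
  have : g = f := funext e
  exact this ▸ h

lemma tsum_diff_zero {d : ℕ} (f : (Fin d → ℤ) → ℝ) (hf : f.support.Finite) (e : Fin d → ℤ) :
    HasSum (fun k : Fin d → ℤ => f (k + e) - f k) 0 := by
  have hs : Summable f := summable_of_hasFiniteSupport hf
  have h := hs.hasSum
  have h2 : HasSum (fun k : Fin d → ℤ => f (k + e)) (∑' k : Fin d → ℤ, f k) := by
    rw [← tsum_shift f e]
    exact (hs.comp_injective (add_left_injective e)).hasSum
  simpa using h2.sub h

lemma green1 {d : ℕ} (a b : (Fin d → ℤ) → ℝ) (ha : a.support.Finite) (e : Fin d → ℤ) :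
    HasSum (fun k => a k * (b (k + e) + b (k - e) - 2 * b k) + (a (k + e) - a k) * (b (k + e) - b k)) 0 := by
  have h := tsum_diff_zero (fun k => a k * (b k - b (k - e)))
    (ha.subset fun k hk hk' => hk (by simp only [hk']; simp)) e
  refine hasSum_of_eq h fun k => ?_
  rw [add_sub_cancel_right]; ring

lemma symm1 {d : ℕ} (a b : (Fin d → ℤ) → ℝ) (ha : a.support.Finite) (e : Fin d → ℤ) :
    HasSum (fun k => a k * (b (k + e) + b (k - e) - 2 * b k) - (a (k + e) + a (k - e) - 2 * a k) * b k) 0 := by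
  have h := tsum_diff_zero (fun k => a (k - e) * b k)
    ((diff_supp a ha (-e)).subset fun k hk hk' => hk (by
        simp only [Function.mem_support, not_not] at hk'
        rw [← sub_eq_add_neg] at hk'
        simp only [hk']; simp)) e
  have h' := tsum_diff_zero (fun k => a k * b (k - e))
    (ha.subset fun k hk hk' => hk (by simp only [hk']; simp)) e
  have h2 := h.sub h'
  rw [sub_zero] at h2
  refine hasSum_of_eq h2 fun k => ?_
  rw [add_sub_cancel_right]; ring

lemma lap_green {d : ℕ} (a b : (Fin d → ℤ) → ℝ) (ha : a.support.Finite) :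
    ∑' k : Fin d → ℤ, a k * lap b k = - ∑' k : Fin d → ℤ, ∑ i, (a (k + Pi.single i 1) - a k) * (b (k + Pi.single i 1) - b k) := by
  have h2 := hasSum_sum (s := Finset.univ) (fun (i : Fin d) _ => green1 a b ha (Pi.single i 1))
  have hs : Summable (fun k : Fin d → ℤ => a k * lap b k) := fsum ha fun k : Fin d → ℤ => fun hk => by rw [hk, zero_mul]
  have h3 : HasSum (fun k : Fin d → ℤ => ∑ i, (a (k + Pi.single i 1) - a k) * (b (k + Pi.single i 1) - b k))
      (- ∑' k : Fin d → ℤ, a k * lap b k) := by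
    have := h2.sub hs.hasSum
    simp only [Finset.sum_const_zero, zero_sub] at this
    refine hasSum_of_eq this fun k => ?_
    simp only [lap, Finset.mul_sum]
    rw [← Finset.sum_sub_distrib]
    refine Finset.sum_congr rfl fun i _ => ?_
    ring
  rw [h3.tsum_eq]; ring

lemma lap_supp {d : ℕ} (a : (Fin d → ℤ) → ℝ) (ha : a.support.Finite) : (lap a).support.Finite := by
  have hU : (⋃ i : Fin d, ((fun k : Fin d → ℤ => a (k + Pi.single i 1)).support ∪ (fun k : Fin d → ℤ => a (k + -Pi.single i 1)).support)).Finite :=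
    Set.finite_iUnion fun i => (diff_supp a ha _).union (diff_supp a ha _)
  refine (hU.union ha).subset ?_
  intro k hk
  by_contra h
  simp only [Set.mem_union, Set.mem_iUnion, Function.mem_support, not_or, not_not, not_exists] at h
  apply hk
  unfold lap
  refine Finset.sum_eq_zero fun i _ => ?_
  rw [sub_eq_add_neg k, (h.1 i).1, (h.1 i).2, h.2]; ring

lemma lap_symm {d : ℕ} (a b : (Fin d → ℤ) → ℝ) (ha : a.support.Finite) :
    ∑' k : Fin d → ℤ, a k * lap b k = ∑' k : Fin d → ℤ, lap a k * b k := by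
  have h2 := hasSum_sum (s := Finset.univ) (fun (i : Fin d) _ => symm1 a b ha (Pi.single i 1))
  have hs : Summable (fun k : Fin d → ℤ => a k * lap b k) := fsum ha fun k : Fin d → ℤ => fun hk => by rw [hk, zero_mul]
  have h3 : HasSum (fun k : Fin d → ℤ => lap a k * b k) (∑' k : Fin d → ℤ, a k * lap b k) := by
    have := hs.hasSum.sub h2
    simp only [Finset.sum_const_zero, sub_zero] at this
    refine hasSum_of_eq this fun k => ?_
    simp only [lap, Finset.mul_sum, Finset.sum_mul]
    rw [← Finset.sum_sub_distrib]
    refine Finset.sum_congr rfl fun i _ => ?_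
    ring
  rw [h3.tsum_eq]

/-- Comparison principle. -/
lemma comparison {d : ℕ} (A : Finset (Fin d → ℤ)) (B : Set (Fin d → ℤ))
    (hAB : ∀ k ∈ A, ∀ i, k + Pi.single i 1 ∈ B ∧ k - Pi.single i 1 ∈ B)
    (c S L : ℝ) (hc : 0 ≤ c) (φ : ℝ → ℝ) (hφ : Monotone φ) (hL : 0 ≤ L)
    (hφL : ∀ x y, y ≤ x → φ x - φ y ≤ L * (x - y))
    (w z w' z' : ℝ → (Fin d → ℤ) → ℝ)
    (hwc : ∀ k ∈ A, ContinuousOn (fun s => w s k) (Icc 0 S))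
    (hzc : ∀ k ∈ A, ContinuousOn (fun s => z s k) (Icc 0 S))
    (hw : ∀ k ∈ A, ∀ s ∈ Ioo 0 S, HasDerivAt (fun s => w s k) (w' s k) s)
    (hz : ∀ k ∈ A, ∀ s ∈ Ioo 0 S, HasDerivAt (fun s => z s k) (z' s k) s)
    (hw' : ∀ k ∈ A, ∀ s ∈ Ioo 0 S, w' s k ≤ c * lap (fun j => φ (w s j)) k)
    (hz' : ∀ k ∈ A, ∀ s ∈ Ioo 0 S, c * lap (fun j => φ (z s j)) k ≤ z' s k)
    (h0 : ∀ k ∈ A, w 0 k ≤ z 0 k)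
    (hB : ∀ k ∈ B, k ∉ A → ∀ s ∈ Ioo 0 S, w s k ≤ z s k) :
    ∀ k ∈ A, ∀ s ∈ Icc 0 S, w s k ≤ z s k := by
  classical
  set y : ℝ → (Fin d → ℤ) → ℝ := fun s k => max (w s k - z s k) 0 with hy
  set Y : ℝ → ℝ := fun s => ∑ k ∈ A, y s k ^ 2 with hY
  have hmax : ∀ x : ℝ, HasDerivAt (fun x : ℝ => (max x 0) ^ 2) (2 * max x 0) x := by
    intro x
    rcases lt_trichotomy x 0 with h | h | h
    · rw [max_eq_right h.le, mul_zero]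
      refine (hasDerivAt_const x (0:ℝ)).congr_of_eventuallyEq ?_
      filter_upwards [gt_mem_nhds h] with t ht
      rw [max_eq_right ht.le]; simp
    · subst h
      simp only [max_self, mul_zero]
      rw [hasDerivAt_iff_isLittleO]
      simp only [max_self, sub_zero, smul_zero]
      have : (fun x : ℝ => max x 0 ^ 2 - 0 ^ 2) =O[nhds 0] fun x : ℝ => x ^ 2 := by
        refine Asymptotics.IsBigO.of_bound 1 (Filter.Eventually.of_forall fun x => ?_)
        rw [one_mul, norm_pow, Real.norm_eq_abs, sub_eq_add_neg]
        simp only [ne_eq, OfNat.ofNat_ne_zero, not_false_eq_true, zero_pow, neg_zero, add_zero, norm_pow, Real.norm_eq_abs]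
        rw [abs_pow, sq_le_sq, abs_abs, abs_abs]
        rcases le_total x 0 with h | h
        · rw [max_eq_right h]; simp
        · rw [max_eq_left h]
      exact this.trans_isLittleO (by simpa using Asymptotics.isLittleO_pow_id (𝕜 := ℝ) (n := 2) (by norm_num))
    · rw [max_eq_left h.le]
      have := (hasDerivAt_pow 2 x)
      simp only [Nat.cast_ofNat, Nat.add_one_sub_one, pow_one] at this
      refine this.congr_of_eventuallyEq ?_
      filter_upwards [lt_mem_nhds h] with t ht
      rw [max_eq_left ht.le]
  have hYd : ∀ s ∈ Ioo 0 S, HasDerivAt Y (∑ k ∈ A, 2 * y s k * (w' s k - z' s k)) s := by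
    intro s hs
    rw [hY]
    refine HasDerivAt.fun_sum fun k hk => ?_
    exact (hmax (w s k - z s k)).comp s ((hw k hk s hs).sub (hz k hk s hs))
  have hy0 : ∀ s k, 0 ≤ y s k := fun s k => le_max_right _ _
  have hle : ∀ s k, w s k - z s k ≤ y s k := fun s k => le_max_left _ _
  have hφy : ∀ s k, φ (w s k) - φ (z s k) ≤ L * y s k := by
    intro s k
    rcases le_total (w s k) (z s k) with h | h
    · have := hφ h
      have := mul_nonneg hL (hy0 s k)
      linarith
    · exact (hφL _ _ h).trans (mul_le_mul_of_nonneg_left (hle s k) hL)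
  have hYb : ∀ s ∈ Ioo 0 S, ∑ k ∈ A, 2 * y s k * (w' s k - z' s k) ≤ (A.card * (4 * c * L * d)) * Y s := by
    intro s hs
    have hnb : ∀ j ∈ B, y s j ^ 2 ≤ Y s := by
      intro j hj
      by_cases hjA : j ∈ A
      · exact Finset.single_le_sum (f := fun k => y s k ^ 2) (fun _ _ => sq_nonneg _) hjA
      · have : y s j = 0 := by
          rw [hy]; exact max_eq_right (sub_nonpos.2 (hB j hj hjA s hs))
        rw [this]
        have : 0 ≤ Y s := Finset.sum_nonneg fun _ _ => sq_nonneg _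
        simpa using this
    have hterm : ∀ k ∈ A, 2 * y s k * (w' s k - z' s k) ≤ (4 * c * L * d) * Y s := by
      intro k hk
      have h1 : w' s k - z' s k ≤ c * ∑ i : Fin d, ((φ (w s (k + Pi.single i 1)) - φ (z s (k + Pi.single i 1))) +
          (φ (w s (k - Pi.single i 1)) - φ (z s (k - Pi.single i 1))) - 2 * (φ (w s k) - φ (z s k))) := by
        have e : c * ∑ i : Fin d, ((φ (w s (k + Pi.single i 1)) - φ (z s (k + Pi.single i 1))) +
          (φ (w s (k - Pi.single i 1)) - φ (z s (k - Pi.single i 1))) - 2 * (φ (w s k) - φ (z s k)))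
          = c * lap (fun j => φ (w s j)) k - c * lap (fun j => φ (z s j)) k := by
          unfold lap
          rw [← mul_sub, ← Finset.sum_sub_distrib]
          congr 1
          refine Finset.sum_congr rfl fun i _ => ?_
          ring
        rw [e]; linarith [hw' k hk s hs, hz' k hk s hs]
      have hpos : 0 ≤ y s k * (φ (w s k) - φ (z s k)) := by
        rcases le_total (w s k) (z s k) with h | h
        · have : y s k = 0 := max_eq_right (sub_nonpos.2 h)
          rw [this]; simp
        · exact mul_nonneg (hy0 s k) (sub_nonneg.2 (hφ h))
      have hkY : y s k ^ 2 ≤ Y s := Finset.single_le_sum (f := fun k => y s k ^ 2) (fun _ _ => sq_nonneg _) hk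
      have hone : ∀ j ∈ B, y s k * (φ (w s j) - φ (z s j)) ≤ L * Y s := by
        intro j hj
        have h2 := mul_le_mul_of_nonneg_left (hφy s j) (hy0 s k)
        have h3 := hnb j hj
        have h4 : y s k * y s j ≤ Y s := by nlinarith [sq_nonneg (y s k - y s j)]
        have h5 := mul_le_mul_of_nonneg_left h4 hL
        nlinarith
      calc 2 * y s k * (w' s k - z' s k) ≤ 2 * y s k * (c * ∑ i : Fin d, ((φ (w s (k + Pi.single i 1)) - φ (z s (k + Pi.single i 1))) +
          (φ (w s (k - Pi.single i 1)) - φ (z s (k - Pi.single i 1))) - 2 * (φ (w s k) - φ (z s k)))) :=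
            mul_le_mul_of_nonneg_left h1 (by linarith [hy0 s k])
        _ = 2 * c * ∑ i : Fin d, (y s k * (φ (w s (k + Pi.single i 1)) - φ (z s (k + Pi.single i 1))) +
          y s k * (φ (w s (k - Pi.single i 1)) - φ (z s (k - Pi.single i 1))) - 2 * (y s k * (φ (w s k) - φ (z s k)))) := by
            rw [Finset.mul_sum, Finset.mul_sum, Finset.mul_sum]
            refine Finset.sum_congr rfl fun i _ => ?_
            ring
        _ ≤ 2 * c * ∑ i : Fin d, (2 * (L * Y s)) := by
            refine mul_le_mul_of_nonneg_left (Finset.sum_le_sum fun i _ => ?_) (by linarith)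
            linarith [hone _ (hAB k hk i).1, hone _ (hAB k hk i).2]
        _ = _ := by
            rw [Finset.sum_const, Finset.card_univ, Fintype.card_fin, nsmul_eq_mul]; ring
    refine (Finset.sum_le_sum hterm).trans (le_of_eq ?_)
    rw [Finset.sum_const, nsmul_eq_mul]; ring
  set K : ℝ := A.card * (4 * c * L * d) with hK
  have hYc : ContinuousOn Y (Icc 0 S) := by
    refine continuousOn_finsetSum _ fun k hk => ?_
    exact ((continuous_id.max continuous_const).comp_continuousOn ((hwc k hk).sub (hzc k hk))).pow 2
  have hanti : AntitoneOn (fun s => Real.exp (-K * s) * Y s) (Icc 0 S) := by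
    refine antitoneOn_of_deriv_nonpos (convex_Icc 0 S) (ContinuousOn.mul (by fun_prop) hYc) ?_ ?_
    · intro s hs
      rw [interior_Icc] at hs
      exact ((by fun_prop : DifferentiableAt ℝ (fun s => Real.exp (-K * s)) s).mul
        (hYd s hs).differentiableAt).differentiableWithinAt
    · intro s hs
      rw [interior_Icc] at hs
      have h1 : HasDerivAt (fun s => Real.exp (-K * s)) (Real.exp (-K * s) * (-K * 1)) s :=
        ((hasDerivAt_id s).const_mul (-K)).exp
      rw [(h1.fun_mul (hYd s hs)).deriv]
      have := mul_le_mul_of_nonneg_left (hYb s hs) (Real.exp_pos (-K * s)).le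
      nlinarith
  intro k hk s hs
  have hS : (0:ℝ) ≤ S := hs.1.trans hs.2
  have h1 := hanti ⟨le_rfl, hS⟩ hs hs.1
  have hY0 : Y 0 = 0 := by
    refine Finset.sum_eq_zero fun k hk => ?_
    have : y 0 k = 0 := max_eq_right (sub_nonpos.2 (h0 k hk))
    rw [this]; simp
  simp only [hY0, mul_zero] at h1
  have h2 : Y s ≤ 0 := by
    by_contra! h
    have := mul_pos (Real.exp_pos (-K * s)) h
    linarith
  have h3 : y s k ^ 2 ≤ Y s := Finset.single_le_sum (f := fun k => y s k ^ 2) (fun _ _ => sq_nonneg _) hk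
  have h4 : y s k = 0 := by nlinarith [hy0 s k]
  have := hle s k
  linarith

lemma ode_bdd {ι : Type*} [Fintype ι] (F : (ι → ℝ) → (ι → ℝ)) (K M : ℝ) (hK : 0 ≤ K) (hM : 0 ≤ M)
    (hL : ∀ x y, ‖F x - F y‖ ≤ K * ‖x - y‖) (hb : ∀ x, ‖F x‖ ≤ M) (x0 : ι → ℝ) (S : ℝ) (hS : 0 ≤ S) :
    ∃ α : ℝ → ι → ℝ, α 0 = x0 ∧ ∀ t ∈ Icc 0 S, HasDerivWithinAt α (F (α t)) (Icc 0 S) t := by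
  have hpl : IsPicardLindelof (fun _ => F) (⟨0, le_rfl, hS⟩ : Icc (0:ℝ) S) x0 (⟨M * S, mul_nonneg hM hS⟩ : NNReal) 0
      (⟨M, hM⟩ : NNReal) (⟨K, hK⟩ : NNReal) := by
    refine IsPicardLindelof.of_time_independent ?_ ?_ ?_
    · intro x _; exact hb x
    · refine LipschitzWith.lipschitzOnWith (LipschitzWith.of_dist_le_mul fun x y => ?_)
      rw [dist_eq_norm, dist_eq_norm]; exact hL x y
    · simp [hS]; exact le_rfl
  exact hpl.exists_eq_forall_mem_Icc_hasDerivWithinAt₀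

lemma phi_lip {m δ : ℝ} (hm0 : 0 < m) (hm1 : m < 1) (hδ : 0 < δ) {x y : ℝ} (hy : δ ≤ y) (hxy : y ≤ x) :
    x ^ m - y ^ m ≤ (m * δ ^ (m - 1)) * (x - y) := by
  have hy0 : 0 < y := hδ.trans_le hy
  have h1 := rpow_one_add_le_one_add_mul_self (s := (x - y) / y) (p := m)
    (by have : 0 ≤ (x-y)/y := div_nonneg (by linarith) hy0.le
        linarith) hm0.le hm1.le
  have e : x = y * (1 + (x - y) / y) := by field_simp; ring
  have h2 : x ^ m = y ^ m * (1 + (x - y) / y) ^ m := by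
    conv_lhs => rw [e]
    rw [Real.mul_rpow hy0.le]
    have : 0 ≤ (x-y)/y := div_nonneg (by linarith) hy0.le
    linarith
  have h3 : y ^ (m - 1) = y ^ m / y := by rw [Real.rpow_sub hy0, Real.rpow_one]
  have h4 : y ^ (m - 1) ≤ δ ^ (m - 1) := Real.rpow_le_rpow_of_nonpos hδ hy (by linarith)
  have hp : 0 < y ^ m := Real.rpow_pos_of_pos hy0 _
  calc x ^ m - y ^ m ≤ y ^ m * (1 + m * ((x - y) / y)) - y ^ m := by
        rw [h2]; gcongr
    _ = m * y ^ (m - 1) * (x - y) := by rw [h3]; field_simp; ring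
    _ ≤ _ := by
        have : 0 ≤ x - y := by linarith
        gcongr

/-- truncated power -/
noncomputable def phi2 (m δ : ℝ) (s : ℝ) : ℝ := (max s δ) ^ m

lemma phi2_mono {m δ : ℝ} (hm0 : 0 < m) (hδ : 0 < δ) : Monotone (phi2 m δ) := by
  intro x y h
  exact Real.rpow_le_rpow (hδ.le.trans (le_max_right _ _)) (max_le_max_right _ h) hm0.le

lemma phi2_lip {m δ : ℝ} (hm0 : 0 < m) (hm1 : m < 1) (hδ : 0 < δ) (x y : ℝ) (h : y ≤ x) :
    phi2 m δ x - phi2 m δ y ≤ (m * δ ^ (m - 1)) * (x - y) := by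
  have h1 := phi_lip hm0 hm1 hδ (le_max_right y δ) (max_le_max_right δ h)
  refine h1.trans ?_
  have : 0 < δ ^ (m-1) := Real.rpow_pos_of_pos hδ _
  have h3 : max x δ - max y δ ≤ x - y := by
    rcases le_total y δ with h | h <;> rcases le_total x δ with h' | h' <;>
      simp only [max_eq_left, max_eq_right, h, h'] <;> linarith
  gcongr

lemma phi2_eq {m δ s : ℝ} (h : δ ≤ s) : phi2 m δ s = s ^ m := by
  unfold phi2; rw [max_eq_left h]

lemma phi2_lt_lip {m δ K : ℝ} (hm0 : 0 < m) (hm1 : m < 1) (hδ : 0 < δ) (x y : ℝ) :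
    |phi2 m δ (min x K) - phi2 m δ (min y K)| ≤ (m * δ ^ (m - 1)) * |x - y| := by
  have hp : 0 < δ ^ (m-1) := Real.rpow_pos_of_pos hδ _
  wlog h : y ≤ x generalizing x y
  · rw [abs_sub_comm, abs_sub_comm x y]; exact this y x (le_of_not_ge h)
  have h0 : min y K ≤ min x K := min_le_min_right _ h
  rw [abs_of_nonneg (sub_nonneg.2 (phi2_mono hm0 hδ h0)), abs_of_nonneg (sub_nonneg.2 h)]
  refine (phi2_lip hm0 hm1 hδ _ _ h0).trans ?_
  have h3 : min x K - min y K ≤ x - y := by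
    rcases le_total y K with h | h <;> rcases le_total x K with h' | h' <;>
      simp only [min_eq_left, min_eq_right, h, h'] <;> linarith
  gcongr

lemma lap_const {d : ℕ} (c : ℝ) (k : Fin d → ℤ) : lap (fun _ => c) k = 0 := by
  unfold lap
  refine Finset.sum_eq_zero fun i _ => ?_
  ring

lemma ode_exists {d : ℕ} (A : Finset (Fin d → ℤ)) {c m δ S : ℝ} (hc : 0 ≤ c) (hm0 : 0 < m) (hm1 : m < 1)
    (hδ : 0 < δ) (hS : 0 ≤ S) (w0 : (Fin d → ℤ) → ℝ) (h0 : ∀ k, δ ≤ w0 k) (h0A : ∀ k, k ∉ A → w0 k = δ) :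
    ∃ w : ℝ → (Fin d → ℤ) → ℝ, w 0 = w0 ∧ (∀ k, k ∉ A → ∀ s, w s k = δ) ∧
      (∀ s ∈ Icc 0 S, ∀ k, δ ≤ w s k) ∧ (∀ k, ContinuousOn (fun s => w s k) (Icc 0 S)) ∧
      ∀ k ∈ A, ∀ s ∈ Ioo 0 S, HasDerivAt (fun s => w s k) (c * lap (fun j => w s j ^ m) k) s := by
  classical
  have hp : 0 < δ ^ (m-1) := Real.rpow_pos_of_pos hδ _
  have hL0 : 0 ≤ m * δ ^ (m-1) := by positivity
  obtain ⟨K, hKδ, hK⟩ : ∃ K : ℝ, δ ≤ K ∧ ∀ k ∈ A, w0 k ≤ K := by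
    refine ⟨δ + ∑ k ∈ A, w0 k, ?_, fun k hk => ?_⟩
    · have : 0 ≤ ∑ k ∈ A, w0 k := Finset.sum_nonneg fun k _ => hδ.le.trans (h0 k)
      linarith
    · have := Finset.single_le_sum (f := w0) (s := A) (fun k _ => hδ.le.trans (h0 k)) hk
      linarith
  let ext : (A → ℝ) → (Fin d → ℤ) → ℝ := fun v k => if h : k ∈ A then v ⟨k, h⟩ else δ
  let ψ : ℝ → ℝ := fun s => phi2 m δ (min s K)
  have hψm : Monotone ψ := fun x y h => phi2_mono hm0 hδ (min_le_min_right _ h)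
  have hψL : ∀ x y, |ψ x - ψ y| ≤ (m * δ ^ (m-1)) * |x - y| := phi2_lt_lip hm0 hm1 hδ
  have hψL' : ∀ x y, y ≤ x → ψ x - ψ y ≤ (m * δ ^ (m-1)) * (x - y) := by
    intro x y h
    have := hψL x y
    rw [abs_of_nonneg (sub_nonneg.2 h)] at this
    exact (le_abs_self _).trans this
  have hψb : ∀ x, |ψ x| ≤ K ^ m := by
    intro x
    have h1 : 0 ≤ ψ x := Real.rpow_nonneg (hδ.le.trans (le_max_right _ _)) _
    rw [abs_of_nonneg h1]
    exact Real.rpow_le_rpow (hδ.le.trans (le_max_right _ _)) (max_le (min_le_right _ _) hKδ) hm0.le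
  let F : (A → ℝ) → (A → ℝ) := fun v k => c * lap (fun j => ψ (ext v j)) k
  have hext : ∀ x y k, |ext x k - ext y k| ≤ ‖x - y‖ := by
    intro x y k
    by_cases h : k ∈ A
    · simp only [ext, h, dif_pos]
      exact norm_le_pi_norm (x - y) ⟨k, h⟩
    · simp only [ext, h, dif_neg, not_false_eq_true, sub_self, abs_zero]
      exact norm_nonneg _
  have hψe : ∀ x y k, |ψ (ext x k) - ψ (ext y k)| ≤ (m * δ ^ (m-1)) * ‖x - y‖ := by
    intro x y k
    exact (hψL _ _).trans (mul_le_mul_of_nonneg_left (hext x y k) hL0)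
  have hFL : ∀ x y, ‖F x - F y‖ ≤ (c * (d * (4 * (m * δ ^ (m-1))))) * ‖x - y‖ := by
    intro x y
    refine (pi_norm_le_iff_of_nonneg (by positivity)).2 fun k => ?_
    have e : (F x - F y) k = c * ∑ i : Fin d, ((ψ (ext x (k.1 + Pi.single i 1)) - ψ (ext y (k.1 + Pi.single i 1)))
        + (ψ (ext x (k.1 - Pi.single i 1)) - ψ (ext y (k.1 - Pi.single i 1))) - 2 * (ψ (ext x k.1) - ψ (ext y k.1))) := by
      simp only [F, lap, Pi.sub_apply]
      rw [← mul_sub, ← Finset.sum_sub_distrib]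
      congr 1
      refine Finset.sum_congr rfl fun i _ => ?_
      ring
    rw [e, norm_mul, Real.norm_of_nonneg hc, mul_assoc]
    refine mul_le_mul_of_nonneg_left ?_ hc
    refine (norm_sum_le _ _).trans ?_
    refine (Finset.sum_le_sum (g := fun _ => 4 * (m * δ ^ (m-1)) * ‖x - y‖) fun i _ => ?_).trans (le_of_eq ?_)
    · rw [Real.norm_eq_abs, abs_le]
      have h1 := abs_le.1 (hψe x y (k.1 + Pi.single i 1))
      have h2 := abs_le.1 (hψe x y (k.1 - Pi.single i 1))
      have h3 := abs_le.1 (hψe x y k.1)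
      constructor <;> linarith
    · rw [Finset.sum_const, Finset.card_univ, Fintype.card_fin, nsmul_eq_mul]; ring
  have hFb : ∀ x, ‖F x‖ ≤ c * (d * (4 * K ^ m)) := by
    intro x
    have hKp : 0 ≤ K ^ m := Real.rpow_nonneg (hδ.le.trans hKδ) _
    refine (pi_norm_le_iff_of_nonneg (by positivity)).2 fun k => ?_
    simp only [F, lap]
    rw [norm_mul, Real.norm_of_nonneg hc]
    refine mul_le_mul_of_nonneg_left ?_ hc
    refine (norm_sum_le _ _).trans ?_
    refine (Finset.sum_le_sum (g := fun _ => 4 * K ^ m) fun i _ => ?_).trans (le_of_eq ?_)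
    · rw [Real.norm_eq_abs, abs_le]
      have h1 := abs_le.1 (hψb (ext x (k.1 + Pi.single i 1)))
      have h2 := abs_le.1 (hψb (ext x (k.1 - Pi.single i 1)))
      have h3 := abs_le.1 (hψb (ext x k.1))
      constructor <;> linarith
    · rw [Finset.sum_const, Finset.card_univ, Fintype.card_fin, nsmul_eq_mul]
  have hKp : 0 ≤ K ^ m := Real.rpow_nonneg (hδ.le.trans hKδ) _
  obtain ⟨α, hα0, hα⟩ := ode_bdd F _ _ (by positivity) (by positivity) hFL hFb (fun k => w0 k) S hS
  have hαk : ∀ k : A, ∀ t ∈ Icc 0 S, HasDerivWithinAt (fun s => α s k) (F (α t) k) (Icc 0 S) t := by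
    intro k t ht
    exact (hasDerivWithinAt_pi.1 (hα t ht)) k
  have hc' : ∀ k, ContinuousOn (fun s => ext (α s) k) (Icc 0 S) := by
    intro k
    by_cases h : k ∈ A
    · simp only [ext, h, dif_pos]
      exact fun t ht => (hαk ⟨k, h⟩ t ht).continuousWithinAt
    · simp only [ext, h, dif_neg, not_false_eq_true]
      exact continuousOn_const
  have hd' : ∀ k ∈ A, ∀ s ∈ Ioo 0 S, HasDerivAt (fun s => ext (α s) k) (c * lap (fun j => ψ (ext (α s) j)) k) s := by
    intro k h s hs
    simp only [ext, h, dif_pos]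
    exact (hαk ⟨k, h⟩ s (Ioo_subset_Icc_self hs)).hasDerivAt (Icc_mem_nhds hs.1 hs.2)
  have e0 : ext (α 0) = w0 := by
    funext k
    by_cases h : k ∈ A
    · simp only [ext, h, dif_pos, hα0]
    · simp only [ext, h, dif_neg, not_false_eq_true, h0A k h]
  have hout : ∀ k, k ∉ A → ∀ s, ext (α s) k = δ := by
    intro k h s; simp only [ext, h, dif_neg, not_false_eq_true]
  have hlow : ∀ k ∈ A, ∀ s ∈ Icc 0 S, δ ≤ ext (α s) k := by
    refine comparison A Set.univ (fun k _ i => ⟨trivial, trivial⟩) c S _ hc ψ hψm hL0 hψL' (fun _ _ => δ) (fun s k => ext (α s) k)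
      (fun _ _ => 0) (fun s k => c * lap (fun j => ψ (ext (α s) j)) k) (fun k _ => continuousOn_const) (fun k _ => hc' k)
      (fun k _ s _ => hasDerivAt_const _ _) hd' (fun k _ s _ => ?_) (fun _ _ _ _ => le_rfl) (fun k _ => ?_) (fun k _ hk s _ => ?_)
    · rw [lap_const, mul_zero]
    · rw [e0]; exact h0 k
    · rw [hout k hk]
  have hup : ∀ k ∈ A, ∀ s ∈ Icc 0 S, ext (α s) k ≤ K := by
    refine comparison A Set.univ (fun k _ i => ⟨trivial, trivial⟩) c S _ hc ψ hψm hL0 hψL' (fun s k => ext (α s) k) (fun _ _ => K)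
      (fun s k => c * lap (fun j => ψ (ext (α s) j)) k) (fun _ _ => 0) (fun k _ => hc' k) (fun k _ => continuousOn_const)
      hd' (fun k _ s _ => hasDerivAt_const _ _) (fun _ _ _ _ => le_rfl) (fun k _ s _ => ?_) (fun k hk => ?_) (fun k _ hk s _ => ?_)
    · rw [lap_const, mul_zero]
    · rw [e0]; exact hK k hk
    · rw [hout k hk]; exact hKδ
  have hlow' : ∀ s ∈ Icc 0 S, ∀ k, δ ≤ ext (α s) k := by
    intro s hs k
    by_cases h : k ∈ A
    · exact hlow k h s hs
    · rw [hout k h]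
  have hup' : ∀ s ∈ Icc 0 S, ∀ k, ext (α s) k ≤ K := by
    intro s hs k
    by_cases h : k ∈ A
    · exact hup k h s hs
    · rw [hout k h]; exact hKδ
  refine ⟨fun s k => ext (α s) k, e0, hout, hlow', hc', fun k hk s hs => ?_⟩
  have hs' := Ioo_subset_Icc_self hs
  have : (fun j => ψ (ext (α s) j)) = fun j => ext (α s) j ^ m := by
    funext j
    simp only [ψ]
    rw [min_eq_left (hup' s hs' j), phi2_eq (hlow' s hs' j)]
  rw [← this]
  exact hd' k hk s hs

/-- squared euclidean length of a lattice vector -/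
noncomputable def nsq {d : ℕ} (k : Fin d → ℤ) : ℝ := ∑ i, ((k i : ℤ) : ℝ) ^ 2

/-- lattice points of norm less than `2n` -/
noncomputable def Aset (d n : ℕ) : Finset (Fin d → ℤ) := by
  classical exact (Fintype.piFinset fun _ => Finset.Icc (-(2 * n : ℤ)) (2 * n)).filter fun k => nsq k < 4 * (n : ℝ) ^ 2

lemma mem_Aset {d n : ℕ} {k : Fin d → ℤ} : k ∈ Aset d n ↔ nsq k < 4 * (n : ℝ) ^ 2 := by
  unfold Aset
  simp only [Finset.mem_filter, Fintype.mem_piFinset, Finset.mem_Icc, and_iff_right_iff_imp]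
  intro h i
  have h1 : ((k i : ℤ) : ℝ) ^ 2 ≤ nsq k :=
    Finset.single_le_sum (f := fun i => ((k i : ℤ) : ℝ) ^ 2) (fun _ _ => sq_nonneg _) (Finset.mem_univ i)
  have h2 : ((k i : ℤ) : ℝ) ^ 2 < (2 * n : ℝ) ^ 2 := by nlinarith
  have h3 := abs_lt_of_sq_lt_sq' h2 (by positivity)
  constructor
  · have := h3.1; exact_mod_cast this.le
  · have := h3.2; exact_mod_cast this.le

lemma card_Aset (d n : ℕ) (hn : 1 ≤ n) : ((n : ℝ) ^ d)⁻¹ * (Aset d n).card ≤ 5 ^ d := by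
  have h : (Aset d n).card ≤ (5 * n) ^ d := by
    refine (Finset.card_filter_le _ _).trans ?_
    rw [Fintype.card_piFinset]
    simp only [Int.card_Icc, Finset.prod_const, Finset.card_univ, Fintype.card_fin]
    refine Nat.pow_le_pow_left ?_ d
    omega
  have hn' : (0:ℝ) < n := by exact_mod_cast hn
  rw [inv_mul_le_iff₀ (by positivity)]
  calc ((Aset d n).card : ℝ) ≤ ((5 * n) ^ d : ℕ) := by exact_mod_cast h
    _ = _ := by push_cast; rw [mul_pow, mul_comm]

lemma nsq_shift {d : ℕ} (k : Fin d → ℤ) (i : Fin d) :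
    nsq (k + Pi.single i 1) = nsq k + 2 * k i + 1 ∧ nsq (k - Pi.single i 1) = nsq k - 2 * k i + 1 := by
  classical
  have key : ∀ (s : ℝ) (f : Fin d → ℝ), ∑ j, (f j + s * (Pi.single i (1:ℝ) : Fin d → ℝ) j) ^ 2 = ∑ j, f j ^ 2 + 2 * s * f i + s ^ 2 := by
    intro s f
    have : ∀ j, (f j + s * (Pi.single i (1:ℝ) : Fin d → ℝ) j) ^ 2 = f j ^ 2 + (2 * s * f j + s ^ 2) * (Pi.single i (1:ℝ) : Fin d → ℝ) j := by
      intro j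
      by_cases h : j = i
      · subst h; simp; ring
      · simp [h]
    simp only [this, Finset.sum_add_distrib]
    simp [Pi.single_apply]; ring
  have hc : ∀ j, (((Pi.single i (1:ℤ) : Fin d → ℤ) j : ℤ) : ℝ) = (Pi.single i (1:ℝ) : Fin d → ℝ) j := by
    intro j
    by_cases h : j = i
    · subst h; simp
    · simp [h]
  constructor
  · have := key 1 (fun j => k j)
    unfold nsq
    simp only [Pi.add_apply, Int.cast_add, hc]
    simp only [one_mul] at this
    rw [this]; ring
  · have := key (-1) (fun j => k j)
    unfold nsq
    simp only [Pi.sub_apply, Int.cast_sub, hc]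
    simp only [neg_one_mul, ← sub_eq_add_neg] at this
    rw [this]; ring

lemma nsq_nonneg {d : ℕ} (k : Fin d → ℤ) : 0 ≤ nsq k := Finset.sum_nonneg fun _ _ => sq_nonneg _

/-- Solutions of the discretised equation -/
structure DSol {d : ℕ} (A : Finset (Fin d → ℤ)) (c m δ S : ℝ) (w : ℝ → (Fin d → ℤ) → ℝ) : Prop where
  out : ∀ k, k ∉ A → ∀ s, w s k = δ
  low : ∀ s ∈ Icc 0 S, ∀ k, δ ≤ w s k
  cont : ∀ k, ContinuousOn (fun s => w s k) (Icc 0 S)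
  der : ∀ k ∈ A, ∀ s ∈ Ioo 0 S, HasDerivAt (fun s => w s k) (c * lap (fun j => w s j ^ m) k) s

lemma DSol.phi {d : ℕ} {A : Finset (Fin d → ℤ)} {c m δ S : ℝ} {w : ℝ → (Fin d → ℤ) → ℝ} (h : DSol A c m δ S w)
    {s : ℝ} (hs : s ∈ Icc 0 S) : (fun j => w s j ^ m) = fun j => phi2 m δ (w s j) := by
  funext j
  rw [phi2_eq (h.low s hs j)]

lemma lap_mul {d : ℕ} (a : ℝ) (f : (Fin d → ℤ) → ℝ) (k : Fin d → ℤ) : lap (fun j => a * f j) k = a * lap f k := by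
  unfold lap
  rw [Finset.mul_sum]
  refine Finset.sum_congr rfl fun i _ => ?_
  ring

/-- Bénilan–Crandall -/
lemma DSol.bc {d : ℕ} {A : Finset (Fin d → ℤ)} {c m δ S : ℝ} {w : ℝ → (Fin d → ℤ) → ℝ} (h : DSol A c m δ S w)
    (hc : 0 ≤ c) (hm0 : 0 < m) (hm1 : m < 1) (hδ : 0 < δ) {s s' : ℝ} (hs : 0 < s) (hss : s ≤ s') (hS : s' ≤ S)
    (k : Fin d → ℤ) : w s' k ≤ (s' / s) ^ (1 / (1 - m)) * w s k := by
  have hs' : 0 < s' := hs.trans_le hss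
  have hm : 0 < 1 - m := by linarith
  have hr1 : 1 ≤ s' / s := (one_le_div hs).2 hss
  set μ := (s' / s) ^ (1 / (1 - m)) with hμ
  have hμ1 : 1 ≤ μ := Real.one_le_rpow hr1 (by positivity)
  have hμ0 : 0 < μ := by linarith
  by_cases hk : k ∈ A
  swap
  · rw [h.out k hk, h.out k hk]; nlinarith
  set l := s / s' with hl
  have hl0 : 0 < l := by positivity
  have hl1 : l ≤ 1 := (div_le_one hs').2 hss
  have hμl : μ * l = μ ^ m := by
    have e : l = μ ^ (-(1 - m)) := by
      rw [hμ, ← Real.rpow_mul (by positivity), hl]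
      rw [show 1 / (1 - m) * -(1 - m) = -1 by field_simp, Real.rpow_neg_one, inv_div]
    rw [e]
    nth_rewrite 1 [← Real.rpow_one μ]
    rw [← Real.rpow_add hμ0]; congr 1; ring
  have hp : 0 < δ ^ (m-1) := Real.rpow_pos_of_pos hδ _
  have hmem : ∀ r ∈ Icc 0 S, l * r ∈ Icc 0 S := by
    intro r hr
    exact ⟨mul_nonneg hl0.le hr.1, by nlinarith [hr.1, hr.2]⟩
  have hmem' : ∀ r ∈ Ioo 0 S, l * r ∈ Ioo 0 S := by
    intro r hr
    exact ⟨mul_pos hl0 hr.1, by nlinarith [hr.1, hr.2]⟩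
  have := comparison A Set.univ (fun k _ i => ⟨trivial, trivial⟩) c S _ hc (phi2 m δ) (phi2_mono hm0 hδ)
    (by positivity : 0 ≤ m * δ ^ (m-1)) (phi2_lip hm0 hm1 hδ) w (fun r j => μ * w (l * r) j)
    (fun s k => c * lap (fun j => w s j ^ m) k)
    (fun r k => μ * (c * lap (fun j => w (l * r) j ^ m) k * l))
    (fun k _ => h.cont k)
    (fun k _ => ContinuousOn.mul continuousOn_const ((h.cont k).comp (by fun_prop) hmem))
    h.der
    (fun k hk r hr => ?_) (fun k hk r hr => ?_) (fun k hk r hr => ?_) (fun k hk => ?_) (fun k _ hk r hr => ?_) k hk s' ⟨hs'.le, hS⟩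
  · rwa [show l * s' = s by rw [hl]; field_simp] at this
  · have h1 := h.der k hk (l * r) (hmem' r hr)
    have h2 : HasDerivAt (fun r : ℝ => l * r) l r := by simpa using (hasDerivAt_id r).const_mul l
    exact (h1.comp r h2).const_mul μ
  · rw [h.phi (Ioo_subset_Icc_self hr)]
  · have h1 := h.low (l * r) (hmem r (Ioo_subset_Icc_self hr))
    have : (fun j => phi2 m δ (μ * w (l * r) j)) = fun j => μ ^ m * (w (l * r) j ^ m) := by
      funext j
      have h2 := h1 j
      rw [phi2_eq (by nlinarith), Real.mul_rpow hμ0.le (hδ.le.trans h2)]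
    rw [this, lap_mul, ← hμl]
    exact le_of_eq (by ring)
  · simp only [mul_zero]
    have := h.low 0 ⟨le_rfl, hs'.le.trans hS⟩ k
    nlinarith
  · rw [h.out k hk, h.out k hk]; nlinarith

lemma tsum_eq_sumA {α : Type*} (A : Finset α) (f : α → ℝ) (h : ∀ k, k ∉ A → f k = 0) :
    ∑' k, f k = ∑ k ∈ A, f k := tsum_eq_sum fun k hk => h k hk

lemma supp_fin {α : Type*} (A : Finset α) (f : α → ℝ) (h : ∀ k, k ∉ A → f k = 0) :
    f.support.Finite := A.finite_toSet.subset fun k hk => by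
  by_contra h'
  exact hk (h k h')

lemma DSol.pot {d : ℕ} {A : Finset (Fin d → ℤ)} {c m δ S : ℝ} {w : ℝ → (Fin d → ℤ) → ℝ} (h : DSol A c m δ S w)
    (hδ : 0 < δ) (G Q : (Fin d → ℤ) → ℝ) (hG : ∀ k, k ∉ A → G k = 0)
    (hQ : ∀ k ∈ A, - Q k ≤ c * lap G k) (hQ' : ∀ k, k ∉ A → 0 ≤ c * lap G k) {s : ℝ} (hs : s ∈ Ioo 0 S) :
    ∃ D, HasDerivAt (fun s => ∑ k ∈ A, G k * w s k) D s ∧ - ∑ k ∈ A, Q k * w s k ^ m ≤ D := by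
  classical
  refine ⟨∑ k ∈ A, G k * (c * lap (fun j => w s j ^ m) k), HasDerivAt.fun_sum fun k hk => (h.der k hk s hs).const_mul _, ?_⟩
  have hGf := supp_fin A G hG
  have e1 : ∑ k ∈ A, G k * (c * lap (fun j => w s j ^ m) k) = c * ∑' k : Fin d → ℤ, lap G k * w s k ^ m := by
    rw [← lap_symm G (fun j => w s j ^ m) hGf, tsum_eq_sumA A _ (fun k hk => by rw [hG k hk, zero_mul]), Finset.mul_sum]
    exact Finset.sum_congr rfl fun k _ => by ring
  have hw : ∀ k, 0 ≤ w s k ^ m := fun k => Real.rpow_nonneg (hδ.le.trans (h.low s (Ioo_subset_Icc_self hs) k)) _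
  have hfs := lap_supp G hGf
  rw [e1, ← tsum_mul_left]
  have hsum : Summable fun k : Fin d → ℤ => c * (lap G k * w s k ^ m) := fsum hfs fun k hk => by rw [hk]; ring
  rw [← hsum.sum_add_tsum_compl (s := A), ← Finset.sum_neg_distrib]
  have h1 : ∑ k ∈ A, -(Q k * w s k ^ m) ≤ ∑ k ∈ A, c * (lap G k * w s k ^ m) := by
    refine Finset.sum_le_sum fun k hk => ?_
    have := mul_le_mul_of_nonneg_right (hQ k hk) (hw k)
    linarith
  have h2 : 0 ≤ ∑' x : ↑((A : Set (Fin d → ℤ))ᶜ), c * (lap G x * w s x ^ m) := by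
    refine tsum_nonneg fun x => ?_
    have := mul_nonneg (hQ' x x.2) (hw x)
    linarith
  linarith

lemma DSol.sum_cont {d : ℕ} {A : Finset (Fin d → ℤ)} {c m δ S : ℝ} {w : ℝ → (Fin d → ℤ) → ℝ} (h : DSol A c m δ S w)
    (G : (Fin d → ℤ) → ℝ) : ContinuousOn (fun s => ∑ k ∈ A, G k * w s k) (Icc 0 S) :=
  continuousOn_finsetSum _ fun k _ => continuousOn_const.mul (h.cont k)

/-- potential estimate -/
lemma DSol.pot_est {d : ℕ} {A : Finset (Fin d → ℤ)} {c m δ S : ℝ} {w : ℝ → (Fin d → ℤ) → ℝ} (h : DSol A c m δ S w)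
    (hc : 0 ≤ c) (hm0 : 0 < m) (hm1 : m < 1)
    (hδ : 0 < δ) (G Q : (Fin d → ℤ) → ℝ) (hG : ∀ k, k ∉ A → G k = 0) (hQ0 : ∀ k, 0 ≤ Q k)
    (hQ : ∀ k ∈ A, - Q k ≤ c * lap G k) (hQ' : ∀ k, k ∉ A → 0 ≤ c * lap G k) {t s : ℝ} (ht : 0 < t) (hts : t ≤ s) (hsS : s ≤ S) :
    ∑ k ∈ A, G k * w t k ≤ ∑ k ∈ A, G k * w s k + s ^ (1 / (1 - m)) * t ^ (-(m / (1 - m))) * ∑ k ∈ A, Q k * w t k ^ m := by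
  have hm : 0 < 1 - m := by linarith
  set M := ∑ k ∈ A, Q k * w t k ^ m with hM
  have hwt : ∀ k, 0 ≤ w t k := fun k => hδ.le.trans (h.low t ⟨ht.le, hts.trans hsS⟩ k)
  have hM0 : 0 ≤ M := Finset.sum_nonneg fun k _ => mul_nonneg (hQ0 k) (Real.rpow_nonneg (hwt k) _)
  have htp : 0 < t ^ (-(m / (1 - m))) := Real.rpow_pos_of_pos ht _
  have hmono : MonotoneOn (fun r => ∑ k ∈ A, G k * w r k + ((1 - m) * r ^ (1 / (1 - m))) * (t ^ (-(m / (1 - m))) * M)) (Icc t s) := by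
    have hsub : Icc t s ⊆ Icc 0 S := Icc_subset_Icc ht.le hsS
    have hd : ∀ r ∈ Ioo t s, ∃ D, HasDerivAt (fun r => ∑ k ∈ A, G k * w r k + ((1 - m) * r ^ (1 / (1 - m))) * (t ^ (-(m / (1 - m))) * M)) D r ∧ 0 ≤ D := by
      intro r hr
      have hr0 : 0 < r := ht.trans hr.1
      obtain ⟨D, hD, hD'⟩ := h.pot hδ G Q hG hQ hQ' (s := r) ⟨hr0, hr.2.trans_le hsS⟩
      have h1 := ((Real.hasDerivAt_rpow_const (x := r) (p := 1 / (1 - m)) (Or.inl hr0.ne')).const_mul (1 - m)).mul_const (t ^ (-(m / (1 - m))) * M)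
      refine ⟨_, hD.add h1, ?_⟩
      have h2 : ∑ k ∈ A, Q k * w r k ^ m ≤ (r ^ (m / (1 - m)) * t ^ (-(m / (1 - m)))) * M := by
        rw [hM, Finset.mul_sum]
        refine Finset.sum_le_sum fun k _ => ?_
        have h3 := h.bc hc hm0 hm1 hδ ht hr.1.le (hr.2.le.trans hsS) k
        have h4 := Real.rpow_le_rpow (hδ.le.trans (h.low r ⟨hr0.le, hr.2.le.trans hsS⟩ k)) h3 hm0.le
        rw [Real.mul_rpow (by positivity) (hwt k), ← Real.rpow_mul (by positivity), show 1 / (1 - m) * m = m / (1 - m) by ring,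
          Real.div_rpow hr0.le ht.le, div_eq_mul_inv, ← Real.rpow_neg ht.le] at h4
        have := mul_le_mul_of_nonneg_left h4 (hQ0 k)
        linarith
      have e : (1 - m) * (1 / (1 - m) * r ^ (1 / (1 - m) - 1)) = r ^ (m / (1 - m)) := by
        rw [show 1 / (1 - m) - 1 = m / (1 - m) by field_simp; ring]
        field_simp
      rw [e]
      linarith
    refine monotoneOn_of_deriv_nonneg (convex_Icc t s) ?_ ?_ ?_
    · refine ((h.sum_cont G).mono hsub).add (ContinuousOn.mul (continuousOn_const.mul ?_) continuousOn_const)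
      exact ContinuousOn.rpow_const continuousOn_id fun r hr => Or.inl (ht.trans_le hr.1).ne'
    · intro r hr
      rw [interior_Icc] at hr
      obtain ⟨D, hD, _⟩ := hd r hr
      exact hD.differentiableAt.differentiableWithinAt
    · intro r hr
      rw [interior_Icc] at hr
      obtain ⟨D, hD, hD'⟩ := hd r hr
      rw [hD.deriv]; exact hD'
  have h1 := hmono ⟨le_rfl, hts⟩ ⟨hts, le_rfl⟩ hts
  simp only at h1
  have ha : 0 ≤ ((1 - m) * t ^ (1 / (1 - m))) * (t ^ (-(m / (1 - m))) * M) := by positivity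
  have hsp : 0 ≤ s ^ (1 / (1 - m)) := Real.rpow_nonneg (ht.le.trans hts) _
  have hb : ((1 - m) * s ^ (1 / (1 - m))) * (t ^ (-(m / (1 - m))) * M) ≤ s ^ (1 / (1 - m)) * (t ^ (-(m / (1 - m))) * M) := by
    refine mul_le_mul_of_nonneg_right ?_ (by positivity)
    nlinarith
  linarith

lemma tangent {a b j : ℝ} (ha : 0 ≤ a) (hj : 1 < j) : a ^ j + j * a ^ (j - 1) * (b - a) ≤ (max b 0) ^ j := by
  rcases eq_or_lt_of_le ha with h | h
  · rw [← h, Real.zero_rpow (by linarith), Real.zero_rpow (by linarith)]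
    have : 0 ≤ max b 0 ^ j := Real.rpow_nonneg (le_max_right _ _) _
    linarith
  · have hb : 0 ≤ max b 0 := le_max_right _ _
    have h1 := one_add_mul_self_le_rpow_one_add (s := (max b 0 - a) / a) (p := j)
      (by rw [le_div_iff₀ h]; linarith) hj.le
    have e : 1 + (max b 0 - a) / a = max b 0 / a := by field_simp; ring
    rw [e, Real.div_rpow hb ha, le_div_iff₀ (Real.rpow_pos_of_pos h _)] at h1
    have e2 : a ^ (j - 1) = a ^ j / a := by rw [Real.rpow_sub h, Real.rpow_one]
    refine le_trans ?_ h1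
    have h3 : j * a ^ (j - 1) * (b - a) ≤ j * a ^ (j - 1) * (max b 0 - a) := by
      have : 0 ≤ j * a ^ (j - 1) := mul_nonneg (by linarith) (Real.rpow_nonneg ha _)
      exact mul_le_mul_of_nonneg_left (by linarith [le_max_left b 0]) this
    refine (add_le_add_right h3 _).trans (le_of_eq ?_)
    rw [e2]; field_simp

/-- mass weight -/
noncomputable def wt {d : ℕ} (m : ℝ) (n : ℕ) (k : Fin d → ℤ) : ℝ := (max (2 - nsq k / (n : ℝ) ^ 2) 0) ^ (1 / (1 - m))

lemma wt_nonneg {d : ℕ} (m : ℝ) (n : ℕ) (k : Fin d → ℤ) : 0 ≤ wt m n k := Real.rpow_nonneg (le_max_right _ _) _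

lemma wt_out {d : ℕ} {m : ℝ} (hm1 : m < 1) {n : ℕ} (hn : 1 ≤ n) (k : Fin d → ℤ) (h : 2 * (n : ℝ) ^ 2 ≤ nsq k) : wt m n k = 0 := by
  have hn' : (0:ℝ) < n := by exact_mod_cast hn
  have : 2 ≤ nsq k / (n : ℝ) ^ 2 := by rw [le_div_iff₀ (by positivity)]; exact h
  unfold wt
  rw [max_eq_right (by linarith), Real.zero_rpow]
  have : 0 < 1 - m := by linarith
  positivity

lemma wt_le {d : ℕ} {m : ℝ} (hm1 : m < 1) (n : ℕ) (k : Fin d → ℤ) : wt m n k ≤ 2 ^ (1 / (1 - m)) := by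
  have hm : 0 < 1 - m := by linarith
  refine Real.rpow_le_rpow (le_max_right _ _) (max_le ?_ (by norm_num)) (by positivity)
  have := div_nonneg (nsq_nonneg k) (sq_nonneg (n:ℝ))
  linarith

lemma wt_ge {d : ℕ} {m : ℝ} (hm1 : m < 1) {n : ℕ} (hn : 1 ≤ n) (k : Fin d → ℤ) (h : nsq k ≤ (n : ℝ) ^ 2) : 1 ≤ wt m n k := by
  have hm : 0 < 1 - m := by linarith
  have hn' : (0:ℝ) < n := by exact_mod_cast hn
  refine Real.one_le_rpow (le_max_of_le_left ?_) (by positivity)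
  have : nsq k / (n : ℝ) ^ 2 ≤ 1 := by rw [div_le_one (by positivity)]; exact h
  linarith

lemma wt_lap {d : ℕ} {m : ℝ} (hm0 : 0 < m) (hm1 : m < 1) {n : ℕ} (hn : 1 ≤ n) (k : Fin d → ℤ) :
    - (2 * d / (1 - m) * wt m n k ^ m) ≤ (n : ℝ) ^ 2 * lap (wt m n) k := by
  have hm : 0 < 1 - m := by linarith
  have hn' : (0:ℝ) < n := by exact_mod_cast hn
  by_cases hk : 2 * (n : ℝ) ^ 2 ≤ nsq k
  · have h0 := wt_out hm1 hn k hk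
    rw [h0, Real.zero_rpow hm0.ne', mul_zero, neg_zero]
    refine mul_nonneg (by positivity) (Finset.sum_nonneg fun i _ => ?_)
    rw [h0]
    linarith [wt_nonneg m n (k + Pi.single i 1), wt_nonneg m n (k - Pi.single i 1)]
  push Not at hk
  set a := 2 - nsq k / (n : ℝ) ^ 2 with ha
  have ha0 : 0 ≤ a := by
    have : nsq k / (n : ℝ) ^ 2 ≤ 2 := by rw [div_le_iff₀ (by positivity)]; exact hk.le
    linarith
  have hj : 1 < 1 / (1 - m) := by rw [lt_div_iff₀ hm]; linarith
  have hwk : wt m n k = a ^ (1 / (1 - m)) := by unfold wt; rw [← ha, max_eq_left ha0]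
  have hwm : wt m n k ^ m = a ^ (1 / (1 - m) - 1) := by
    rw [hwk, ← Real.rpow_mul ha0]; congr 1; field_simp; ring
  have hterm : ∀ i : Fin d, - (2 / (1 - m) * wt m n k ^ m / (n : ℝ) ^ 2) ≤ wt m n (k + Pi.single i 1) + wt m n (k - Pi.single i 1) - 2 * wt m n k := by
    intro i
    have h1 := tangent (b := 2 - nsq (k + Pi.single i 1) / (n : ℝ) ^ 2) ha0 hj
    have h2 := tangent (b := 2 - nsq (k - Pi.single i 1) / (n : ℝ) ^ 2) ha0 hj
    change _ ≤ wt m n (k + Pi.single i 1) at h1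
    change _ ≤ wt m n (k - Pi.single i 1) at h2
    rw [← hwk, ← hwm] at h1 h2
    have e : (2 - nsq (k + Pi.single i 1) / (n : ℝ) ^ 2 - a) + (2 - nsq (k - Pi.single i 1) / (n : ℝ) ^ 2 - a) = - 2 / (n:ℝ)^2 := by
      rw [(nsq_shift k i).1, (nsq_shift k i).2, ha]; field_simp; ring
    have e2 : 1 / (1 - m) * wt m n k ^ m * (2 - nsq (k + Pi.single i 1) / (n : ℝ) ^ 2 - a) + 1 / (1 - m) * wt m n k ^ m * (2 - nsq (k - Pi.single i 1) / (n : ℝ) ^ 2 - a)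
      = - (2 / (1 - m) * wt m n k ^ m / (n : ℝ) ^ 2) := by
      rw [← mul_add, e]; ring
    linarith
  have hs : ∑ i : Fin d, - (2 / (1 - m) * wt m n k ^ m / (n : ℝ) ^ 2) ≤ lap (wt m n) k := Finset.sum_le_sum fun i _ => hterm i
  rw [Finset.sum_const, Finset.card_univ, Fintype.card_fin, nsmul_eq_mul] at hs
  refine le_trans (le_of_eq ?_) (mul_le_mul_of_nonneg_left hs (by positivity))
  field_simp

lemma young {m x y : ℝ} (hm0 : 0 < m) (hm1 : m < 1) (hx : 0 ≤ x) (hy : 0 < y) : x ^ m ≤ m * y ^ (m - 1) * x + (1 - m) * y ^ m := by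
  have h1 := rpow_one_add_le_one_add_mul_self (s := (x - y) / y) (p := m) (by rw [le_div_iff₀ hy]; linarith) hm0.le hm1.le
  have e : 1 + (x - y) / y = x / y := by field_simp; ring
  have hp := Real.rpow_pos_of_pos hy m
  rw [e, Real.div_rpow hx hy.le, div_le_iff₀ hp] at h1
  refine h1.trans (le_of_eq ?_)
  rw [Real.rpow_sub hy, Real.rpow_one]; field_simp; ring

lemma add_rpow_le {x y r : ℝ} (hx : 0 ≤ x) (hy : 0 ≤ y) (hr : 0 ≤ r) : (x + y) ^ r ≤ 2 ^ r * (x ^ r + y ^ r) := by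
  have hx' := Real.rpow_nonneg hx r
  have hy' := Real.rpow_nonneg hy r
  have h2 : (0:ℝ) ≤ 2 ^ r := by positivity
  rcases le_total x y with h | h
  · calc (x + y) ^ r ≤ (2 * y) ^ r := Real.rpow_le_rpow (by positivity) (by linarith) hr
      _ = 2 ^ r * y ^ r := Real.mul_rpow (by norm_num) hy
      _ ≤ _ := by gcongr; linarith
  · calc (x + y) ^ r ≤ (2 * x) ^ r := Real.rpow_le_rpow (by positivity) (by linarith) hr
      _ = 2 ^ r * x ^ r := Real.mul_rpow (by norm_num) hx
      _ ≤ _ := by gcongr; linarith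

/-- mass estimate -/
lemma DSol.mass {d n : ℕ} (hn : 1 ≤ n) {m δ S : ℝ} {w : ℝ → (Fin d → ℤ) → ℝ} (h : DSol (Aset d n) ((n:ℝ)^2) m δ S w)
    (hm0 : 0 < m) (hm1 : m < 1) (hδ : 0 < δ) {s : ℝ} (hs0 : 0 ≤ s) (hsS : s ≤ S) :
    ((n:ℝ)^d)⁻¹ * ∑ k ∈ Aset d n, wt m n k * w 0 k ≤ 2 ^ (1 / (1 - m)) *
      (((n:ℝ)^d)⁻¹ * ∑ k ∈ Aset d n, wt m n k * w s k + (2 * d * (1 + 5 ^ d)) ^ (1 / (1 - m)) * s ^ (1 / (1 - m))) := by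
  have hm : 0 < 1 - m := by linarith
  have hn' : (0:ℝ) < n := by exact_mod_cast hn
  set N := ((n:ℝ)^d)⁻¹ with hN
  have hN0 : 0 < N := by positivity
  set A := Aset d n
  set Y : ℝ → ℝ := fun s => N * ∑ k ∈ A, wt m n k * w s k with hY
  have hwA : ∀ k, k ∉ A → wt m n k = 0 := fun k hk => wt_out hm1 hn k (by
    have := mt mem_Aset.2 hk
    push Not at this
    nlinarith)
  have h0A : (0 : Fin d → ℤ) ∈ A := mem_Aset.2 (by simp [nsq]; positivity)
  have hYpos : ∀ r ∈ Icc 0 S, 0 < Y r := by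
    intro r hr
    refine mul_pos hN0 (Finset.sum_pos' (fun k _ => mul_nonneg (wt_nonneg m n k) (hδ.le.trans (h.low r hr k))) ⟨0, h0A, ?_⟩)
    have := wt_ge (d := d) hm1 hn 0 (by simp [nsq])
    exact mul_pos (by linarith) (hδ.trans_le (h.low r hr 0))
  set C : ℝ := 2 * d * (1 + 5 ^ d) with hC
  have hd : ∀ r ∈ Ioo 0 S, ∃ D, HasDerivAt Y D r ∧ - (C / (1 - m)) * Y r ^ m ≤ D := by
    intro r hr
    have hr' := Ioo_subset_Icc_self hr
    obtain ⟨D, hD, hD'⟩ := h.pot hδ (wt m n) (fun k => 2 * d / (1 - m) * wt m n k ^ m) hwA (fun k _ => wt_lap hm0 hm1 hn k)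
      (fun k hk => by
        have := wt_lap hm0 hm1 hn k
        rwa [hwA k hk, Real.zero_rpow hm0.ne', mul_zero, neg_zero] at this) hr
    refine ⟨N * D, hD.const_mul N, ?_⟩
    have hYr := hYpos r hr'
    have h1 : N * ∑ k ∈ A, (wt m n k * w r k) ^ m ≤ (1 + 5 ^ d) * Y r ^ m := by
      calc N * ∑ k ∈ A, (wt m n k * w r k) ^ m ≤ N * ∑ k ∈ A, (m * Y r ^ (m - 1) * (wt m n k * w r k) + (1 - m) * Y r ^ m) := by
            gcongr with k hk
            exact young hm0 hm1 (mul_nonneg (wt_nonneg m n k) (hδ.le.trans (h.low r hr' k))) hYr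
        _ = m * Y r ^ (m - 1) * Y r + (N * A.card) * ((1 - m) * Y r ^ m) := by
            rw [Finset.sum_add_distrib, ← Finset.mul_sum, Finset.sum_const, nsmul_eq_mul]
            simp only [hY]; ring
        _ = m * Y r ^ m + (N * A.card) * ((1 - m) * Y r ^ m) := by
            rw [mul_assoc]; nth_rewrite 2 [← Real.rpow_one (Y r)]; rw [← Real.rpow_add hYr]; simp
        _ ≤ 1 * Y r ^ m + 5 ^ d * (1 * Y r ^ m) := by
            have := card_Aset d n hn
            have hp := Real.rpow_pos_of_pos hYr m
            gcongr
            linarith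
        _ = _ := by ring
    have h2 : ∑ k ∈ A, 2 * d / (1 - m) * wt m n k ^ m * w r k ^ m = 2 * d / (1 - m) * ∑ k ∈ A, (wt m n k * w r k) ^ m := by
      rw [Finset.mul_sum]
      refine Finset.sum_congr rfl fun k _ => ?_
      rw [Real.mul_rpow (wt_nonneg m n k) (hδ.le.trans (h.low r hr' k))]; ring
    rw [h2] at hD'
    have h3 := mul_le_mul_of_nonneg_left hD' hN0.le
    have h4 := mul_le_mul_of_nonneg_left h1 (by positivity : (0:ℝ) ≤ 2 * d / (1 - m))
    refine le_trans (le_trans (le_of_eq ?_) (neg_le_neg h4)) (le_trans (le_of_eq ?_) h3)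
    · rw [hC]; ring
    · ring
  have hmono : MonotoneOn (fun r => Y r ^ (1 - m) + C * r) (Icc 0 S) := by
    have hd2 : ∀ r ∈ Ioo 0 S, ∃ D, HasDerivAt (fun r => Y r ^ (1 - m) + C * r) D r ∧ 0 ≤ D := by
      intro r hr
      obtain ⟨D, hD, hD'⟩ := hd r hr
      have hYr := hYpos r (Ioo_subset_Icc_self hr)
      refine ⟨_, (hD.rpow_const (Or.inl hYr.ne')).add ((hasDerivAt_id r).const_mul C), ?_⟩
      have hp : 0 < Y r ^ (1 - m - 1) := Real.rpow_pos_of_pos hYr _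
      have e : Y r ^ m * Y r ^ (1 - m - 1) = 1 := by rw [← Real.rpow_add hYr]; simp
      have h1 := mul_le_mul_of_nonneg_right hD' (mul_nonneg hm.le hp.le)
      have e2 : -(C / (1 - m)) * Y r ^ m * ((1 - m) * Y r ^ (1 - m - 1)) = - C * (Y r ^ m * Y r ^ (1 - m - 1)) := by field_simp
      rw [e2, e] at h1
      linarith
    refine monotoneOn_of_deriv_nonneg (convex_Icc 0 S) ?_ ?_ ?_
    · refine ContinuousOn.add (ContinuousOn.rpow_const (continuousOn_const.mul (h.sum_cont _)) fun r hr => Or.inl (hYpos r hr).ne') (by fun_prop)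
    · intro r hr
      rw [interior_Icc] at hr
      obtain ⟨D, hD, _⟩ := hd2 r hr
      exact hD.differentiableAt.differentiableWithinAt
    · intro r hr
      rw [interior_Icc] at hr
      obtain ⟨D, hD, hD'⟩ := hd2 r hr
      rw [hD.deriv]; exact hD'
  have h1 := hmono ⟨le_rfl, hs0.trans hsS⟩ ⟨hs0, hsS⟩ hs0
  simp only [mul_zero, add_zero] at h1
  have hY0 := hYpos 0 ⟨le_rfl, hs0.trans hsS⟩
  have hYs := hYpos s ⟨hs0, hsS⟩
  have hC0 : 0 ≤ C := by positivity
  change Y 0 ≤ 2 ^ (1 / (1 - m)) * (Y s + C ^ (1 / (1 - m)) * s ^ (1 / (1 - m)))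
  have e : ∀ y : ℝ, 0 < y → (y ^ (1 - m)) ^ (1 / (1 - m)) = y := by
    intro y hy
    rw [← Real.rpow_mul hy.le, mul_one_div_cancel hm.ne', Real.rpow_one]
  calc Y 0 = (Y 0 ^ (1 - m)) ^ (1 / (1 - m)) := (e _ hY0).symm
    _ ≤ (Y s ^ (1 - m) + C * s) ^ (1 / (1 - m)) := Real.rpow_le_rpow (by positivity) h1 (by positivity)
    _ ≤ _ := add_rpow_le (by positivity) (by positivity) (by positivity)
    _ = _ := by rw [e _ hYs, Real.mul_rpow hC0 hs0]

lemma sv1 {l : ℝ} (hl : 1 ≤ l) : ∃ c > 0, ∀ R : ℝ, 1 ≤ R → c * (R ^ ((1 + l) / 2) - 1) ^ 2 ≤ (R - 1) * (R ^ l - 1) := by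
  rcases eq_or_lt_of_le hl with h | h
  · subst h
    refine ⟨1, one_pos, fun R _ => ?_⟩
    norm_num; exact le_of_eq (by ring)
  set κ := (1 + l) / 2 with hκ
  have hκ1 : 1 < κ := by rw [hκ]; linarith
  have hκl : κ ≤ l := by rw [hκ]; linarith
  have hK : 0 < κ * 2 ^ (κ - 1) := by positivity
  refine ⟨min (1/4) (κ * 2 ^ (κ - 1))⁻¹, by positivity, fun R hR => ?_⟩
  have hR0 : 0 < R := by linarith
  have hκR : 1 ≤ R ^ κ := Real.one_le_rpow hR (by linarith)
  have hlR : R ^ κ ≤ R ^ l := Real.rpow_le_rpow_of_exponent_le hR hκl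
  rcases le_total 2 R with h2 | h2
  · have h3 : 2 ≤ R ^ l := h2.trans (by
      nth_rewrite 1 [← Real.rpow_one R]
      exact Real.rpow_le_rpow_of_exponent_le hR hl)
    have e : R * R ^ l = R ^ κ * R ^ κ := by
      nth_rewrite 1 [← Real.rpow_one R]
      rw [← Real.rpow_add hR0, ← Real.rpow_add hR0, hκ]; congr 1; ring
    calc min (1/4) (κ * 2 ^ (κ - 1))⁻¹ * (R ^ κ - 1) ^ 2 ≤ 1/4 * (R ^ κ - 1) ^ 2 := by gcongr; exact min_le_left _ _
      _ ≤ 1/4 * (R ^ κ * R ^ κ) := by gcongr; nlinarith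
      _ = (R / 2) * (R ^ l / 2) := by rw [← e]; ring
      _ ≤ _ := by gcongr <;> linarith
  · have h1 := tangent (a := R) (b := 1) hR0.le hκ1
    rw [max_eq_left (by norm_num), Real.one_rpow] at h1
    have h3 : R ^ (κ - 1) ≤ 2 ^ (κ - 1) := Real.rpow_le_rpow hR0.le h2 (by linarith)
    have h4 : R ^ κ - 1 ≤ (κ * 2 ^ (κ - 1)) * (R - 1) := by
      have : κ * R ^ (κ - 1) * (R - 1) ≤ κ * 2 ^ (κ - 1) * (R - 1) := by gcongr
      linarith
    calc min (1/4) (κ * 2 ^ (κ - 1))⁻¹ * (R ^ κ - 1) ^ 2 ≤ (κ * 2 ^ (κ - 1))⁻¹ * (R ^ κ - 1) ^ 2 := by gcongr; exact min_le_right _ _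
      _ = ((κ * 2 ^ (κ - 1))⁻¹ * (R ^ κ - 1)) * (R ^ κ - 1) := by ring
      _ ≤ (R - 1) * (R ^ l - 1) := by
        refine mul_le_mul ?_ (by linarith) (by linarith) (by linarith)
        rw [inv_mul_le_iff₀ hK]; exact h4

lemma sv2 {a b : ℝ} (ha : 0 < a) (hab : a ≤ b) : ∃ c > 0, ∀ x y : ℝ, 0 < x → 0 < y →
    c * (x ^ ((a + b) / 2) - y ^ ((a + b) / 2)) ^ 2 ≤ (x ^ a - y ^ a) * (x ^ b - y ^ b) := by
  obtain ⟨c, hc, h⟩ := sv1 (l := b / a) ((one_le_div ha).2 hab)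
  refine ⟨c, hc, fun x y hx hy => ?_⟩
  wlog hxy : y ≤ x generalizing x y
  · have := this y x hy hx (le_of_not_ge hxy)
    nlinarith
  have hr : 1 ≤ (x / y) ^ a := Real.one_le_rpow ((one_le_div hy).2 hxy) ha.le
  have h1 := h _ hr
  have hxy0 : 0 ≤ x / y := by positivity
  rw [← Real.rpow_mul hxy0, ← Real.rpow_mul hxy0, show a * ((1 + b / a) / 2) = (a + b) / 2 by field_simp,
    show a * (b / a) = b by field_simp] at h1
  set q := (a + b) / 2 with hq
  have hya := Real.rpow_pos_of_pos hy a
  have hyb := Real.rpow_pos_of_pos hy b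
  have hyq := Real.rpow_pos_of_pos hy q
  have e : y ^ q * y ^ q = y ^ a * y ^ b := by
    rw [← Real.rpow_add hy, ← Real.rpow_add hy, hq]; congr 1; ring
  have hh := mul_le_mul_of_nonneg_left h1 (mul_pos hya hyb).le
  have e1 : ∀ s : ℝ, x ^ s = y ^ s * (x / y) ^ s := by
    intro s
    rw [← Real.mul_rpow hy.le hxy0]; congr 1; field_simp
  rw [e1 q, e1 a, e1 b]
  calc _ = y ^ q * y ^ q * (c * ((x / y) ^ q - 1) ^ 2) := by ring
    _ = y ^ a * y ^ b * (c * ((x / y) ^ q - 1) ^ 2) := by rw [e]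
    _ ≤ _ := hh
    _ = _ := by ring

lemma sv {a b : ℝ} (ha : 0 < a) (hb : 0 < b) : ∃ c > 0, ∀ x y : ℝ, 0 < x → 0 < y →
    c * (x ^ ((a + b) / 2) - y ^ ((a + b) / 2)) ^ 2 ≤ (x ^ a - y ^ a) * (x ^ b - y ^ b) := by
  rcases le_total a b with h | h
  · exact sv2 ha h
  · obtain ⟨c, hc, hh⟩ := sv2 hb h
    refine ⟨c, hc, fun x y hx hy => ?_⟩
    rw [add_comm a b, mul_comm (x ^ a - y ^ a)]
    exact hh x y hx hy

/-- entropy density -/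
noncomputable def Psi (p δ x : ℝ) : ℝ := x ^ p / p - δ ^ (p - 1) * x + δ ^ p

lemma Psi_le {p δ x : ℝ} (hp : 1 < p) (hδ : 0 < δ) (hx : δ ≤ x) : Psi p δ x ≤ x ^ p + δ ^ p := by
  unfold Psi
  have hx0 : 0 < x := hδ.trans_le hx
  have h1 : x ^ p / p ≤ x ^ p := div_le_self (Real.rpow_nonneg hx0.le _) hp.le
  have h2 : 0 ≤ δ ^ (p - 1) * x := by positivity
  linarith

lemma Psi_pos {p δ x : ℝ} (hp : 1 < p) (hδ : 0 < δ) (hx : δ ≤ x) : 0 < Psi p δ x := by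
  unfold Psi
  have hx0 : 0 < x := hδ.trans_le hx
  have h1 := tangent (a := δ) (b := x) hδ.le hp
  rw [max_eq_left hx0.le] at h1
  have e : δ ^ p = δ ^ (p - 1) * δ := by
    nth_rewrite 3 [← Real.rpow_one δ]; rw [← Real.rpow_add hδ]; congr 1; ring
  have hpos : 0 < δ ^ p := Real.rpow_pos_of_pos hδ _
  have h2 : δ ^ p / p + δ ^ (p - 1) * (x - δ) ≤ x ^ p / p := by
    rw [le_div_iff₀ (by linarith)]
    calc _ = δ ^ p + p * δ ^ (p - 1) * (x - δ) := by field_simp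
      _ ≤ _ := h1
  have h3 : 0 < δ ^ p / p := by positivity
  nlinarith

/-- extinction estimate -/
lemma extinct {d : ℕ} (hd : 3 ≤ d) {m : ℝ} (hm0 : 0 < m) (hmc : m < ((d:ℝ) - 2) / d) :
    ∃ C > 0, ∀ (n : ℕ), 1 ≤ n → ∀ (δ S : ℝ), 0 < δ → 0 < S → ∀ w : ℝ → (Fin d → ℤ) → ℝ, DSol (Aset d n) ((n:ℝ)^2) m δ S w →
      ∀ E0 : ℝ, 0 ≤ E0 → ((n:ℝ)^d)⁻¹ * ∑ k ∈ Aset d n, w 0 k ^ (d * (1 - m) / 2) ≤ E0 → C * (E0 + 5 ^ d * δ ^ (d * (1 - m) / 2)) ^ (2 / (d:ℝ)) < S →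
      ∃ s ∈ Ioo 0 S, s ≤ C * (E0 + 5 ^ d * δ ^ (d * (1 - m) / 2)) ^ (2 / (d:ℝ)) ∧
        ((n:ℝ)^d)⁻¹ * ∑ k ∈ Aset d n, w s k ≤ C * δ := by
  have hd0 : (0:ℝ) < d := by positivity
  have hd3 : (3:ℝ) ≤ d := by exact_mod_cast hd
  have hm1 : m < 1 := hmc.trans (by rw [div_lt_one hd0]; linarith)
  have hm : 0 < 1 - m := by linarith
  set p := d * (1 - m) / 2 with hp
  have hp1 : 1 < p := by
    rw [lt_div_iff₀ hd0] at hmc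
    rw [hp]; linarith
  set β := ((p - 1) + m) / 2 with hβ
  set q := 2 * (d:ℝ) / (d - 2) with hq
  have hd2 : (0:ℝ) < d - 2 := by linarith
  have hβq : β * q = p := by
    rw [hβ, hq, hp]; field_simp; ring
  have hβ0 : 0 < β := by rw [hβ]; linarith
  have hq0 : 0 < q := by positivity
  obtain ⟨cs, hcs, hsv⟩ := sv (a := p - 1) (b := m) (by linarith) hm0
  obtain ⟨CS, hCS, hsob⟩ := sob2 d hd
  rw [← hβ] at hsv
  set c2 : ℝ := 2 ^ q + 5 ^ d * (2 ^ q + 1) with hc2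
  have hc20 : 0 < c2 := by positivity
  set θ := ((d:ℝ) - 2) / d with hθ
  have hθ0 : 0 < θ := by positivity
  set c4 := 2 / (d:ℝ) * (cs / CS * (c2 ^ θ)⁻¹) with hc4
  have hc40 : 0 < c4 := by positivity
  refine ⟨max c4⁻¹ (5 ^ d + c2), by positivity, ?_⟩
  intro n hn δ S hδ hSp w h E0 hE00 hE0 hS
  have hn' : (0:ℝ) < n := by exact_mod_cast hn
  set N := ((n:ℝ)^d)⁻¹ with hN
  have hN0 : 0 < N := by positivity
  set A := Aset d n with hA
  have hcard : N * A.card ≤ 5 ^ d := card_Aset d n hn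
  set X := E0 + 5 ^ d * δ ^ p with hX
  have hδp : 0 < δ ^ p := Real.rpow_pos_of_pos hδ _
  have h0A : (0 : Fin d → ℤ) ∈ A := mem_Aset.2 (by simp [nsq]; positivity)
  set E : ℝ → ℝ := fun s => N * ∑ k ∈ A, Psi p δ (w s k) with hE
  set F : ℝ → ℝ := fun s => N * ∑ k ∈ A, (w s k ^ β - δ ^ β) ^ q with hF
  have hβd : ∀ s ∈ Icc 0 S, ∀ k, 0 ≤ w s k ^ β - δ ^ β := fun s hs k =>
    sub_nonneg.2 (Real.rpow_le_rpow hδ.le (h.low s hs k) hβ0.le)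
  have hwp : ∀ s ∈ Icc 0 S, N * ∑ k ∈ A, w s k ^ p ≤ 2 ^ q * F s + 5 ^ d * (2 ^ q * δ ^ p) := by
    intro s hs
    calc N * ∑ k ∈ A, w s k ^ p ≤ N * ∑ k ∈ A, (2 ^ q * (w s k ^ β - δ ^ β) ^ q + 2 ^ q * δ ^ p) := by
          gcongr with k hk
          have h1 := add_rpow_le (hβd s hs k) (Real.rpow_nonneg hδ.le β) hq0.le
          rw [sub_add_cancel, ← Real.rpow_mul (hδ.le.trans (h.low s hs k)), hβq, ← Real.rpow_mul hδ.le, hβq] at h1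
          linarith
      _ = 2 ^ q * F s + (N * A.card) * (2 ^ q * δ ^ p) := by
          rw [Finset.sum_add_distrib, ← Finset.mul_sum, Finset.sum_const, nsmul_eq_mul, hF]; ring
      _ ≤ _ := by gcongr
  have hEw : ∀ s ∈ Icc 0 S, E s ≤ N * ∑ k ∈ A, w s k ^ p + 5 ^ d * δ ^ p := by
    intro s hs
    calc E s ≤ N * ∑ k ∈ A, (w s k ^ p + δ ^ p) := by
          simp only [hE]
          gcongr with k hk
          exact Psi_le hp1 hδ (h.low s hs k)
      _ = N * ∑ k ∈ A, w s k ^ p + (N * A.card) * δ ^ p := by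
          rw [Finset.sum_add_distrib, Finset.sum_const, nsmul_eq_mul]; ring
      _ ≤ _ := by gcongr
  have hEpos : ∀ s ∈ Icc 0 S, 0 < E s := fun s hs =>
    mul_pos hN0 (Finset.sum_pos (fun k _ => Psi_pos hp1 hδ (h.low s hs k)) ⟨0, h0A⟩)
  have hFnn : ∀ s ∈ Icc 0 S, 0 ≤ F s := fun s hs =>
    mul_nonneg hN0.le (Finset.sum_nonneg fun k _ => Real.rpow_nonneg (hβd s hs k) _)
  have hder : ∀ s ∈ Ioo 0 S, ∃ D, HasDerivAt E D s ∧ D ≤ - (cs / CS * F s ^ θ) := by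
    intro s hs
    have hs' := Ioo_subset_Icc_self hs
    have hw0 : ∀ k, 0 < w s k := fun k => hδ.trans_le (h.low s hs' k)
    refine ⟨N * ∑ k ∈ A, (w s k ^ (p - 1) - δ ^ (p - 1)) * ((n:ℝ)^2 * lap (fun j => w s j ^ m) k), ?_, ?_⟩
    · refine HasDerivAt.const_mul N (HasDerivAt.fun_sum fun k hk => ?_)
      have h1 := h.der k hk s hs
      have h2 : HasDerivAt (Psi p δ) (w s k ^ (p - 1) - δ ^ (p - 1)) (w s k) := by
        have h3 := (((Real.hasDerivAt_rpow_const (x := w s k) (p := p) (Or.inl (hw0 k).ne')).div_const p).sub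
          ((hasDerivAt_id (w s k)).const_mul (δ ^ (p - 1)))).add_const (δ ^ p)
        refine h3.congr_deriv ?_
        have : p ≠ 0 := by linarith
        field_simp
      exact h2.comp s h1
    · set a : (Fin d → ℤ) → ℝ := fun k => w s k ^ (p - 1) - δ ^ (p - 1) with ha
      have haA : ∀ k, k ∉ A → a k = 0 := fun k hk => by simp only [ha, h.out k hk s, sub_self]
      set f : (Fin d → ℤ) → ℝ := fun k => w s k ^ β - δ ^ β with hf
      have hfA : ∀ k, k ∉ A → f k = 0 := fun k hk => by simp only [hf, h.out k hk s, sub_self]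
      have haf := supp_fin A a haA
      have hff := supp_fin A f hfA
      have e1 : ∑ k ∈ A, a k * ((n:ℝ)^2 * lap (fun j => w s j ^ m) k) = (n:ℝ)^2 * ∑' k : Fin d → ℤ, a k * lap (fun j => w s j ^ m) k := by
        rw [tsum_eq_sumA A _ (fun k hk => by rw [haA k hk, zero_mul]), Finset.mul_sum]
        exact Finset.sum_congr rfl fun k _ => by ring
      have hfin : ∀ g : (Fin d → ℤ) → ℝ, g.support.Finite → (⋃ i : Fin d, ((fun k : Fin d → ℤ => g (k + Pi.single i 1)).support ∪ g.support)).Finite :=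
        fun g hg => Set.finite_iUnion fun i => (diff_supp g hg _).union hg
      have hgz : ∀ (g : (Fin d → ℤ) → ℝ) (k : Fin d → ℤ), k ∉ (⋃ i : Fin d, ((fun k : Fin d → ℤ => g (k + Pi.single i 1)).support ∪ g.support)) →
          ∀ i : Fin d, g (k + Pi.single i 1) - g k = 0 := by
        intro g k hk i
        simp only [Set.mem_iUnion, Set.mem_union, Function.mem_support, not_exists, not_or, not_not] at hk
        rw [(hk i).1, (hk i).2, sub_zero]
      have hs1 : Summable fun k : Fin d → ℤ => cs * ∑ i : Fin d, (f (k + Pi.single i 1) - f k) ^ 2 := by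
        refine summable_of_hasFiniteSupport ((hfin f hff).subset fun k hk => ?_)
        by_contra hk'
        refine hk ?_
        simp only [hgz f k hk']
        simp
      have hs2 : Summable fun k : Fin d → ℤ => ∑ i : Fin d, (a (k + Pi.single i 1) - a k) * (w s (k + Pi.single i 1) ^ m - w s k ^ m) := by
        refine summable_of_hasFiniteSupport ((hfin a haf).subset fun k hk => ?_)
        by_contra hk'
        refine hk ?_
        simp only [hgz a k hk']
        simp
      have hle : ∑' k : Fin d → ℤ, cs * ∑ i : Fin d, (f (k + Pi.single i 1) - f k) ^ 2 ≤
          ∑' k : Fin d → ℤ, ∑ i : Fin d, (a (k + Pi.single i 1) - a k) * (w s (k + Pi.single i 1) ^ m - w s k ^ m) := by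
        refine hs1.tsum_le_tsum (fun k => ?_) hs2
        rw [Finset.mul_sum]
        refine Finset.sum_le_sum fun i _ => ?_
        have := hsv (w s (k + Pi.single i 1)) (w s k) (hw0 _) (hw0 _)
        simp only [ha, hf]
        rwa [sub_sub_sub_cancel_right, sub_sub_sub_cancel_right]
      rw [tsum_mul_left] at hle
      have hs3 := hsob f hff (fun k => hβd s hs' k)
      have e2 : ∑' k : Fin d → ℤ, f k ^ q = ∑ k ∈ A, f k ^ q :=
        tsum_eq_sumA A _ fun k hk => by rw [hfA k hk, Real.zero_rpow hq0.ne']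
      rw [← hq, e2] at hs3
      rw [e1, lap_green a _ haf]
      have e3 : N * (n:ℝ)^2 = N ^ θ := by
        rw [hN, Real.inv_rpow (by positivity), ← Real.rpow_natCast, ← Real.rpow_mul hn'.le, hθ, show (d:ℝ) * (((d:ℝ) - 2) / d) = d - 2 by field_simp,
          Real.rpow_sub hn']
        norm_num
        field_simp
      have e4 : F s ^ θ = N ^ θ * (∑ k ∈ A, f k ^ q) ^ θ :=
        Real.mul_rpow hN0.le (Finset.sum_nonneg fun k _ => Real.rpow_nonneg (hβd s hs' k) _)
      rw [e4, ← e3]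
      set T1 := ∑' k : Fin d → ℤ, ∑ i : Fin d, (f (k + Pi.single i 1) - f k) ^ 2
      set T2 := ∑' k : Fin d → ℤ, ∑ i : Fin d, (a (k + Pi.single i 1) - a k) * (w s (k + Pi.single i 1) ^ m - w s k ^ m)
      have h5 : cs / CS * (∑ k ∈ A, f k ^ q) ^ θ ≤ T2 := by
        refine le_trans ?_ hle
        rw [div_mul_eq_mul_div, div_le_iff₀ hCS]
        nlinarith
      have h6 := mul_le_mul_of_nonneg_left h5 (by positivity : 0 ≤ N * (n:ℝ)^2)
      calc N * ((n:ℝ)^2 * -T2) = - (N * (n:ℝ)^2 * T2) := by ring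
        _ ≤ - (N * (n:ℝ)^2 * (cs / CS * (∑ k ∈ A, f k ^ q) ^ θ)) := neg_le_neg h6
        _ = _ := by ring
  have hXE : E 0 ≤ X := (hEw 0 ⟨le_rfl, hSp.le⟩).trans (by linarith)
  have hX0 : 0 < X := (hEpos 0 ⟨le_rfl, hSp.le⟩).trans_le hXE
  have hXp : 0 < X ^ (2 / (d:ℝ)) := Real.rpow_pos_of_pos hX0 _
  set τ := c4⁻¹ * X ^ (2 / (d:ℝ)) with hτ
  have hτ0 : 0 < τ := by positivity
  have hτle : τ ≤ max c4⁻¹ (5 ^ d + c2) * X ^ (2 / (d:ℝ)) := mul_le_mul_of_nonneg_right (le_max_left _ _) hXp.le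
  have hτS : τ < S := hτle.trans_lt hS
  have hsub : Icc 0 τ ⊆ Icc 0 S := Icc_subset_Icc le_rfl hτS.le
  obtain ⟨s, hs, hFs⟩ : ∃ s ∈ Ioo 0 τ, F s ≤ δ ^ p := by
    by_contra! hcon
    have hd2 : ∀ r ∈ Ioo 0 τ, ∃ D, HasDerivAt (fun r => E r ^ (2 / (d:ℝ)) + c4 * r) D r ∧ D ≤ 0 := by
      intro r hr
      have hrS : r ∈ Ioo 0 S := ⟨hr.1, hr.2.trans hτS⟩
      have hr' := Ioo_subset_Icc_self hrS
      obtain ⟨D, hD, hD'⟩ := hder r hrS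
      have hEr := hEpos r hr'
      have hFr := hcon r hr
      have hEF : E r ≤ c2 * F r := by
        have h1 := hEw r hr'
        have h2 := hwp r hr'
        have h3 : 5 ^ d * (2 ^ q + 1) * δ ^ p ≤ 5 ^ d * (2 ^ q + 1) * F r := mul_le_mul_of_nonneg_left hFr.le (by positivity)
        rw [hc2]; linarith
      have hFθ : (c2 ^ θ)⁻¹ * E r ^ θ ≤ F r ^ θ := by
        rw [inv_mul_le_iff₀ (by positivity), ← Real.mul_rpow hc20.le (hFnn r hr')]
        exact Real.rpow_le_rpow hEr.le hEF hθ0.le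
      refine ⟨_, (hD.rpow_const (Or.inl hEr.ne')).add ((hasDerivAt_id r).const_mul c4), ?_⟩
      have hp' : 0 < E r ^ (2 / (d:ℝ) - 1) := Real.rpow_pos_of_pos hEr _
      have e : E r ^ θ * E r ^ (2 / (d:ℝ) - 1) = 1 := by
        rw [← Real.rpow_add hEr, show θ + (2 / (d:ℝ) - 1) = 0 by rw [hθ]; field_simp; ring, Real.rpow_zero]
      have h1 : D ≤ - (cs / CS * ((c2 ^ θ)⁻¹ * E r ^ θ)) := hD'.trans (neg_le_neg (mul_le_mul_of_nonneg_left hFθ (by positivity)))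
      have h2 := mul_le_mul_of_nonneg_right h1 (by positivity : 0 ≤ 2 / (d:ℝ) * E r ^ (2 / (d:ℝ) - 1))
      have e2 : - (cs / CS * ((c2 ^ θ)⁻¹ * E r ^ θ)) * (2 / (d:ℝ) * E r ^ (2 / (d:ℝ) - 1)) = - c4 * (E r ^ θ * E r ^ (2 / (d:ℝ) - 1)) := by
        rw [hc4]; ring
      rw [e2, e] at h2
      linarith
    have hEc : ContinuousOn E (Icc 0 S) := by
      refine continuousOn_const.mul (continuousOn_finsetSum _ fun k _ => ?_)
      unfold Psi
      refine ((ContinuousOn.div_const (ContinuousOn.rpow_const (h.cont k) fun r hr => Or.inl (hδ.trans_le (h.low r hr k)).ne') _).sub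
        (continuousOn_const.mul (h.cont k))).add continuousOn_const
    have hanti : AntitoneOn (fun r => E r ^ (2 / (d:ℝ)) + c4 * r) (Icc 0 τ) := by
      refine antitoneOn_of_deriv_nonpos (convex_Icc 0 τ) ?_ ?_ ?_
      · refine ContinuousOn.add (ContinuousOn.rpow_const (hEc.mono hsub) fun r hr => Or.inl (hEpos r (hsub hr)).ne') (by fun_prop)
      · intro r hr
        rw [interior_Icc] at hr
        obtain ⟨D, hD, _⟩ := hd2 r hr
        exact hD.differentiableAt.differentiableWithinAt
      · intro r hr
        rw [interior_Icc] at hr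
        obtain ⟨D, hD, hD'⟩ := hd2 r hr
        rw [hD.deriv]; exact hD'
    have h1 := hanti ⟨le_rfl, hτ0.le⟩ ⟨hτ0.le, le_rfl⟩ hτ0.le
    simp only [mul_zero, add_zero] at h1
    have h2 : 0 < E τ ^ (2 / (d:ℝ)) := Real.rpow_pos_of_pos (hEpos τ (hsub ⟨hτ0.le, le_rfl⟩)) _
    have h3 : E 0 ^ (2 / (d:ℝ)) ≤ X ^ (2 / (d:ℝ)) := Real.rpow_le_rpow (hEpos 0 ⟨le_rfl, hSp.le⟩).le hXE (by positivity)
    have h4 : c4 * τ = X ^ (2 / (d:ℝ)) := by rw [hτ]; field_simp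
    linarith
  have hsS : s ∈ Ioo 0 S := ⟨hs.1, hs.2.trans hτS⟩
  have hs' := Ioo_subset_Icc_self hsS
  refine ⟨s, hsS, hs.2.le.trans hτle, ?_⟩
  have h1 := hwp s hs'
  have h2 : N * ∑ k ∈ A, w s k ^ p ≤ c2 * δ ^ p := by
    have h3 : (2:ℝ) ^ q * F s ≤ 2 ^ q * δ ^ p := mul_le_mul_of_nonneg_left hFs (by positivity)
    have h4 : 0 ≤ (5:ℝ) ^ d * δ ^ p := by positivity
    rw [hc2]; linarith
  have hx : ∀ x : ℝ, 0 < x → x ≤ δ + δ ^ (1 - p) * x ^ p := by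
    intro x hx
    rcases le_total x δ with h5 | h5
    · have : 0 ≤ δ ^ (1 - p) * x ^ p := by positivity
      linarith
    · have e : x = x ^ (1 - p) * x ^ p := by rw [← Real.rpow_add hx]; simp
      have h6 : x ^ (1 - p) ≤ δ ^ (1 - p) := Real.rpow_le_rpow_of_nonpos hδ h5 (by linarith)
      have h7 := mul_le_mul_of_nonneg_right h6 (Real.rpow_nonneg hx.le p)
      rw [← e] at h7
      linarith
  have hδe : δ ^ (1 - p) * δ ^ p = δ := by rw [← Real.rpow_add hδ]; simp
  calc N * ∑ k ∈ A, w s k ≤ N * ∑ k ∈ A, (δ + δ ^ (1 - p) * w s k ^ p) := by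
        gcongr with k hk
        exact hx _ (hδ.trans_le (h.low s hs' k))
    _ = (N * A.card) * δ + δ ^ (1 - p) * (N * ∑ k ∈ A, w s k ^ p) := by
        rw [Finset.sum_add_distrib, ← Finset.mul_sum, Finset.sum_const, nsmul_eq_mul]; ring
    _ ≤ 5 ^ d * δ + δ ^ (1 - p) * (c2 * δ ^ p) := by
        have : 0 < δ ^ (1 - p) := Real.rpow_pos_of_pos hδ _
        gcongr
    _ = (5 ^ d + c2) * δ := by
        rw [mul_left_comm, hδe]; ring
    _ ≤ _ := mul_le_mul_of_nonneg_right (le_max_right _ _) hδ.le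

set_option maxHeartbeats 1600000 in
theorem discrete {d : ℕ} (hd : 3 ≤ d) {m : ℝ} (hm0 : 0 < m) (hmc : m < ((d:ℝ) - 2) / d) (g1 : ℝ) (hg1 : 0 < g1) :
    ∃ C > 0, ∀ (n : ℕ), 1 ≤ n → ∀ (δ S : ℝ), 0 < δ → 0 < S → ∀ w : ℝ → (Fin d → ℤ) → ℝ, DSol (Aset d n) ((n:ℝ)^2) m δ S w →
      ∀ g0 : (Fin d → ℤ) → ℝ, (∀ k, 0 ≤ g0 k) → (∀ k, w 0 k = max δ (g0 k)) → (∀ k, (n:ℝ)^2 < nsq k → g0 k = 0) →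
      ∀ (G Q : (Fin d → ℤ) → ℝ) (gM : ℝ), (∀ k, k ∉ Aset d n → G k = 0) → (∀ k, 0 ≤ G k) → (∀ k, G k ≤ gM) →
        (∀ k, nsq k < 2 * (n:ℝ)^2 → g1 ≤ G k) → (∀ k, 0 ≤ Q k) → (∀ k ∈ Aset d n, - Q k ≤ (n:ℝ)^2 * lap G k) →
        (∀ k, k ∉ Aset d n → 0 ≤ (n:ℝ)^2 * lap G k) →
      ∀ t : ℝ, 0 < t → t ≤ S →
        C * (((n:ℝ)^d)⁻¹ * ∑ k ∈ Aset d n, g0 k ^ (d * (1 - m) / 2) + C * δ ^ (d * (1 - m) / 2)) ^ (2 / (d:ℝ)) < S →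
        ((n:ℝ)^d)⁻¹ * ∑ k ∈ Aset d n, g0 k ≤ C * t ^ (1 / (1 - m)) + C * gM * δ +
          C * (((n:ℝ)^d)⁻¹ * ∑ k ∈ Aset d n, g0 k ^ (d * (1 - m) / 2) + C * δ ^ (d * (1 - m) / 2)) ^ (2 / (d * (1 - m))) * t ^ (-(m / (1 - m))) *
            (((n:ℝ)^d)⁻¹ * ∑ k ∈ Aset d n, Q k * w t k ^ m) := by
  have hd0 : (0:ℝ) < d := by positivity
  have hd3 : (3:ℝ) ≤ d := by exact_mod_cast hd
  have hm1 : m < 1 := hmc.trans (by rw [div_lt_one hd0]; linarith)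
  have hm : 0 < 1 - m := by linarith
  obtain ⟨Ce, hCe, hext⟩ := extinct hd hm0 hmc
  set j := 1 / (1 - m) with hj
  have hj0 : 0 < j := by positivity
  set Cb : ℝ := (2 * d * (1 + 5 ^ d)) ^ j with hCb
  have hCb0 : 0 < Cb := by positivity
  set c1 : ℝ := 2 ^ j * Cb with hc1
  set c2 : ℝ := 2 ^ j * (2 ^ j / g1 * Ce) with hc2
  set c3 : ℝ := 2 ^ j * (2 ^ j / g1 * Ce ^ j) with hc3
  have hc10 : 0 < c1 := by positivity
  have hc20 : 0 < c2 := by positivity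
  have hc30 : 0 < c3 := by positivity
  have h2j : (0:ℝ) < 2 ^ j := by positivity
  set C : ℝ := max (max c1 c2) (max c3 (max Ce (2 * 5 ^ d))) with hC
  have hC1 : c1 ≤ C := (le_max_left _ _).trans (le_max_left _ _)
  have hC2 : c2 ≤ C := (le_max_right _ _).trans (le_max_left _ _)
  have hC3 : c3 ≤ C := (le_max_left _ _).trans (le_max_right _ _)
  have hC4 : Ce ≤ C := (le_max_left _ _).trans ((le_max_right _ _).trans (le_max_right _ _))
  have hC5 : 2 * 5 ^ d ≤ C := (le_max_right _ _).trans ((le_max_right _ _).trans (le_max_right _ _))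
  have hC0 : 0 < C := hc10.trans_le hC1
  refine ⟨C, hC0, ?_⟩
  clear_value C
  intro n hn δ S hδ hS w h g0 hg0 hw0 hg0n G Q gM hGA hG0 hGM hGg1 hQ0 hQ hQ' t ht htS hCS
  have hn' : (0:ℝ) < n := by exact_mod_cast hn
  set p := d * (1 - m) / 2 with hp
  have hp0 : 0 < p := by positivity
  set N := ((n:ℝ)^d)⁻¹ with hN
  have hN0 : 0 < N := by positivity
  set A := Aset d n with hA
  have hcard : N * A.card ≤ 5 ^ d := card_Aset d n hn
  have hδp : 0 < δ ^ p := Real.rpow_pos_of_pos hδ _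
  set M0 := N * ∑ k ∈ A, g0 k ^ p with hM0
  have hM00 : 0 ≤ M0 := mul_nonneg hN0.le (Finset.sum_nonneg fun k _ => Real.rpow_nonneg (hg0 k) _)
  have hE0 : N * ∑ k ∈ A, w 0 k ^ p ≤ M0 + 5 ^ d * δ ^ p := by
    calc N * ∑ k ∈ A, w 0 k ^ p ≤ N * ∑ k ∈ A, (g0 k ^ p + δ ^ p) := by
          gcongr with k hk
          rw [hw0 k]
          have h1 := Real.rpow_nonneg (hg0 k) p
          rcases le_total δ (g0 k) with h2 | h2
          · rw [max_eq_right h2]; linarith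
          · rw [max_eq_left h2]; linarith
      _ = M0 + (N * A.card) * δ ^ p := by
          rw [Finset.sum_add_distrib, Finset.sum_const, nsmul_eq_mul, hM0]; ring
      _ ≤ _ := by gcongr
  set X := M0 + C * δ ^ p with hX
  have hX0 : 0 < X := by positivity
  have hXX : M0 + 5 ^ d * δ ^ p + 5 ^ d * δ ^ p ≤ X := by
    have := mul_le_mul_of_nonneg_right hC5 hδp.le
    rw [hX]; linarith
  have hXr : Ce * (M0 + 5 ^ d * δ ^ p + 5 ^ d * δ ^ p) ^ (2 / (d:ℝ)) ≤ Ce * X ^ (2 / (d:ℝ)) := by gcongr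
  have hXr2 : Ce * X ^ (2 / (d:ℝ)) ≤ C * X ^ (2 / (d:ℝ)) := by gcongr
  obtain ⟨s, hs, hsX, hsw⟩ := hext n hn δ S hδ hS w h (M0 + 5 ^ d * δ ^ p) (by positivity) hE0 (by linarith)
  have hs' := Ioo_subset_Icc_self hs
  have hsX' : s ^ j ≤ Ce ^ j * X ^ (2 / (d * (1 - m))) := by
    have h1 := Real.rpow_le_rpow hs.1.le (hsX.trans hXr) hj0.le
    rwa [Real.mul_rpow hCe.le (by positivity), ← Real.rpow_mul hX0.le, show 2 / (d:ℝ) * j = 2 / (d * (1 - m)) by rw [hj]; field_simp] at h1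
  have hgMg1 : g1 ≤ gM := (hGg1 0 (by simp [nsq]; positivity)).trans (hGM 0)
  have hgM0 : 0 < gM := hg1.trans_le hgMg1
  have hbase : N * ∑ k ∈ A, g0 k ≤ N * ∑ k ∈ A, wt m n k * w 0 k := by
    gcongr with k hk
    have h1 : g0 k ≤ w 0 k := by rw [hw0]; exact le_max_right _ _
    have h2 : 0 ≤ w 0 k := (hg0 k).trans h1
    by_cases h3 : (n:ℝ)^2 < nsq k
    · rw [hg0n k h3]; exact mul_nonneg (wt_nonneg _ _ _) h2
    · have := wt_ge hm1 hn k (not_lt.1 h3)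
      nlinarith
  have hMQ : ∀ r ∈ Icc 0 S, 0 ≤ N * ∑ k ∈ A, Q k * w r k ^ m := fun r hr =>
    mul_nonneg hN0.le (Finset.sum_nonneg fun k _ => mul_nonneg (hQ0 k) (Real.rpow_nonneg (hδ.le.trans (h.low r hr k)) _))
  have htS' : t ∈ Icc 0 S := ⟨ht.le, htS⟩
  have htj : 0 < t ^ j := Real.rpow_pos_of_pos ht _
  have htm : 0 < t ^ (-(m / (1 - m))) := Real.rpow_pos_of_pos ht _
  have hXp : 0 < X ^ (2 / (d * (1 - m))) := Real.rpow_pos_of_pos hX0 _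
  have hthird : 0 ≤ C * X ^ (2 / (d * (1 - m))) * t ^ (-(m / (1 - m))) * (N * ∑ k ∈ A, Q k * w t k ^ m) :=
    mul_nonneg (by positivity) (hMQ t htS')
  have hC1t : c1 * t ^ j ≤ C * t ^ j := mul_le_mul_of_nonneg_right hC1 htj.le
  have hC2t : c2 * gM * δ ≤ C * gM * δ := by gcongr
  rcases le_total s t with hst | hst
  · have h1 := h.mass hn hm0 hm1 hδ hs.1.le hs.2.le
    have h2 : N * ∑ k ∈ A, wt m n k * w s k ≤ 2 ^ j * (Ce * δ) := by
      calc N * ∑ k ∈ A, wt m n k * w s k ≤ N * ∑ k ∈ A, 2 ^ j * w s k := by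
            gcongr with k hk
            · exact hδ.le.trans (h.low s hs' k)
            · exact wt_le hm1 n k
        _ = 2 ^ j * (N * ∑ k ∈ A, w s k) := by rw [← Finset.mul_sum]; ring
        _ ≤ _ := by gcongr
    have h3 : s ^ j ≤ t ^ j := Real.rpow_le_rpow hs.1.le hst hj0.le
    have h4 : 2 ^ j * (N * ∑ k ∈ A, wt m n k * w s k + Cb * s ^ j) ≤ 2 ^ j * (2 ^ j * (Ce * δ) + Cb * t ^ j) := by gcongr
    have h5 : 2 ^ j * (2 ^ j * (Ce * δ)) ≤ c2 * gM * δ := by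
      rw [hc2]
      have e : 2 ^ j * (2 ^ j / g1 * Ce) * gM * δ = 2 ^ j * (2 ^ j * (Ce * δ)) * (gM / g1) := by field_simp
      rw [e]
      exact le_mul_of_one_le_right (by positivity) ((one_le_div hg1).2 hgMg1)
    have h6 : 2 ^ j * (2 ^ j * (Ce * δ) + Cb * t ^ j) = 2 ^ j * (2 ^ j * (Ce * δ)) + c1 * t ^ j := by rw [hc1]; ring
    linarith
  · have h1 := h.mass hn hm0 hm1 hδ ht.le htS
    have hpot := h.pot_est (by positivity) hm0 hm1 hδ G Q hGA hQ0 hQ hQ' ht hst hs.2.le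
    have hpot' := mul_le_mul_of_nonneg_left hpot hN0.le
    have hU : N * ∑ k ∈ A, G k * w s k ≤ gM * (Ce * δ) := by
      calc N * ∑ k ∈ A, G k * w s k ≤ N * ∑ k ∈ A, gM * w s k := by
            gcongr with k hk
            · exact hδ.le.trans (h.low s hs' k)
            · exact hGM k
        _ = gM * (N * ∑ k ∈ A, w s k) := by rw [← Finset.mul_sum]; ring
        _ ≤ _ := by gcongr
    have hY : N * ∑ k ∈ A, wt m n k * w t k ≤ 2 ^ j / g1 * (N * ∑ k ∈ A, G k * w t k) := by
      calc N * ∑ k ∈ A, wt m n k * w t k ≤ N * ∑ k ∈ A, (2 ^ j / g1) * (G k * w t k) := by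
            refine mul_le_mul_of_nonneg_left (Finset.sum_le_sum fun k hk => ?_) hN0.le
            have hwk : 0 ≤ w t k := hδ.le.trans (h.low t htS' k)
            rw [← mul_assoc]
            refine mul_le_mul_of_nonneg_right ?_ hwk
            by_cases h3 : nsq k < 2 * (n:ℝ)^2
            · refine (wt_le hm1 n k).trans ?_
              have := mul_le_mul_of_nonneg_left (hGg1 k h3) (by positivity : 0 ≤ (2:ℝ) ^ j / g1)
              exact le_trans (le_of_eq (div_mul_cancel₀ _ hg1.ne').symm) this
            · rw [wt_out hm1 hn k (not_lt.1 h3)]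
              exact mul_nonneg (by positivity) (hG0 k)
        _ = _ := by rw [← Finset.mul_sum]; ring
    set MQ := N * ∑ k ∈ A, Q k * w t k ^ m with hMQd
    have hMQ0 : 0 ≤ MQ := hMQ t htS'
    have e1 : N * (∑ k ∈ A, G k * w s k + s ^ (1 / (1 - m)) * t ^ (-(m / (1 - m))) * ∑ k ∈ A, Q k * w t k ^ m) =
        N * ∑ k ∈ A, G k * w s k + s ^ j * t ^ (-(m / (1 - m))) * MQ := by rw [hMQd, hj]; ring
    rw [e1] at hpot'
    have h7 : s ^ j * t ^ (-(m / (1 - m))) * MQ ≤ Ce ^ j * X ^ (2 / (d * (1 - m))) * t ^ (-(m / (1 - m))) * MQ := by gcongr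
    have h8 : N * ∑ k ∈ A, G k * w t k ≤ gM * (Ce * δ) + Ce ^ j * X ^ (2 / (d * (1 - m))) * t ^ (-(m / (1 - m))) * MQ := by linarith
    have h9 := mul_le_mul_of_nonneg_left h8 (by positivity : 0 ≤ (2:ℝ) ^ j / g1)
    have h10 : 2 ^ j * (N * ∑ k ∈ A, wt m n k * w t k + Cb * t ^ j) ≤
        2 ^ j * (2 ^ j / g1 * (gM * (Ce * δ) + Ce ^ j * X ^ (2 / (d * (1 - m))) * t ^ (-(m / (1 - m))) * MQ) + Cb * t ^ j) := by
      refine mul_le_mul_of_nonneg_left ?_ h2j.le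
      linarith
    have e2 : 2 ^ j * (2 ^ j / g1 * (gM * (Ce * δ) + Ce ^ j * X ^ (2 / (d * (1 - m))) * t ^ (-(m / (1 - m))) * MQ) + Cb * t ^ j)
        = c1 * t ^ j + c2 * gM * δ + c3 * X ^ (2 / (d * (1 - m))) * t ^ (-(m / (1 - m))) * MQ := by rw [hc1, hc2, hc3]; ring
    have h11 : c3 * X ^ (2 / (d * (1 - m))) * t ^ (-(m / (1 - m))) * MQ ≤ C * X ^ (2 / (d * (1 - m))) * t ^ (-(m / (1 - m))) * MQ := by gcongr
    linarith

lemma second_diff (φ φ1 φ2 : ℝ → ℝ) {h η : ℝ} (hh : 0 < h) (hη : 0 ≤ η)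
    (H1 : ∀ s ∈ Icc (-h) h, HasDerivAt φ (φ1 s) s) (H2 : ∀ s ∈ Icc (-h) h, HasDerivAt φ1 (φ2 s) s)
    (H3 : ∀ s ∈ Icc (-h) h, |φ2 s - φ2 0| ≤ η) : |φ h + φ (-h) - 2 * φ 0 - h ^ 2 * φ2 0| ≤ 2 * η * h ^ 2 := by
  have hsub : ∀ s ∈ Icc 0 h, s ∈ Icc (-h) h ∧ -s ∈ Icc (-h) h := by
    rintro s ⟨h1, h2⟩
    exact ⟨⟨by linarith, h2⟩, ⟨by linarith, by linarith⟩⟩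
  have D2 : ∀ s ∈ Icc 0 h, HasDerivWithinAt (fun s => φ1 s - φ1 (-s) - 2 * s * φ2 0) (φ2 s + φ2 (-s) - 2 * φ2 0) (Icc 0 h) s := by
    intro s hs
    have a := H2 s (hsub s hs).1
    have b := (H2 (-s) (hsub s hs).2).comp s (hasDerivAt_neg s)
    have c := ((hasDerivAt_id s).const_mul 2).mul_const (φ2 0)
    refine HasDerivAt.hasDerivWithinAt ?_
    exact ((a.sub b).sub c).congr_deriv (by ring)
  have D1 : ∀ s ∈ Icc 0 h, HasDerivWithinAt (fun s => φ s + φ (-s) - s ^ 2 * φ2 0) (φ1 s - φ1 (-s) - 2 * s * φ2 0) (Icc 0 h) s := by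
    intro s hs
    have a := H1 s (hsub s hs).1
    have b := (H1 (-s) (hsub s hs).2).comp s (hasDerivAt_neg s)
    have c := ((hasDerivAt_pow 2 s)).mul_const (φ2 0)
    refine HasDerivAt.hasDerivWithinAt ?_
    exact ((a.add b).sub c).congr_deriv (by norm_num; ring)
  have B2 : ∀ s ∈ Icc 0 h, ‖φ2 s + φ2 (-s) - 2 * φ2 0‖ ≤ 2 * η := by
    intro s hs
    have a := abs_le.1 (H3 s (hsub s hs).1)
    have b := abs_le.1 (H3 (-s) (hsub s hs).2)
    rw [Real.norm_eq_abs, abs_le]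
    constructor <;> linarith [a.1, a.2, b.1, b.2]
  have h0 : (0:ℝ) ∈ Icc 0 h := ⟨le_rfl, hh.le⟩
  have h1 : h ∈ Icc 0 h := ⟨hh.le, le_rfl⟩
  have B1 : ∀ s ∈ Icc 0 h, ‖φ1 s - φ1 (-s) - 2 * s * φ2 0‖ ≤ 2 * η * h := by
    intro s hs
    have := (convex_Icc 0 h).norm_image_sub_le_of_norm_hasDerivWithin_le D2 B2 h0 hs
    simp only [neg_zero, sub_self, mul_zero, zero_mul, sub_zero] at this
    refine this.trans ?_
    rw [Real.norm_of_nonneg hs.1]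
    have := hs.2
    gcongr
  have := (convex_Icc 0 h).norm_image_sub_le_of_norm_hasDerivWithin_le D1 B1 h0 h1
  rw [Real.norm_eq_abs, Real.norm_of_nonneg (by linarith)] at this
  calc _ = |φ h + φ (-h) - h ^ 2 * φ2 0 - (φ 0 + φ (-0) - 0 ^ 2 * φ2 0)| := by congr 1; rw [neg_zero]; ring
    _ ≤ _ := this
    _ = _ := by ring

lemma consist {F : Type*} [NormedAddCommGroup F] [NormedSpace ℝ F] [ProperSpace F] (g g1 g2 : F → ℝ) (v : F) {Q K : Set F}
    (hQ : IsOpen Q) (H1 : ∀ p ∈ Q, HasDerivAt (fun s : ℝ => g (p + s • v)) (g1 p) 0)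
    (H2 : ∀ p ∈ Q, HasDerivAt (fun s : ℝ => g1 (p + s • v)) (g2 p) 0) (H3 : ContinuousOn g2 Q)
    (hK : IsCompact K) (hKQ : K ⊆ Q) {η : ℝ} (hη : 0 < η) :
    ∃ h0 > 0, ∀ h, 0 < h → h ≤ h0 → ∀ p ∈ K, |g (p + h • v) + g (p - h • v) - 2 * g p - h ^ 2 * g2 p| ≤ η * h ^ 2 := by
  obtain ⟨r, hr, hrQ⟩ := hK.exists_cthickening_subset_open hQ hKQ
  have hK' : IsCompact (cthickening r K) := hK.cthickening
  have hu := hK'.uniformContinuousOn_of_continuous (H3.mono hrQ)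
  rw [Metric.uniformContinuousOn_iff] at hu
  obtain ⟨δ, hδ, hu⟩ := hu (η / 2) (by positivity)
  have hv : 0 < ‖v‖ + 1 := by positivity
  refine ⟨min (r / (‖v‖ + 1)) (δ / 2 / (‖v‖ + 1)), by positivity, ?_⟩
  intro h hh hh0 p hp
  have hb : ∀ s ∈ Icc (-h) h, ‖s • v‖ ≤ r ∧ ‖s • v‖ < δ := by
    intro s hs
    have h1 : ‖s • v‖ ≤ h * (‖v‖ + 1) := by
      rw [norm_smul, Real.norm_eq_abs]
      have : |s| ≤ h := abs_le.2 hs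
      gcongr; linarith
    have h2 := (le_min_iff.1 hh0)
    rw [le_div_iff₀ hv, le_div_iff₀ hv] at h2
    exact ⟨h1.trans h2.1, by linarith [h2.2]⟩
  have hpK : p ∈ cthickening r K := self_subset_cthickening K hp
  have hmem : ∀ s ∈ Icc (-h) h, p + s • v ∈ cthickening r K := by
    intro s hs
    refine mem_cthickening_of_dist_le _ p r K hp ?_
    rw [dist_eq_norm, add_sub_cancel_left]
    exact (hb s hs).1
  have key : ∀ (f f1 : F → ℝ), (∀ p ∈ Q, HasDerivAt (fun s : ℝ => f (p + s • v)) (f1 p) 0) → ∀ s ∈ Icc (-h) h,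
      HasDerivAt (fun s : ℝ => f (p + s • v)) (f1 (p + s • v)) s := by
    intro f f1 H s hs
    have a := H _ (hrQ (hmem s hs))
    have b : HasDerivAt (fun s' : ℝ => s' - s) 1 s := (hasDerivAt_id s).sub_const s
    have a' : HasDerivAt (fun r : ℝ => f (p + s • v + r • v)) (f1 (p + s • v)) ((fun s' : ℝ => s' - s) s) := by
      simpa only [sub_self] using a
    have c := HasDerivAt.comp (h := fun s' : ℝ => s' - s) s a' b
    simp only [mul_one] at c
    refine c.congr_of_eventuallyEq (Filter.Eventually.of_forall fun s' => ?_)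
    simp only [Function.comp, add_assoc, ← add_smul]
    congr 3; ring
  have := second_diff (fun s => g (p + s • v)) (fun s => g1 (p + s • v)) (fun s => g2 (p + s • v)) hh (half_pos hη).le
    (key g g1 H1) (key g1 g2 H2) ?_
  · simp only [neg_smul, zero_smul, add_zero, ← sub_eq_add_neg] at this
    refine this.trans (le_of_eq ?_)
    ring
  · intro s hs
    simp only [zero_smul, add_zero]
    have := hu _ (hmem s hs) _ hpK (by rw [dist_eq_norm, add_sub_cancel_left]; exact (hb s hs).2)
    rw [Real.dist_eq] at this
    exact this.le

/-- lattice points -/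
noncomputable def pt {d : ℕ} (x₀ : EuclideanSpace ℝ (Fin d)) (h : ℝ) (k : Fin d → ℤ) : EuclideanSpace ℝ (Fin d) :=
  x₀ + h • WithLp.toLp 2 (fun i => ((k i : ℤ) : ℝ))

lemma pt_add {d : ℕ} (x₀ : EuclideanSpace ℝ (Fin d)) (h : ℝ) (k : Fin d → ℤ) (i : Fin d) :
    pt x₀ h (k + Pi.single i 1) = pt x₀ h k + h • EuclideanSpace.single i (1:ℝ) := by
  ext j
  by_cases hj : j = i
  · subst hj; simp [pt]; ring
  · simp [pt, hj]

lemma pt_sub {d : ℕ} (x₀ : EuclideanSpace ℝ (Fin d)) (h : ℝ) (k : Fin d → ℤ) (i : Fin d) :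
    pt x₀ h (k - Pi.single i 1) = pt x₀ h k - h • EuclideanSpace.single i (1:ℝ) := by
  ext j
  by_cases hj : j = i
  · subst hj; simp [pt]; ring
  · simp [pt, hj]

lemma pt_norm {d : ℕ} (x₀ : EuclideanSpace ℝ (Fin d)) (h : ℝ) (k : Fin d → ℤ) : ‖pt x₀ h k - x₀‖ ^ 2 = h ^ 2 * nsq k := by
  unfold pt
  rw [add_sub_cancel_left, norm_smul, mul_pow, EuclideanSpace.norm_sq_eq]
  simp [nsq]

lemma pt_mem {d : ℕ} (x₀ : EuclideanSpace ℝ (Fin d)) {R : ℝ} (hR : 0 < R) {n : ℕ} (hn : 1 ≤ n) (k : Fin d → ℤ) {c : ℝ} (hc : 0 ≤ c)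
    (hk : nsq k ≤ c ^ 2 * (n:ℝ) ^ 2) : pt x₀ (R / n) k ∈ closedBall x₀ (c * R) := by
  have hn' : (0:ℝ) < n := by exact_mod_cast hn
  rw [mem_closedBall, dist_eq_norm]
  refine le_of_sq_le_sq ?_ (by positivity) 
  rw [pt_norm, div_pow, div_mul_eq_mul_div, div_le_iff₀ (by positivity)]
  nlinarith [mul_le_mul_of_nonneg_left hk (sq_nonneg R)]

/-- kernel -/
noncomputable def kap (d : ℕ) (ρ : ℝ) (x : EuclideanSpace ℝ (Fin d)) : ℝ :=
  d * (d - 2) * (ρ ^ 2 * (‖x‖ ^ 2 + ρ ^ 2) ^ (-((d + 2 : ℝ) / 2)))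

/-- lower bound for the potential -/
noncomputable def gl (d : ℕ) : ℝ := (3:ℝ) ^ (-((d - 2 : ℝ) / 2)) * (1 - (5 / 3 : ℝ) ^ (-((d - 2 : ℝ) / 2)))

lemma gl_pos {d : ℕ} (hd : 3 ≤ d) : 0 < gl d := by
  have hd3 : (3:ℝ) ≤ d := by exact_mod_cast hd
  unfold gl
  refine mul_pos (by positivity) ?_
  have : (5 / 3 : ℝ) ^ (-((d - 2 : ℝ) / 2)) < 1 := Real.rpow_lt_one_of_one_lt_of_neg (by norm_num) (by linarith)
  linarith

lemma kap_nonneg {d : ℕ} (hd : 3 ≤ d) {ρ : ℝ} (x : EuclideanSpace ℝ (Fin d)) : 0 ≤ kap d ρ x := by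
  have hd3 : (3:ℝ) ≤ d := by exact_mod_cast hd
  unfold kap
  have : (0:ℝ) ≤ d - 2 := by linarith
  positivity

lemma norm_line {d : ℕ} (x : EuclideanSpace ℝ (Fin d)) (i : Fin d) (s : ℝ) :
    ‖x + s • EuclideanSpace.single i (1:ℝ)‖ ^ 2 = ‖x‖ ^ 2 + 2 * s * x i + s ^ 2 := by
  rw [norm_add_sq_real, inner_smul_right, norm_smul, mul_pow, EuclideanSpace.inner_single_right]
  simp
  ring

lemma pot_lap {d : ℕ} (hd : 3 ≤ d) {ρ η : ℝ} (hρ : 0 < ρ) (hη : 0 < η) :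
    ∃ n0 : ℕ, ∀ n : ℕ, n0 ≤ n → 1 ≤ n → ∀ k ∈ Aset d n, - (kap d ρ (pt 0 (1 / n) k) + η) ≤
      (n:ℝ) ^ 2 * lap (fun k => (‖pt (0 : EuclideanSpace ℝ (Fin d)) (1 / n) k‖ ^ 2 + ρ ^ 2) ^ (-((d - 2 : ℝ) / 2))) k := by
  have hd3 : (3:ℝ) ≤ d := by exact_mod_cast hd
  set a : ℝ := (d - 2 : ℝ) / 2 with ha
  set q : EuclideanSpace ℝ (Fin d) → ℝ := fun x => ‖x‖ ^ 2 + ρ ^ 2 with hq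
  have hq0 : ∀ x, 0 < q x := fun x => by positivity
  have hqd : ∀ (i : Fin d) (x : EuclideanSpace ℝ (Fin d)), HasDerivAt (fun s : ℝ => q (x + s • EuclideanSpace.single i (1:ℝ))) (2 * x i) 0 := by
    intro i x
    have e : (fun s : ℝ => q (x + s • EuclideanSpace.single i (1:ℝ))) = fun s => ‖x‖ ^ 2 + 2 * s * x i + s ^ 2 + ρ ^ 2 := by
      funext s; rw [hq]; simp only [norm_line]
    rw [e]
    have h1 : HasDerivAt (fun s : ℝ => 2 * s * x i) (2 * 1 * x i) 0 := ((hasDerivAt_id (0:ℝ)).const_mul 2).mul_const (x i)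
    have h2 := hasDerivAt_pow 2 (0:ℝ)
    exact (((h1.const_add (‖x‖^2)).add h2).add_const (ρ ^ 2)).congr_deriv (by norm_num)
  have hqr : ∀ (b : ℝ) (i : Fin d) (x : EuclideanSpace ℝ (Fin d)), HasDerivAt (fun s : ℝ => q (x + s • EuclideanSpace.single i (1:ℝ)) ^ b) (2 * x i * b * q x ^ (b - 1)) 0 := by
    intro b i x
    have := (hqd i x).rpow_const (p := b) (Or.inl (by simp only [zero_smul, add_zero]; exact (hq0 x).ne'))
    simpa only [zero_smul, add_zero] using this
  have hxd : ∀ (i : Fin d) (x : EuclideanSpace ℝ (Fin d)), HasDerivAt (fun s : ℝ => (x + s • EuclideanSpace.single i (1:ℝ)) i) 1 0 := by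
    intro i x
    have e : (fun s : ℝ => (x + s • EuclideanSpace.single i (1:ℝ)) i) = fun s => x i + s := by
      funext s; simp
    rw [e]
    exact (hasDerivAt_id (0:ℝ)).const_add _
  set g2 : Fin d → EuclideanSpace ℝ (Fin d) → ℝ := fun i x => 2 * 1 * (-a) * q x ^ (-a - 1) + 2 * x i * (-a) * (2 * x i * (-a - 1) * q x ^ (-a - 1 - 1)) with hg2
  have hqc : ∀ b : ℝ, Continuous fun x => q x ^ b := fun b =>
    Continuous.rpow_const (by fun_prop) (fun x => Or.inl (hq0 x).ne')
  have key : ∀ i : Fin d, ∃ h0 > 0, ∀ h, 0 < h → h ≤ h0 → ∀ p ∈ closedBall (0 : EuclideanSpace ℝ (Fin d)) 2,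
      |q (p + h • EuclideanSpace.single i (1:ℝ)) ^ (-a) + q (p - h • EuclideanSpace.single i (1:ℝ)) ^ (-a) - 2 * q p ^ (-a) - h ^ 2 * g2 i p| ≤ η / d * h ^ 2 := by
    intro i
    refine consist (fun x => q x ^ (-a)) (fun x => 2 * x i * (-a) * q x ^ (-a - 1)) (g2 i) (EuclideanSpace.single i (1:ℝ)) isOpen_univ
      (fun p _ => hqr (-a) i p) (fun p _ => ?_) ?_ (isCompact_closedBall _ _) (subset_univ _) (by positivity)
    · have := (((hxd i p).const_mul 2).mul_const (-a)).mul (hqr (-a - 1) i p)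
      simp only [zero_smul, add_zero] at this
      exact this
    · refine Continuous.continuousOn ?_
      have := hqc (-a - 1)
      have := hqc (-a - 1 - 1)
      fun_prop
  choose h0 hh0 key using key
  have hsum : ∀ x, ∑ i, g2 i x = - kap d ρ x := by
    intro x
    simp only [hg2, Finset.sum_add_distrib, Finset.sum_const, Finset.card_univ, Fintype.card_fin, nsmul_eq_mul]
    have e1 : ∑ i : Fin d, 2 * x i * (-a) * (2 * x i * (-a - 1) * q x ^ (-a - 1 - 1)) = 4 * a * (a + 1) * q x ^ (-a - 1 - 1) * ‖x‖ ^ 2 := by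
      rw [EuclideanSpace.real_norm_sq_eq, Finset.mul_sum]
      refine Finset.sum_congr rfl fun i _ => ?_
      ring
    have e2 : q x ^ (-a - 1) = q x ^ (-a - 1 - 1) * q x := by
      rw [← Real.rpow_add_one (hq0 x).ne']; congr 1; ring
    have e3 : -((d + 2 : ℝ) / 2) = -a - 1 - 1 := by rw [ha]; ring
    rw [e1, e2]
    unfold kap
    rw [e3]
    change _ = -(d * (d - 2) * (ρ ^ 2 * q x ^ (-a - 1 - 1)))
    have e4 : ‖x‖ ^ 2 = q x - ρ ^ 2 := by rw [hq]; ring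
    have e5 : (d:ℝ) = 2 * a + 2 := by rw [ha]; ring
    rw [e4, e5]; ring
  have : ∃ h1 > 0, ∀ i : Fin d, h1 ≤ h0 i := by
    have : Nonempty (Fin d) := ⟨⟨0, by omega⟩⟩
    refine ⟨Finset.univ.inf' Finset.univ_nonempty h0, ?_, fun i => Finset.inf'_le _ (Finset.mem_univ i)⟩
    rw [gt_iff_lt, Finset.lt_inf'_iff]
    exact fun i _ => hh0 i
  obtain ⟨h1, hh1, hle⟩ := this
  obtain ⟨n0, hn0⟩ := exists_nat_gt (1 / h1)
  refine ⟨n0, fun n hn hn1 k hk => ?_⟩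
  have hn' : (0:ℝ) < n := by exact_mod_cast hn1
  have hnle : 1 / (n:ℝ) ≤ h1 := by
    rw [div_le_iff₀ hn']
    rw [div_lt_iff₀ hh1] at hn0
    have : (n0:ℝ) ≤ n := by exact_mod_cast hn
    nlinarith
  have hmem : pt (0 : EuclideanSpace ℝ (Fin d)) (1 / n) k ∈ closedBall (0 : EuclideanSpace ℝ (Fin d)) 2 := by
    have := pt_mem (0 : EuclideanSpace ℝ (Fin d)) one_pos hn1 k (c := 2) (by norm_num) (by rw [mem_Aset] at hk; linarith)
    simpa using this
  have hall := fun i => (abs_le.1 (key i (1 / n) (by positivity) (hnle.trans (hle i)) _ hmem)).1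
  have hs := Finset.sum_le_sum fun i (_ : i ∈ Finset.univ) => hall i
  simp only [Finset.sum_sub_distrib, ← Finset.mul_sum, hsum, Finset.sum_const, Finset.card_univ, Fintype.card_fin, nsmul_eq_mul] at hs
  have el : lap (fun k => q (pt (0 : EuclideanSpace ℝ (Fin d)) (1 / n) k) ^ (-a)) k =
      ∑ i : Fin d, (q (pt 0 (1 / n) k + (1 / n : ℝ) • EuclideanSpace.single i (1:ℝ)) ^ (-a) + q (pt 0 (1 / n) k - (1 / n : ℝ) • EuclideanSpace.single i (1:ℝ)) ^ (-a)) - d * (2 * q (pt 0 (1 / n) k) ^ (-a)) := by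
    unfold lap
    simp only [pt_add, pt_sub, Finset.sum_sub_distrib, Finset.sum_const, Finset.card_univ, Fintype.card_fin, nsmul_eq_mul]
  change _ ≤ (n:ℝ) ^ 2 * lap (fun k => q (pt (0 : EuclideanSpace ℝ (Fin d)) (1 / n) k) ^ (-a)) k
  rw [el]
  have hmul := mul_le_mul_of_nonneg_left hs (sq_nonneg (n:ℝ))
  have hd0 : (d:ℝ) ≠ 0 := by linarith
  have e1 : (n:ℝ) ^ 2 * (d * -(η / d * (1 / n : ℝ) ^ 2)) = - η := by field_simp
  rw [e1] at hmul
  have e2 : (n:ℝ) ^ 2 * ((1 / n : ℝ) ^ 2 * - kap d ρ (pt 0 (1 / n) k)) = - kap d ρ (pt 0 (1 / n) k) := by field_simp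
  rw [mul_sub, e2] at hmul
  linarith

lemma potential {d : ℕ} (hd : 3 ≤ d) {ρ η : ℝ} (hρ : 0 < ρ) (hρ1 : ρ ≤ 1) (hη : 0 < η) :
    ∃ n0 : ℕ, ∀ n : ℕ, n0 ≤ n → 1 ≤ n → ∃ G : (Fin d → ℤ) → ℝ, (∀ k, k ∉ Aset d n → G k = 0) ∧ (∀ k, 0 ≤ G k) ∧
      (∀ k, G k ≤ (ρ ^ 2) ^ (-((d - 2 : ℝ) / 2))) ∧ (∀ k, nsq k < 2 * (n:ℝ)^2 → gl d ≤ G k) ∧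
      (∀ k ∈ Aset d n, - (kap d ρ (pt 0 (1 / n) k) + η) ≤ (n:ℝ)^2 * lap G k) ∧
      (∀ k, k ∉ Aset d n → 0 ≤ (n:ℝ)^2 * lap G k) := by
  have hd3 : (3:ℝ) ≤ d := by exact_mod_cast hd
  obtain ⟨n0, H⟩ := pot_lap hd hρ hη
  refine ⟨n0, fun n hn hn1 => ?_⟩
  have hn' : (0:ℝ) < n := by exact_mod_cast hn1
  specialize H n hn hn1
  set a : ℝ := (d - 2 : ℝ) / 2 with ha
  have ha0 : 0 < a := by rw [ha]; linarith
  have hx : ∀ k : Fin d → ℤ, ‖pt (0 : EuclideanSpace ℝ (Fin d)) (1 / n) k‖ ^ 2 = nsq k / (n:ℝ) ^ 2 := by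
    intro k
    have := pt_norm (0 : EuclideanSpace ℝ (Fin d)) (1 / n) k
    rw [sub_zero] at this
    rw [this]; field_simp
  simp only [hx] at H
  set P : (Fin d → ℤ) → ℝ := fun k => (nsq k / (n:ℝ) ^ 2 + ρ ^ 2) ^ (-a) with hP
  set c : ℝ := (4 + ρ ^ 2) ^ (-a) with hc
  have hc0 : 0 < c := by positivity
  have hpos : ∀ k : Fin d → ℤ, 0 ≤ nsq k / (n:ℝ) ^ 2 := fun k => div_nonneg (nsq_nonneg k) (by positivity)
  have hin : ∀ k ∈ Aset d n, c ≤ P k := by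
    intro k hk
    rw [mem_Aset] at hk
    have : nsq k / (n:ℝ) ^ 2 ≤ 4 := by rw [div_le_iff₀ (by positivity)]; exact hk.le
    have h0 := hpos k
    exact Real.rpow_le_rpow_of_nonpos (by positivity) (by linarith) (by linarith)
  have hout : ∀ k, k ∉ Aset d n → P k ≤ c := by
    intro k hk
    rw [mem_Aset, not_lt] at hk
    have : 4 ≤ nsq k / (n:ℝ) ^ 2 := by rw [le_div_iff₀ (by positivity)]; exact hk
    exact Real.rpow_le_rpow_of_nonpos (by positivity) (by linarith) (by linarith)
  refine ⟨fun k => max (P k - c) 0, ?_, ?_, ?_, ?_, ?_, ?_⟩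
  · intro k hk
    exact max_eq_right (by linarith [hout k hk])
  · intro k; exact le_max_right _ _
  · intro k
    refine max_le ?_ (by positivity)
    have : P k ≤ (ρ ^ 2) ^ (-a) := Real.rpow_le_rpow_of_nonpos (by positivity) (by linarith [hpos k]) (by linarith)
    linarith
  · intro k hk
    refine le_max_of_le_left ?_
    have h1 : nsq k / (n:ℝ) ^ 2 ≤ 2 := by rw [div_le_iff₀ (by positivity)]; exact hk.le
    have h0 := hpos k
    have h2 : (2 + ρ ^ 2) ^ (-a) ≤ P k := Real.rpow_le_rpow_of_nonpos (by positivity) (by linarith) (by linarith)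
    have h3 : c ≤ (5 / 3 * (2 + ρ ^ 2)) ^ (-a) := Real.rpow_le_rpow_of_nonpos (by positivity) (by nlinarith) (by linarith)
    rw [Real.mul_rpow (by norm_num) (by positivity)] at h3
    have h4 : (3:ℝ) ^ (-a) ≤ (2 + ρ ^ 2) ^ (-a) := Real.rpow_le_rpow_of_nonpos (by positivity) (by nlinarith) (by linarith)
    have h5 : (5 / 3 : ℝ) ^ (-a) < 1 := Real.rpow_lt_one_of_one_lt_of_neg (by norm_num) (by linarith)
    have h6 := mul_le_mul_of_nonneg_right h4 (by linarith : 0 ≤ 1 - (5 / 3 : ℝ) ^ (-a))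
    unfold gl
    rw [← ha]
    linarith
  · intro k hk
    refine (H k hk).trans ?_
    refine mul_le_mul_of_nonneg_left ?_ (by positivity)
    unfold lap
    refine Finset.sum_le_sum fun i _ => ?_
    have e : max (P k - c) 0 = P k - c := max_eq_left (by linarith [hin k hk])
    beta_reduce
    rw [e]
    have h1 := le_max_left (P (k + Pi.single i 1) - c) 0
    have h2 := le_max_left (P (k - Pi.single i 1) - c) 0
    linarith
  · intro k hk
    refine mul_nonneg (by positivity) (Finset.sum_nonneg fun i _ => ?_)
    have e : max (P k - c) 0 = 0 := max_eq_right (by linarith [hout k hk])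
    beta_reduce
    rw [e]
    have h1 := le_max_right (P (k + Pi.single i 1) - c) 0
    have h2 := le_max_right (P (k - Pi.single i 1) - c) 0
    linarith

lemma fderiv_slice {E : Type*} [NormedAddCommGroup E] [NormedSpace ℝ E] {f : ℝ × E → ℝ} {t : ℝ} {y : E}
    (hf : DifferentiableAt ℝ f (t, y)) (v : E) : fderiv ℝ (fun y => f (t, y)) y v = fderiv ℝ f (t, y) (0, v) := by
  have h := hf.hasFDerivAt.comp y (hasFDerivAt_prodMk_right (𝕜 := ℝ) t y)
  have h' : HasFDerivAt (fun y => f (t, y)) ((fderiv ℝ f (t, y)).comp (ContinuousLinearMap.inr ℝ ℝ E)) y := h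
  rw [h'.fderiv]
  simp

lemma u_consist {d : ℕ} {Q K : Set (ℝ × EuclideanSpace ℝ (Fin d))} (hQ : IsOpen Q) (g : ℝ × EuclideanSpace ℝ (Fin d) → ℝ)
    (hg : ContDiffOn ℝ (⊤ : ℕ∞) g Q) (hK : IsCompact K) (hKQ : K ⊆ Q) {η : ℝ} (hη : 0 < η) :
    ∃ h0 > 0, ∀ h, 0 < h → h ≤ h0 → ∀ p ∈ K,
      |∑ i : Fin d, (g (p.1, p.2 + h • EuclideanSpace.single i (1:ℝ)) + g (p.1, p.2 - h • EuclideanSpace.single i (1:ℝ)) - 2 * g p)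
        - h ^ 2 * spaceLap (fun y => g (p.1, y)) p.2| ≤ η * h ^ 2 := by
  set v : Fin d → ℝ × EuclideanSpace ℝ (Fin d) := fun i => (0, EuclideanSpace.single i (1:ℝ)) with hv
  set g1 : Fin d → ℝ × EuclideanSpace ℝ (Fin d) → ℝ := fun i p => fderiv ℝ g p (v i) with hg1
  set g2 : Fin d → ℝ × EuclideanSpace ℝ (Fin d) → ℝ := fun i p => fderiv ℝ (g1 i) p (v i) with hg2
  have c1 : ∀ i, ContDiffOn ℝ (⊤ : ℕ∞) (g1 i) Q := fun i =>
    (hg.fderiv_of_isOpen hQ (m := (⊤ : ℕ∞)) (by norm_cast)).clm_apply contDiffOn_const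
  have c2 : ∀ i, ContDiffOn ℝ (⊤ : ℕ∞) (g2 i) Q := fun i =>
    ((c1 i).fderiv_of_isOpen hQ (m := (⊤ : ℕ∞)) (by norm_cast)).clm_apply contDiffOn_const
  have d0 : ∀ p ∈ Q, DifferentiableAt ℝ g p := fun p hp => (hg.differentiableOn (by simp)).differentiableAt (hQ.mem_nhds hp)
  have d1 : ∀ i, ∀ p ∈ Q, DifferentiableAt ℝ (g1 i) p := fun i p hp => ((c1 i).differentiableOn (by simp)).differentiableAt (hQ.mem_nhds hp)
  have hlap : ∀ p ∈ Q, spaceLap (fun y => g (p.1, y)) p.2 = ∑ i, g2 i p := by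
    rintro ⟨t, x⟩ hp
    unfold spaceLap
    refine Finset.sum_congr rfl fun i _ => ?_
    have hev : (fun y => fderiv ℝ (fun y => g (t, y)) y (EuclideanSpace.single i 1)) =ᶠ[nhds x] fun y => g1 i (t, y) := by
      have : ∀ᶠ y in nhds x, (t, y) ∈ Q := (Continuous.prodMk_right t).continuousAt.eventually (hQ.mem_nhds hp)
      filter_upwards [this] with y hy
      exact fderiv_slice (d0 _ hy) _
    dsimp only
    rw [hev.fderiv_eq, fderiv_slice (d1 i _ hp)]
  have key : ∀ i : Fin d, ∃ h0 > 0, ∀ h, 0 < h → h ≤ h0 → ∀ p ∈ K,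
      |g (p + h • v i) + g (p - h • v i) - 2 * g p - h ^ 2 * g2 i p| ≤ η / (d + 1) * h ^ 2 := by
    intro i
    refine consist g (g1 i) (g2 i) (v i) hQ (fun p hp => ?_) (fun p hp => ?_) (c2 i).continuousOn hK hKQ (by positivity)
    · exact (d0 p hp).hasFDerivAt.hasLineDerivAt (v i)
    · exact (d1 i p hp).hasFDerivAt.hasLineDerivAt (v i)
  choose h0 hh0 key using key
  have : ∃ h1 > 0, ∀ i : Fin d, h1 ≤ h0 i := by
    rcases isEmpty_or_nonempty (Fin d) with hE | hE
    · exact ⟨1, one_pos, fun i => (hE.false i).elim⟩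
    refine ⟨Finset.univ.inf' Finset.univ_nonempty h0, ?_, fun i => Finset.inf'_le _ (Finset.mem_univ i)⟩
    rw [gt_iff_lt, Finset.lt_inf'_iff]
    exact fun i _ => hh0 i
  obtain ⟨h1, hh1, hle⟩ := this
  refine ⟨h1, hh1, fun h hh hhle p hp => ?_⟩
  rw [hlap p (hKQ hp), Finset.mul_sum, ← Finset.sum_sub_distrib]
  refine (Finset.abs_sum_le_sum_abs _ _).trans ?_
  have hb : ∀ i ∈ Finset.univ, |g (p.1, p.2 + h • EuclideanSpace.single i (1:ℝ)) + g (p.1, p.2 - h • EuclideanSpace.single i (1:ℝ)) - 2 * g p - h ^ 2 * g2 i p| ≤ η / (d + 1) * h ^ 2 := by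
    intro i _
    have := key i h hh (hhle.trans (hle i)) p hp
    have e1 : p + h • v i = (p.1, p.2 + h • EuclideanSpace.single i (1:ℝ)) := by ext <;> simp [hv]
    have e2 : p - h • v i = (p.1, p.2 - h • EuclideanSpace.single i (1:ℝ)) := by ext <;> simp [hv]
    rw [e1, e2] at this
    exact this
  refine (Finset.sum_le_sum hb).trans ?_
  simp only [Finset.sum_const, Finset.card_univ, Fintype.card_fin, nsmul_eq_mul]
  have : (d:ℝ) * (η / (d + 1) * h ^ 2) = d / (d + 1) * (η * h ^ 2) := by ring
  rw [this]
  refine mul_le_of_le_one_left (by positivity) ?_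
  rw [div_le_one (by positivity)]
  linarith

set_option maxHeartbeats 1000000 in
theorem cmp_u {d : ℕ} {m : ℝ} (hm0 : 0 < m) (hm1 : m < 1) {Ω : Set (EuclideanSpace ℝ (Fin d))} (hΩ : IsOpen Ω) {T : ℝ}
    {u : ℝ → EuclideanSpace ℝ (Fin d) → ℝ} (hu : IsFDESol m (Ioo 0 T ×ˢ Ω) u) {x₀ : EuclideanSpace ℝ (Fin d)} {R : ℝ} (hR : 0 < R)
    (hsub : closedBall x₀ (3 * R) ⊆ Ω) {ε t : ℝ} (hε : 0 < ε) (hεt : ε < t) (htT : t < T) :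
    ∃ δ0 > 0, (∀ x ∈ closedBall x₀ (3 * R), δ0 ≤ u ε x) ∧ ∃ n0 : ℕ, ∀ n : ℕ, n0 ≤ n → 1 ≤ n → ∀ (δ S : ℝ) (w : ℝ → (Fin d → ℤ) → ℝ),
      0 < δ → δ ≤ δ0 → (t - ε) / R ^ 2 ≤ S → DSol (Aset d n) ((n:ℝ) ^ 2) m δ S w →
      (∀ k ∈ Aset d n, w 0 k ≤ u ε (pt x₀ (R / n) k)) →
      ∀ k ∈ Aset d n, w ((t - ε) / R ^ 2) k ≤ 2 * u t (pt x₀ (R / n) k) := by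
  obtain ⟨hpos, hsm, hpde⟩ := hu
  set Q : Set (ℝ × EuclideanSpace ℝ (Fin d)) := Ioo 0 T ×ˢ Ω with hQd
  have hQ : IsOpen Q := isOpen_Ioo.prod hΩ
  set U : ℝ × EuclideanSpace ℝ (Fin d) → ℝ := fun p => u p.1 p.2 with hU
  set K : Set (ℝ × EuclideanSpace ℝ (Fin d)) := Icc ε t ×ˢ closedBall x₀ (3 * R) with hKd
  have hK : IsCompact K := isCompact_Icc.prod (isCompact_closedBall _ _)
  have hKQ : K ⊆ Q := by
    rintro ⟨s, x⟩ ⟨h1, h2⟩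
    exact ⟨⟨hε.trans_le h1.1, h1.2.trans_lt htT⟩, hsub h2⟩
  have hKne : K.Nonempty := ⟨(ε, x₀), ⟨le_rfl, hεt.le⟩, mem_closedBall_self (by positivity)⟩
  obtain ⟨pm, hpm, hmin⟩ := hK.exists_isMinOn hKne (hsm.continuousOn.mono hKQ)
  set δ0 := U pm with hδ0
  have hδ00 : 0 < δ0 := hpos pm (hKQ hpm)
  have hlow : ∀ p ∈ K, δ0 ≤ u p.1 p.2 := fun p hp => hmin hp
  set ut : ℝ × EuclideanSpace ℝ (Fin d) → ℝ := fun p => fderiv ℝ U p (1, 0) with hut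
  have cut : ContinuousOn ut Q := by
    have : ContDiffOn ℝ (⊤ : ℕ∞) ut Q := (hsm.fderiv_of_isOpen hQ (m := (⊤ : ℕ∞)) (by norm_cast)).clm_apply contDiffOn_const
    exact this.continuousOn
  have dut : ∀ p ∈ Q, HasDerivAt (fun s => u s p.2) (ut p) p.1 := by
    rintro ⟨s, x⟩ hp
    have h1 : HasFDerivAt U (fderiv ℝ U (s, x)) (s, x) := ((hsm.differentiableOn (by simp)).differentiableAt (hQ.mem_nhds hp)).hasFDerivAt
    have h2 : HasDerivAt (fun s : ℝ => (s, x)) ((1:ℝ), (0 : EuclideanSpace ℝ (Fin d))) s := (hasDerivAt_id s).prodMk (hasDerivAt_const s x)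
    exact h1.comp_hasDerivAt s h2
  obtain ⟨K1, hK1⟩ := hK.exists_bound_of_continuousOn (cut.mono hKQ)
  have hK10 : 0 ≤ K1 := (norm_nonneg _).trans (hK1 pm hpm)
  have hutl : ∀ p ∈ Q, ut p = spaceLap (fun y => u p.1 y ^ m) p.2 := fun p hp => by
    rw [← hpde p hp, (dut p hp).deriv]
  have hgsm : ContDiffOn ℝ (⊤ : ℕ∞) (fun p : ℝ × EuclideanSpace ℝ (Fin d) => u p.1 p.2 ^ m) Q :=
    hsm.rpow_const_of_ne fun p hp => (hpos p hp).ne'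
  set S0 := (t - ε) / R ^ 2 with hS0
  have hS00 : 0 < S0 := by
    have : 0 < t - ε := by linarith
    positivity
  set L := (R ^ 2 * K1 + 1) / δ0 with hL
  have hL0 : 0 < L := by positivity
  have hLδ : L * δ0 = R ^ 2 * K1 + 1 := by rw [hL]; field_simp
  set θ := Real.exp (-(L * S0)) with hθ
  have hθ0 : 0 < θ := Real.exp_pos _
  obtain ⟨h0, hh0, hcons⟩ := u_consist hQ _ hgsm hK hKQ (η := θ / (2 * R ^ 2)) (by positivity)
  refine ⟨δ0, hδ00, fun x hx => hlow (ε, x) ⟨⟨le_rfl, hεt.le⟩, hx⟩, ?_⟩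
  obtain ⟨n0, hn0⟩ := exists_nat_gt (R / h0)
  refine ⟨n0, fun n hn hn1 δ S w hδ hδδ hSS hw hw0 => ?_⟩
  have hn' : (0:ℝ) < n := by exact_mod_cast hn1
  have hn1' : (1:ℝ) ≤ n := by exact_mod_cast hn1
  have hnle : R / n ≤ h0 := by
    rw [div_le_iff₀ hn']
    rw [div_lt_iff₀ hh0] at hn0
    have : (n0:ℝ) ≤ n := by exact_mod_cast hn
    nlinarith
  set x : (Fin d → ℤ) → EuclideanSpace ℝ (Fin d) := fun k => pt x₀ (R / n) k with hx
  set f : ℝ → ℝ := fun s => 1 + θ * Real.exp (L * s) with hf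
  set B : Set (Fin d → ℤ) := {k | nsq k ≤ 9 * (n:ℝ) ^ 2} with hB
  have hxB : ∀ k ∈ B, x k ∈ closedBall x₀ (3 * R) := fun k hk =>
    pt_mem x₀ hR hn1 k (by norm_num) (by have : nsq k ≤ 9 * (n:ℝ) ^ 2 := hk; linarith)
  have hAB' : ∀ k ∈ Aset d n, k ∈ B := by
    intro k hk
    rw [mem_Aset] at hk
    have : 0 ≤ (n:ℝ) ^ 2 := by positivity
    change nsq k ≤ 9 * (n:ℝ) ^ 2
    linarith
  have hAB : ∀ k ∈ Aset d n, ∀ i, k + Pi.single i 1 ∈ B ∧ k - Pi.single i 1 ∈ B := by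
    intro k hk i
    rw [mem_Aset] at hk
    have hki : ((k i : ℤ) : ℝ) ^ 2 ≤ nsq k :=
      Finset.single_le_sum (f := fun i => ((k i : ℤ) : ℝ) ^ 2) (fun _ _ => sq_nonneg _) (Finset.mem_univ i)
    have hki2 : ((k i : ℤ) : ℝ) ^ 2 < (2 * n) ^ 2 := by linarith
    have hki3 := abs_lt_of_sq_lt_sq' hki2 (by positivity)
    have hs := nsq_shift k i
    constructor
    · change nsq _ ≤ 9 * (n:ℝ) ^ 2
      rw [hs.1]; nlinarith [hki3.1, hki3.2]
    · change nsq _ ≤ 9 * (n:ℝ) ^ 2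
      rw [hs.2]; nlinarith [hki3.1, hki3.2]
  have htime : ∀ s ∈ Icc 0 S0, ε + R ^ 2 * s ∈ Icc ε t := by
    rintro s ⟨h1, h2⟩
    have : R ^ 2 * s ≤ t - ε := by
      rw [hS0, le_div_iff₀ (by positivity)] at h2; linarith
    have : 0 ≤ R ^ 2 * s := by positivity
    exact ⟨by linarith, by linarith⟩
  have hpK : ∀ k ∈ B, ∀ s ∈ Icc 0 S0, (ε + R ^ 2 * s, x k) ∈ K := fun k hk s hs => ⟨htime s hs, hxB k hk⟩
  have hf1 : ∀ s, 1 ≤ f s := fun s => by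
    have : 0 < θ * Real.exp (L * s) := by positivity
    simp only [hf]; linarith
  have hf2 : ∀ s ∈ Icc 0 S0, f s ≤ 2 := by
    intro s hs
    have : Real.exp (L * s) ≤ Real.exp (L * S0) := Real.exp_le_exp.2 (mul_le_mul_of_nonneg_left hs.2 hL0.le)
    have h2 : θ * Real.exp (L * s) ≤ θ * Real.exp (L * S0) := by gcongr
    have h3 : θ * Real.exp (L * S0) = 1 := by rw [hθ, ← Real.exp_add]; simp
    simp only [hf]; linarith
  have hfd : ∀ s, HasDerivAt f (θ * (Real.exp (L * s) * (L * 1))) s := fun s =>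
    ((((hasDerivAt_id s).const_mul L).exp).const_mul θ).const_add 1
  set z : ℝ → (Fin d → ℤ) → ℝ := fun s k => u (ε + R ^ 2 * s) (x k) with hz
  set z' : ℝ → (Fin d → ℤ) → ℝ := fun s k => θ * (Real.exp (L * s) * (L * 1)) * z s k + f s * (ut (ε + R ^ 2 * s, x k) * (R ^ 2 * 1)) with hz'
  have hzd : ∀ k ∈ B, ∀ s ∈ Icc 0 S0, HasDerivAt (fun s => f s * z s k) (z' s k) s := by
    intro k hk s hs
    have h1 : HasDerivAt (fun s : ℝ => ε + R ^ 2 * s) (R ^ 2 * 1) s := ((hasDerivAt_id s).const_mul (R ^ 2)).const_add ε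
    have h2 := dut _ (hKQ (hpK k hk s hs))
    have h3 : HasDerivAt (fun s => z s k) (ut (ε + R ^ 2 * s, x k) * (R ^ 2 * 1)) s :=
      HasDerivAt.comp (h := fun s : ℝ => ε + R ^ 2 * s) s h2 h1
    exact (hfd s).mul h3
  have hzlow : ∀ k ∈ B, ∀ s ∈ Icc 0 S0, δ0 ≤ z s k := fun k hk s hs => hlow _ (hpK k hk s hs)
  have hzlow2 : ∀ k ∈ B, ∀ s ∈ Icc 0 S0, z s k ≤ f s * z s k := fun k hk s hs =>
    le_mul_of_one_le_left (hδ00.le.trans (hzlow k hk s hs)) (hf1 s)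
  have hsub' : ∀ s ∈ Ioo 0 S0, s ∈ Icc 0 S0 := fun s hs => Ioo_subset_Icc_self hs
  have hsubS : ∀ s ∈ Icc 0 S0, s ∈ Icc 0 S := fun s hs => ⟨hs.1, hs.2.trans hSS⟩
  have hkey : ∀ k ∈ Aset d n, ∀ s ∈ Ioo 0 S0, (n:ℝ) ^ 2 * lap (fun j => phi2 m δ (f s * z s j)) k ≤ z' s k := by
    intro k hk s hs
    have hs' := hsub' s hs
    have hfs := hf1 s
    have hfs2 := hf2 s hs'
    have hphi : ∀ j ∈ B, phi2 m δ (f s * z s j) = f s ^ m * z s j ^ m := by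
      intro j hj
      have h1 := hzlow j hj s hs'
      rw [phi2_eq (hδδ.trans (h1.trans (hzlow2 j hj s hs'))), Real.mul_rpow (by linarith) (hδ00.le.trans h1)]
    have hlap : lap (fun j => phi2 m δ (f s * z s j)) k = f s ^ m * lap (fun j => z s j ^ m) k := by
      rw [← lap_mul]
      unfold lap
      refine Finset.sum_congr rfl fun i _ => ?_
      beta_reduce
      rw [hphi _ (hAB k hk i).1, hphi _ (hAB k hk i).2, hphi _ (hAB' k hk)]
    have hc := hcons (R / n) (by positivity) hnle _ (hpK k (hAB' k hk) s hs')
    have hlap2 : lap (fun j => z s j ^ m) k = ∑ i : Fin d, (u (ε + R ^ 2 * s) (x k + (R / n : ℝ) • EuclideanSpace.single i (1:ℝ)) ^ m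
        + u (ε + R ^ 2 * s) (x k - (R / n : ℝ) • EuclideanSpace.single i (1:ℝ)) ^ m - 2 * u (ε + R ^ 2 * s) (x k) ^ m) := by
      unfold lap
      simp only [hz, hx, pt_add, pt_sub]
    have hul := hutl _ (hKQ (hpK k (hAB' k hk) s hs'))
    dsimp only at hc hul
    rw [← hlap2, ← hul] at hc
    have hc2 := (abs_le.1 hc).2
    have hut2 := (abs_le.1 ((Real.norm_eq_abs _).symm.le.trans (hK1 _ (hpK k (hAB' k hk) s hs')))).1
    set Sg := lap (fun j => z s j ^ m) k
    set V := ut (ε + R ^ 2 * s, x k)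
    have hnS : (n:ℝ) ^ 2 * Sg ≤ R ^ 2 * V + θ / 2 := by
      have h1 : Sg ≤ (R / n) ^ 2 * V + θ / (2 * R ^ 2) * (R / n) ^ 2 := by linarith
      have h2 := mul_le_mul_of_nonneg_left h1 (sq_nonneg (n:ℝ))
      refine h2.trans (le_of_eq ?_)
      field_simp
    have hfm1 : 1 ≤ f s ^ m := Real.one_le_rpow hfs hm0.le
    have hfm2 : f s ^ m ≤ f s := by
      calc f s ^ m ≤ f s ^ (1:ℝ) := Real.rpow_le_rpow_of_exponent_le hfs hm1.le
        _ = f s := Real.rpow_one _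
    have h3 : f s ^ m * ((n:ℝ) ^ 2 * Sg) ≤ f s ^ m * (R ^ 2 * V + θ / 2) := mul_le_mul_of_nonneg_left hnS (by linarith)
    have h4 : (f s - f s ^ m) * (-(R ^ 2 * K1)) ≤ (f s - f s ^ m) * (R ^ 2 * V) := by
      refine mul_le_mul_of_nonneg_left ?_ (by linarith)
      have := mul_le_mul_of_nonneg_left hut2 (sq_nonneg R)
      linarith
    have hRK : 0 ≤ R ^ 2 * K1 := by positivity
    set e := θ * Real.exp (L * s) with he
    have hfe : f s = 1 + e := rfl
    have heθ : θ ≤ e := by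
      rw [he]
      refine le_mul_of_one_le_right hθ0.le (Real.one_le_exp ?_)
      have := hs.1
      positivity
    have h5 : (f s - f s ^ m) * (R ^ 2 * K1) ≤ e * (R ^ 2 * K1) := mul_le_mul_of_nonneg_right (by linarith) hRK
    have h6 : f s ^ m * (θ / 2) ≤ 2 * (θ / 2) := mul_le_mul_of_nonneg_right (by linarith) (by linarith)
    have h7 : e * (L * δ0) ≤ e * (L * z s k) := by
      have := hzlow k (hAB' k hk) s hs'
      have he0 : 0 ≤ e := by linarith
      gcongr
    rw [hLδ] at h7
    have h8 : z' s k = e * (L * z s k) + f s * (R ^ 2 * V) := by rw [hz', he]; ring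
    rw [hlap, h8]
    nlinarith
  have := comparison (Aset d n) B hAB ((n:ℝ) ^ 2) S0 (m * δ ^ (m - 1)) (by positivity) (phi2 m δ) (phi2_mono hm0 hδ) (by positivity)
    (phi2_lip hm0 hm1 hδ) w (fun s k => f s * z s k) (fun s k => (n:ℝ) ^ 2 * lap (fun j => w s j ^ m) k) z'
    (fun k _ => (hw.cont k).mono (fun s hs => hsubS s hs))
    (fun k hk => fun s hs => (hzd k (hAB' k hk) s hs).continuousAt.continuousWithinAt)
    (fun k hk s hs => hw.der k hk s ⟨hs.1, hs.2.trans_le hSS⟩)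
    (fun k hk s hs => hzd k (hAB' k hk) s (hsub' s hs))
    (fun k hk s hs => by rw [hw.phi (hsubS s (hsub' s hs))])
    hkey ?_ ?_
  · intro k hk
    have h1 := this k hk S0 ⟨hS00.le, le_rfl⟩
    have h2 : z S0 k = u t (x k) := by
      simp only [hz]
      congr 1
      rw [hS0]; field_simp; ring
    have h3 := hf2 S0 ⟨hS00.le, le_rfl⟩
    have h4 := hzlow k (hAB' k hk) S0 ⟨hS00.le, le_rfl⟩
    rw [h2] at h1 h4
    exact h1.trans (mul_le_mul_of_nonneg_right h3 (hδ00.le.trans h4))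
  · intro k hk
    refine (hw0 k hk).trans ?_
    have h0m : (0:ℝ) ∈ Icc 0 S0 := ⟨le_rfl, hS00.le⟩
    have h1 := hzlow2 k (hAB' k hk) 0 h0m
    have h2 : z 0 k = u ε (x k) := by simp [hz]
    rw [h2] at h1
    rw [h2]
    exact h1
  · intro k hk hkA s hs
    rw [hw.out k hkA]
    exact hδδ.trans ((hzlow k hk s (hsub' s hs)).trans (hzlow2 k hk s (hsub' s hs)))

open scoped Pointwise in
lemma riem {d : ℕ} (F : EuclideanSpace ℝ (Fin d) → ℝ) (hF : Continuous F) {r : ℝ} (hr : 0 < r) (hr2 : r ≤ 2) :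
    Filter.Tendsto (fun n : ℕ => ((n:ℝ) ^ d)⁻¹ * ∑ k ∈ (Aset d n).filter (fun k => nsq k < r ^ 2 * (n:ℝ) ^ 2), F (pt 0 (1 / n) k))
      Filter.atTop (nhds (∫ x in ball 0 r, F x)) := by
  classical
  set τ : (Fin d → ℝ) → EuclideanSpace ℝ (Fin d) := fun x => WithLp.toLp 2 x with hτ
  set s : Set (Fin d → ℝ) := τ ⁻¹' ball 0 r with hs
  have hτc : Continuous τ := PiLp.continuous_toLp 2 _
  have hopen : IsOpen s := isOpen_ball.preimage hτc
  have hconv : Convex ℝ s := by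
    have := (convex_ball (0 : EuclideanSpace ℝ (Fin d)) r).linear_preimage ((WithLp.linearEquiv 2 ℝ (Fin d → ℝ)).symm.toLinearMap)
    exact this
  have hbdd : Bornology.IsBounded s := by
    refine (isBounded_iff_subset_closedBall 0).2 ⟨r, fun x hx => ?_⟩
    have hx' : ‖τ x‖ < r := by
      have h2 : τ x ∈ ball 0 r := hx
      rwa [mem_ball, dist_zero_right] at h2
    rw [mem_closedBall, dist_zero_right, pi_norm_le_iff_of_nonneg hr.le]
    intro i
    exact (PiLp.norm_apply_le (τ x) i).trans hx'.le
  have hfr : volume (frontier s) = 0 := hconv.addHaar_frontier volume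
  have key := tendsto_tsum_div_pow_atTop_integral s (fun x => F (τ x)) (hF.comp hτc) hbdd hopen.measurableSet hfr
  have hint : ∫ x in s, F (τ x) = ∫ x in ball 0 r, F x := by
    have := (PiLp.volume_preserving_toLp (Fin d)).setIntegral_preimage_emb (MeasurableEquiv.toLp 2 (Fin d → ℝ)).measurableEmbedding F (ball 0 r)
    exact this
  rw [hint] at key
  refine key.congr' ?_
  filter_upwards [Filter.eventually_ge_atTop 1] with n hn
  have hn' : (0:ℝ) < n := by exact_mod_cast hn
  have : NeZero n := ⟨by omega⟩
  set ψ : (Fin d → ℤ) → (Fin d → ℝ) := fun k i => (k i : ℝ) / n with hψ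
  have hinj : Function.Injective ψ := by
    intro k l h
    funext i
    have := congrFun h i
    simp only [hψ] at this
    rw [div_left_inj' hn'.ne'] at this
    exact_mod_cast this
  have hpt : ∀ k, τ (ψ k) = pt 0 (1 / n) k := by
    intro k
    ext i
    simp [hτ, hψ, pt, div_eq_inv_mul]
  have hmem : ∀ k, ψ k ∈ s ↔ nsq k < r ^ 2 * (n:ℝ) ^ 2 := by
    intro k
    change τ (ψ k) ∈ ball 0 r ↔ _
    rw [hpt, mem_ball, dist_zero_right]
    have h1 := pt_norm (0 : EuclideanSpace ℝ (Fin d)) (1 / n) k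
    rw [sub_zero] at h1
    rw [← sq_lt_sq₀ (norm_nonneg _) hr.le, h1]
    rw [div_pow, one_pow, one_div, inv_mul_lt_iff₀ (by positivity), mul_comm]
  have hset : s ∩ (((n:ℝ)⁻¹ • (Submodule.span ℤ (Set.range (Pi.basisFun ℝ (Fin d)))) : Submodule ℤ (Fin d → ℝ)) : Set (Fin d → ℝ)) =
      ((((Aset d n).filter (fun k => nsq k < r ^ 2 * (n:ℝ) ^ 2)).image ψ : Finset (Fin d → ℝ)) : Set (Fin d → ℝ)) := by
    ext x
    simp only [Finset.coe_image, Finset.coe_filter, mem_inter_iff, mem_image, mem_ofPred_eq]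
    have hL : x ∈ ((n:ℝ)⁻¹ • (Submodule.span ℤ (Set.range (Pi.basisFun ℝ (Fin d)))) : Submodule ℤ (Fin d → ℝ)) ↔ ∃ k, ψ k = x := by
      rw [BoxIntegral.unitPartition.mem_smul_span_iff]
      constructor
      · intro h
        choose k hk using h
        refine ⟨k, funext fun i => ?_⟩
        have := hk i
        simp only [hψ]
        rw [div_eq_iff hn'.ne', mul_comm]
        simpa using this
      · rintro ⟨k, rfl⟩ i
        refine ⟨k i, ?_⟩
        simp only [hψ]
        simp
        field_simp
    rw [SetLike.mem_coe]
    rw [hL]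
    constructor
    · rintro ⟨hx, k, rfl⟩
      have h1 := (hmem k).1 hx
      refine ⟨k, ⟨mem_Aset.2 (h1.trans_le ?_), h1⟩, rfl⟩
      gcongr
      nlinarith
    · rintro ⟨k, ⟨_, h1⟩, rfl⟩
      exact ⟨(hmem k).2 h1, k, rfl⟩
  have hsum : ∑' x : ↑(s ∩ (((n:ℝ)⁻¹ • (Submodule.span ℤ (Set.range (Pi.basisFun ℝ (Fin d)))) : Submodule ℤ (Fin d → ℝ)) : Set (Fin d → ℝ))), F (τ x) =
      ∑ k ∈ (Aset d n).filter (fun k => nsq k < r ^ 2 * (n:ℝ) ^ 2), F (pt 0 (1 / n) k) := by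
    rw [hset]
    rw [Finset.tsum_subtype' _ (fun x => F (τ x)), Finset.sum_image (fun a _ b _ h => hinj h)]
    simp only [hpt]
  change (∑' x : ↑(s ∩ (((n:ℝ)⁻¹ • (Submodule.span ℤ (Set.range (Pi.basisFun ℝ (Fin d)))) : Submodule ℤ (Fin d → ℝ)) : Set (Fin d → ℝ))), F (τ x)) / _ = _
  rw [hsum, Fintype.card_fin, div_eq_inv_mul]

lemma kap_scale {d : ℕ} {ρ : ℝ} (hρ : 0 < ρ) (x : EuclideanSpace ℝ (Fin d)) :
    kap d ρ x = (ρ ^ d)⁻¹ * kap d 1 (ρ⁻¹ • x) := by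
  unfold kap
  have h1 : ‖ρ⁻¹ • x‖ ^ 2 + 1 ^ 2 = (‖x‖ ^ 2 + ρ ^ 2) / ρ ^ 2 := by
    rw [norm_smul, Real.norm_eq_abs, abs_of_pos (by positivity)]
    field_simp
  rw [h1, Real.div_rpow (by positivity) (by positivity)]
  have h2 : (ρ ^ 2) ^ (-((d + 2 : ℝ) / 2)) = (ρ ^ d)⁻¹ * (ρ ^ 2)⁻¹ := by
    rw [← Real.rpow_natCast ρ 2, ← Real.rpow_mul hρ.le, ← Real.rpow_natCast ρ d, ← Real.rpow_neg hρ.le, ← Real.rpow_neg hρ.le,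
      ← Real.rpow_add hρ]
    congr 1
    push_cast
    ring
  rw [h2]
  field_simp

lemma kap_cont {d : ℕ} {ρ : ℝ} (hρ : 0 < ρ) : Continuous (kap d ρ) := by
  unfold kap
  refine continuous_const.mul (continuous_const.mul ?_)
  refine Continuous.rpow_const (by fun_prop) (fun x => Or.inl ?_)
  positivity

lemma kap_integrable {d : ℕ} : Integrable (kap d 1) := by
  have h := integrable_rpow_neg_one_add_norm_sq (E := EuclideanSpace ℝ (Fin d)) (μ := volume) (r := d + 2) (by simp)
  have h2 := h.const_mul ((d:ℝ) * (d - 2))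
  refine h2.congr (Filter.Eventually.of_forall fun x => ?_)
  simp only [kap]
  rw [one_pow, one_mul, add_comm (1:ℝ), neg_div]

lemma kap_sum {d : ℕ} (hd : 3 ≤ d) : ∃ K > 0, ∀ ρ : ℝ, 0 < ρ → ∀ᶠ n : ℕ in Filter.atTop,
    ((n:ℝ) ^ d)⁻¹ * ∑ k ∈ Aset d n, kap d ρ (pt 0 (1 / n) k) ≤ K := by
  have hI0 : 0 ≤ ∫ x, kap d 1 x := integral_nonneg fun x => kap_nonneg hd x
  refine ⟨(∫ x, kap d 1 x) + 1, by positivity, fun ρ hρ => ?_⟩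
  have hint : Integrable (kap d ρ) := by
    have h1 : Integrable (fun x => kap d 1 (ρ⁻¹ • x)) := (integrable_comp_smul_iff volume (kap d 1) (inv_ne_zero hρ.ne')).2 kap_integrable
    refine (h1.const_mul ((ρ ^ d)⁻¹)).congr (Filter.Eventually.of_forall fun x => ?_)
    simp only [kap_scale hρ x]
  have hI : ∫ x, kap d ρ x = ∫ x, kap d 1 x := by
    rw [show kap d ρ = fun x => (ρ ^ d)⁻¹ * kap d 1 (ρ⁻¹ • x) from funext (kap_scale hρ), integral_const_mul,
      Measure.integral_comp_inv_smul_of_nonneg volume (kap d 1) hρ.le, smul_eq_mul, finrank_euclideanSpace, Fintype.card_fin]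
    field_simp
  have hle : ∫ x in ball 0 2, kap d ρ x ≤ ∫ x, kap d 1 x := by
    rw [← hI]
    exact setIntegral_le_integral hint (Filter.Eventually.of_forall fun x => kap_nonneg hd x)
  have ht := riem (kap d ρ) (kap_cont hρ) (r := 2) (by norm_num) le_rfl
  have := ht.eventually_le_const (u := (∫ x, kap d 1 x) + 1) (by linarith)
  filter_upwards [this] with n hn
  rwa [Finset.filter_true_of_mem] at hn
  intro k hk
  have := mem_Aset.1 hk
  linarith

lemma kern_bound {d : ℕ} (hd : 3 ≤ d) : ∃ K > 0, ∀ r ξ B : ℝ, 0 < r → 0 < ξ → 0 ≤ B →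
    ∃ ρ η : ℝ, 0 < ρ ∧ ρ ≤ 1 ∧ 0 < η ∧ ∀ᶠ n : ℕ in Filter.atTop, ∀ (b : (Fin d → ℤ) → ℝ) (β : ℝ), 0 ≤ β →
      (∀ k ∈ Aset d n, 0 ≤ b k ∧ b k ≤ B) → (∀ k ∈ Aset d n, nsq k < r ^ 2 * (n:ℝ) ^ 2 → b k ≤ β) →
      ((n:ℝ) ^ d)⁻¹ * ∑ k ∈ Aset d n, (kap d ρ (pt 0 (1 / n) k) + η) * b k ≤ K * β + ξ := by
  obtain ⟨K, hK, hKs⟩ := kap_sum hd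
  have hd3 : (3:ℝ) ≤ d := by exact_mod_cast hd
  refine ⟨K, hK, fun r ξ B hr hξ hB => ?_⟩
  set c : ℝ := d * (d - 2) * (r ^ 2) ^ (-((d + 2 : ℝ) / 2)) with hc
  have hc0 : 0 ≤ c := by
    have : (0:ℝ) ≤ d - 2 := by linarith
    positivity
  set D : ℝ := (c + 1) * (B + 1) * 5 ^ d with hD
  have hD0 : 0 < D := by positivity
  set ρ := min 1 (ξ / D) with hρdef
  have hρ : 0 < ρ := lt_min one_pos (by positivity)
  have hρ1 : ρ ≤ 1 := min_le_left _ _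
  have hρD : ρ * D ≤ ξ := by
    have : ρ ≤ ξ / D := min_le_right _ _
    rwa [le_div_iff₀ hD0] at this
  refine ⟨ρ, ρ, hρ, hρ1, hρ, ?_⟩
  filter_upwards [hKs ρ hρ, Filter.eventually_ge_atTop 1] with n hn hn1 b β hβ hb hbβ
  have hn' : (0:ℝ) < n := by exact_mod_cast hn1
  have hfar : ∀ k : Fin d → ℤ, r ^ 2 * (n:ℝ) ^ 2 ≤ nsq k → kap d ρ (pt 0 (1 / n) k) ≤ c * ρ := by
    intro k hk
    unfold kap
    have h1 := pt_norm (0 : EuclideanSpace ℝ (Fin d)) (1 / n) k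
    rw [sub_zero] at h1
    rw [h1]
    have h2 : r ^ 2 ≤ (1 / (n:ℝ)) ^ 2 * nsq k := by
      rw [div_pow, one_pow, one_div, inv_mul_eq_div, le_div_iff₀ (by positivity)]
      exact hk
    have h3 : ((1 / (n:ℝ)) ^ 2 * nsq k + ρ ^ 2) ^ (-((d + 2 : ℝ) / 2)) ≤ (r ^ 2) ^ (-((d + 2 : ℝ) / 2)) := by
      refine Real.rpow_le_rpow_of_nonpos (by positivity) ?_ (by linarith)
      nlinarith [sq_nonneg ρ]
    have h4 : ρ ^ 2 ≤ ρ := by nlinarith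
    have h5 : (0:ℝ) ≤ d * (d - 2) := by
      have : (0:ℝ) ≤ d - 2 := by linarith
      positivity
    have h6 : ρ ^ 2 * ((1 / (n:ℝ)) ^ 2 * nsq k + ρ ^ 2) ^ (-((d + 2 : ℝ) / 2)) ≤ ρ * (r ^ 2) ^ (-((d + 2 : ℝ) / 2)) := by
      have : 0 ≤ nsq k := nsq_nonneg k
      exact mul_le_mul h4 h3 (by positivity) hρ.le
    calc _ ≤ (d * (d - 2) : ℝ) * (ρ * (r ^ 2) ^ (-((d + 2 : ℝ) / 2))) := mul_le_mul_of_nonneg_left h6 h5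
      _ = c * ρ := by rw [hc]; ring
  have hterm : ∀ k ∈ Aset d n, (kap d ρ (pt 0 (1 / n) k) + ρ) * b k ≤ kap d ρ (pt 0 (1 / n) k) * β + (c + 1) * ρ * B := by
    intro k hk
    obtain ⟨b0, b1⟩ := hb k hk
    have hk0 := kap_nonneg hd (ρ := ρ) (pt 0 (1 / n) k)
    have e1 : ρ * b k ≤ ρ * B := mul_le_mul_of_nonneg_left b1 hρ.le
    have e4 : 0 ≤ c * ρ * B := by positivity
    rcases lt_or_ge (nsq k) (r ^ 2 * (n:ℝ) ^ 2) with h | h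
    · have e2 := mul_le_mul_of_nonneg_left (hbβ k hk h) hk0
      nlinarith
    · have e2 := mul_le_mul (hfar k h) b1 b0 (by positivity)
      have e3 := mul_nonneg hk0 hβ
      nlinarith
  have hcard := card_Aset d n hn1
  calc _ ≤ ((n:ℝ) ^ d)⁻¹ * ∑ k ∈ Aset d n, (kap d ρ (pt 0 (1 / n) k) * β + (c + 1) * ρ * B) :=
        mul_le_mul_of_nonneg_left (Finset.sum_le_sum hterm) (by positivity)
    _ = (((n:ℝ) ^ d)⁻¹ * ∑ k ∈ Aset d n, kap d ρ (pt 0 (1 / n) k)) * β + (((n:ℝ) ^ d)⁻¹ * (Aset d n).card) * ((c + 1) * ρ * B) := by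
        rw [Finset.sum_add_distrib, ← Finset.sum_mul, Finset.sum_const, nsmul_eq_mul]; ring
    _ ≤ K * β + 5 ^ d * ((c + 1) * ρ * B) :=
        add_le_add (mul_le_mul_of_nonneg_right hn hβ) (mul_le_mul_of_nonneg_right hcard (by positivity))
    _ ≤ K * β + 5 ^ d * ((c + 1) * ρ * (B + 1)) := by
        gcongr
        linarith
    _ = K * β + ρ * D := by rw [hD]; ring
    _ ≤ K * β + ξ := by linarith

set_option maxHeartbeats 1000000 in
theorem stage1 {d : ℕ} (hd : 3 ≤ d) {m : ℝ} (hm0 : 0 < m) (hmc : m < ((d:ℝ) - 2) / d) :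
    ∃ C > 0, ∃ K > 0, ∀ {Ω : Set (EuclideanSpace ℝ (Fin d))} (_ : IsOpen Ω) {T : ℝ}
    {u : ℝ → EuclideanSpace ℝ (Fin d) → ℝ} (_ : IsFDESol m (Ioo 0 T ×ˢ Ω) u) {x₀ : EuclideanSpace ℝ (Fin d)} {R : ℝ} (_ : 0 < R)
    (_ : closedBall x₀ (3 * R) ⊆ Ω) {ε t : ℝ} (_ : 0 < ε) (_ : ε < t) (_ : t < T)
    (F : EuclideanSpace ℝ (Fin d) → ℝ) (_ : Continuous F) (_ : ∀ x, 0 ≤ F x) (_ : ∀ x, ‖x‖ ≤ 1 → F x = u ε (x₀ + R • x))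
    (ξ : ℝ) (_ : 0 < ξ),
    (∫ x in ball 0 1, F x) - ξ ≤ C * ((t - ε) / R ^ 2) ^ (1 / (1 - m)) + ξ +
      C * ((∫ x in ball 0 1, F x ^ (d * (1 - m) / 2)) + ξ) ^ (2 / (d * (1 - m))) * ((t - ε) / R ^ 2) ^ (-(m / (1 - m))) *
        (K * ((2 * u t x₀) ^ m + ξ) + ξ) := by
  have hd0 : (0:ℝ) < d := by positivity
  have hd3 : (3:ℝ) ≤ d := by exact_mod_cast hd
  have hm1 : m < 1 := hmc.trans (by rw [div_lt_one hd0]; linarith)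
  have hm : 0 < 1 - m := by linarith
  obtain ⟨C, hC, hdisc⟩ := discrete hd hm0 hmc (gl d) (gl_pos hd)
  obtain ⟨K, hK, hker⟩ := kern_bound hd
  refine ⟨C, hC, K, hK, ?_⟩
  intro Ω hΩ T u hu x₀ R hR hsub ε t hε hεt htT F hF hF0 hFu ξ hξ
  set p : ℝ := d * (1 - m) / 2 with hp
  have hp0 : 0 < p := by positivity
  set s := (t - ε) / R ^ 2 with hs
  have hs0 : 0 < s := by
    have : 0 < t - ε := by linarith
    positivity
  have ht0 : 0 < t := hε.trans hεt
  have hut : ContinuousOn (fun x => u t x) (closedBall x₀ (3 * R)) := by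
    have h1 := hu.2.1.continuousOn
    exact h1.comp (f := fun x => (t, x)) (by fun_prop) (fun x hx => ⟨⟨ht0, htT⟩, hsub hx⟩)
  set b : EuclideanSpace ℝ (Fin d) → ℝ := fun x => (2 * u t x) ^ m with hb
  have hbc : ContinuousOn b (closedBall x₀ (3 * R)) :=
    (continuousOn_const.mul hut).rpow_const (fun x _ => Or.inr hm0.le)
  obtain ⟨B, hB⟩ := (isCompact_closedBall x₀ (3 * R)).exists_bound_of_continuousOn hbc
  have hupos : ∀ x ∈ closedBall x₀ (3 * R), 0 < u t x := fun x hx => hu.1 (t, x) ⟨⟨ht0, htT⟩, hsub hx⟩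
  have hx₀ : x₀ ∈ closedBall x₀ (3 * R) := mem_closedBall_self (by positivity)
  have hB0 : 0 ≤ B := (norm_nonneg _).trans (hB x₀ hx₀)
  obtain ⟨r', hr', hrb⟩ := Metric.continuousOn_iff.1 hbc x₀ hx₀ ξ hξ
  set r := r' / R with hr
  have hr0 : 0 < r := by positivity
  obtain ⟨ρ, η, hρ, hρ1, hη, hkn⟩ := hker r ξ B hr0 hξ hB0
  obtain ⟨n1, hpot⟩ := potential hd hρ hρ1 hη
  obtain ⟨δ0, hδ0, hδu, n2, hcmp⟩ := cmp_u hm0 hm1 hΩ hu hR hsub hε hεt htT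
  set gM : ℝ := (ρ ^ 2) ^ (-((d - 2 : ℝ) / 2)) with hgM
  obtain ⟨δ, hδ, hδδ, hδ1, hδ2⟩ : ∃ δ > 0, δ ≤ δ0 ∧ C * gM * δ ≤ ξ ∧ C * δ ^ p ≤ ξ / 2 := by
    have e1 : Filter.Tendsto (fun δ : ℝ => C * gM * δ) (nhdsWithin 0 (Ioi 0)) (nhds 0) := by
      have : Continuous (fun δ : ℝ => C * gM * δ) := by fun_prop
      have := this.tendsto 0
      rw [mul_zero] at this
      exact this.mono_left nhdsWithin_le_nhds
    have e2 : Filter.Tendsto (fun δ : ℝ => C * δ ^ p) (nhdsWithin 0 (Ioi 0)) (nhds 0) := by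
      have : Continuous (fun δ : ℝ => C * δ ^ p) := continuous_const.mul (Real.continuous_rpow_const hp0.le)
      have := this.tendsto 0
      rw [Real.zero_rpow hp0.ne', mul_zero] at this
      exact this.mono_left nhdsWithin_le_nhds
    have e3 : ∀ᶠ δ : ℝ in nhdsWithin 0 (Ioi 0), 0 < δ := self_mem_nhdsWithin
    have e4 : ∀ᶠ δ : ℝ in nhdsWithin 0 (Ioi 0), δ ≤ δ0 := nhdsWithin_le_nhds (Iic_mem_nhds hδ0)
    obtain ⟨δ, h⟩ := (e3.and (e4.and ((e1.eventually_le_const hξ).and (e2.eventually_le_const (half_pos hξ))))).exists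
    exact ⟨δ, h.1, h.2.1, h.2.2.1, h.2.2.2⟩
  have hFp : Continuous (fun x => F x ^ p) := hF.rpow_const (fun x => Or.inr hp0.le)
  set I := ∫ x in ball 0 1, F x with hI
  set J := ∫ x in ball 0 1, F x ^ p with hJ
  have hJ0 : 0 ≤ J := integral_nonneg fun x => Real.rpow_nonneg (hF0 x) _
  have hR1 := (riem F hF one_pos one_le_two).eventually_const_le (u := I - ξ) (by linarith)
  have hR2 := (riem (fun x => F x ^ p) hFp one_pos one_le_two).eventually_le_const (u := J + ξ / 2) (by linarith)
  obtain ⟨n, hn1, hn2, hnn1, hnn2, hkn, hn⟩ := (hR1.and (hR2.and ((Filter.eventually_ge_atTop n1).and ((Filter.eventually_ge_atTop n2).and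
    (hkn.and (Filter.eventually_ge_atTop 1)))))).exists
  have hn' : (0:ℝ) < n := by exact_mod_cast hn
  obtain ⟨G, G1, G2, G3, G4, G5, G6⟩ := hpot n hnn1 hn
  set g0 : (Fin d → ℤ) → ℝ := fun k => if nsq k < 1 ^ 2 * (n:ℝ) ^ 2 then F (pt 0 (1 / n) k) else 0 with hg0
  have hg00 : ∀ k, 0 ≤ g0 k := by
    intro k
    simp only [hg0]
    split_ifs
    · exact hF0 _
    · exact le_rfl
  have hsum1 : ∑ k ∈ Aset d n, g0 k = ∑ k ∈ (Aset d n).filter (fun k => nsq k < 1 ^ 2 * (n:ℝ) ^ 2), F (pt 0 (1 / n) k) := by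
    rw [Finset.sum_filter]
  have hsum2 : ∑ k ∈ Aset d n, g0 k ^ p = ∑ k ∈ (Aset d n).filter (fun k => nsq k < 1 ^ 2 * (n:ℝ) ^ 2), F (pt 0 (1 / n) k) ^ p := by
    rw [Finset.sum_filter]
    refine Finset.sum_congr rfl fun k _ => ?_
    simp only [hg0]
    split_ifs
    · rfl
    · exact Real.zero_rpow hp0.ne'
  set X := ((n:ℝ) ^ d)⁻¹ * ∑ k ∈ Aset d n, g0 k ^ p + C * δ ^ p with hX
  have hX0 : 0 ≤ X := by
    have : 0 ≤ ∑ k ∈ Aset d n, g0 k ^ p := Finset.sum_nonneg fun k _ => Real.rpow_nonneg (hg00 k) _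
    positivity
  have hXJ : X ≤ J + ξ := by
    rw [hX, hsum2]
    linarith
  set S := s + C * X ^ (2 / (d:ℝ)) + 1 with hS
  have hXd : 0 ≤ C * X ^ (2 / (d:ℝ)) := by positivity
  have hsS : s ≤ S := by linarith
  have hS0 : 0 < S := by linarith
  have hout : ∀ k : Fin d → ℤ, (n:ℝ) ^ 2 < nsq k → g0 k = 0 := by
    intro k hk
    simp only [hg0]
    rw [if_neg]
    linarith
  obtain ⟨w, w0, wout, wlow, wcont, wder⟩ := ode_exists (Aset d n) (c := (n:ℝ) ^ 2) (by positivity) hm0 hm1 hδ hS0.le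
    (fun k => max δ (g0 k)) (fun k => le_max_left _ _) (by
      intro k hk
      have h1 : 4 * (n:ℝ) ^ 2 ≤ nsq k := by
        by_contra h
        exact hk (mem_Aset.2 (not_le.1 h))
      have h2 : g0 k = 0 := hout k (by nlinarith [pow_pos hn' 2])
      change max δ (g0 k) = δ
      rw [h2, max_eq_left hδ.le])
  have hD : DSol (Aset d n) ((n:ℝ) ^ 2) m δ S w := ⟨wout, wlow, wcont, wder⟩
  have hw0 : ∀ k, w 0 k = max δ (g0 k) := fun k => by rw [w0]
  have hptmem : ∀ k ∈ Aset d n, pt x₀ (R / n) k ∈ closedBall x₀ (3 * R) := by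
    intro k hk
    refine pt_mem x₀ hR hn k (by norm_num) ?_
    have := mem_Aset.1 hk
    nlinarith [pow_pos hn' 2]
  have hptR : ∀ k : Fin d → ℤ, x₀ + R • pt 0 (1 / n) k = pt x₀ (R / n) k := by
    intro k
    unfold pt
    rw [zero_add, smul_smul, mul_one_div]
  have hle := hcmp n hnn2 hn δ S w hδ hδδ hsS hD (by
    intro k hk
    rw [hw0]
    refine max_le (hδδ.trans (hδu _ (hptmem k hk))) ?_
    simp only [hg0]
    split_ifs with h
    · rw [hFu, hptR]
      have h1 := pt_mem (0 : EuclideanSpace ℝ (Fin d)) one_pos hn k (zero_le_one) h.le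
      rw [mem_closedBall, dist_zero_right] at h1
      linarith
    · exact hδ0.le.trans (hδu _ (hptmem k hk)))
  have main := hdisc n hn δ S hδ hS0 w hD g0 hg00 hw0 hout G (fun k => kap d ρ (pt 0 (1 / n) k) + η) gM G1 G2 G3 G4
    (fun k => add_nonneg (kap_nonneg hd _) hη.le) G5 G6 s hs0 hsS (by linarith)
  have hkern := hkn (fun k => b (pt x₀ (R / n) k)) ((2 * u t x₀) ^ m + ξ)
    (add_nonneg (Real.rpow_nonneg (by linarith [hupos x₀ hx₀]) _) hξ.le) (by
      intro k hk
      have h1 := hupos _ (hptmem k hk)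
      exact ⟨Real.rpow_nonneg (by linarith) _, (le_abs_self _).trans (hB _ (hptmem k hk))⟩) (by
      intro k hk hk2
      have h1 : dist (pt x₀ (R / n) k) x₀ < r' := by
        rw [dist_eq_norm]
        refine lt_of_pow_lt_pow_left₀ 2 hr'.le ?_
        rw [pt_norm, div_pow, div_mul_eq_mul_div, div_lt_iff₀ (by positivity)]
        have : R ^ 2 * nsq k < R ^ 2 * (r ^ 2 * (n:ℝ) ^ 2) := mul_lt_mul_of_pos_left hk2 (by positivity)
        refine this.trans_eq ?_
        rw [hr]
        field_simp
      have h2 := hrb _ (hptmem k hk) h1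
      rw [Real.dist_eq] at h2
      have := (abs_lt.1 h2).2
      change b _ ≤ b x₀ + ξ
      linarith)
  have hQ : ((n:ℝ) ^ d)⁻¹ * ∑ k ∈ Aset d n, (kap d ρ (pt 0 (1 / n) k) + η) * w s k ^ m ≤ K * ((2 * u t x₀) ^ m + ξ) + ξ := by
    refine le_trans (mul_le_mul_of_nonneg_left (Finset.sum_le_sum fun k hk => ?_) (by positivity)) hkern
    refine mul_le_mul_of_nonneg_left ?_ (add_nonneg (kap_nonneg hd _) hη.le)
    exact Real.rpow_le_rpow (hδ.le.trans (wlow s ⟨hs0.le, hsS⟩ k)) (hle k hk) hm0.le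
  have hQ0 : 0 ≤ K * ((2 * u t x₀) ^ m + ξ) + ξ := by
    have : 0 ≤ (2 * u t x₀) ^ m := Real.rpow_nonneg (by linarith [hupos x₀ hx₀]) _
    positivity
  rw [← hsum1] at hn1
  refine hn1.trans (main.trans ?_)
  have hXa : X ^ (2 / (d * (1 - m))) ≤ (J + ξ) ^ (2 / (d * (1 - m))) := Real.rpow_le_rpow hX0 hXJ (by positivity)
  have e1 : C * X ^ (2 / (d * (1 - m))) * s ^ (-(m / (1 - m))) * (((n:ℝ) ^ d)⁻¹ * ∑ k ∈ Aset d n, (kap d ρ (pt 0 (1 / n) k) + η) * w s k ^ m)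
      ≤ C * (J + ξ) ^ (2 / (d * (1 - m))) * s ^ (-(m / (1 - m))) * (K * ((2 * u t x₀) ^ m + ξ) + ξ) := by
    have hJx : 0 ≤ J + ξ := by linarith
    refine (mul_le_mul_of_nonneg_left hQ (by positivity)).trans ?_
    refine mul_le_mul_of_nonneg_right (mul_le_mul_of_nonneg_right (mul_le_mul_of_nonneg_left hXa hC.le) (by positivity)) hQ0
  linarith

lemma ball_int {d : ℕ} (f : EuclideanSpace ℝ (Fin d) → ℝ) :
    ∫ x in ball 0 1, f x = ∫ x in closedBall 0 1, f x := by
  refine setIntegral_congr_set ?_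
  rw [← closure_ball (0 : EuclideanSpace ℝ (Fin d)) one_ne_zero]
  exact (closure_ae_eq_of_null_frontier ((convex_ball _ _).addHaar_frontier volume)).symm

lemma ball_resc {d : ℕ} (f : EuclideanSpace ℝ (Fin d) → ℝ) (x₀ : EuclideanSpace ℝ (Fin d)) {R : ℝ} (hR : 0 < R) :
    ∫ x in ball 0 1, f (x₀ + R • x) = (R ^ d)⁻¹ * ∫ x in ball x₀ R, f x := by
  rw [Measure.setIntegral_comp_smul_of_pos volume (fun y => f (x₀ + y)) _ hR, smul_unitBall_of_pos hR, finrank_euclideanSpace,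
    Fintype.card_fin, smul_eq_mul]
  congr 1
  have h := (measurePreserving_add_left volume x₀).setIntegral_preimage_emb (measurableEmbedding_addLeft x₀) f (ball x₀ R)
  rw [← h]
  congr 2
  ext y
  simp

theorem stage2 {d : ℕ} (hd : 3 ≤ d) {m : ℝ} (hm0 : 0 < m) (hmc : m < ((d:ℝ) - 2) / d) :
    ∃ C > 0, ∃ K > 0, ∀ {Ω : Set (EuclideanSpace ℝ (Fin d))} (_ : IsOpen Ω) {T : ℝ}
    {u : ℝ → EuclideanSpace ℝ (Fin d) → ℝ} (_ : IsFDESol m (Ioo 0 T ×ˢ Ω) u) {x₀ : EuclideanSpace ℝ (Fin d)} {R : ℝ} (_ : 0 < R)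
    (_ : closedBall x₀ (3 * R) ⊆ Ω) {ε t : ℝ} (_ : 0 < ε) (_ : ε < t) (_ : t < T)
    (F : EuclideanSpace ℝ (Fin d) → ℝ) (_ : Continuous F) (_ : ∀ x, 0 ≤ F x) (_ : ∀ x, ‖x‖ ≤ 1 → F x = u ε (x₀ + R • x)),
    (∫ x in ball 0 1, F x) ≤ C * ((t - ε) / R ^ 2) ^ (1 / (1 - m)) +
      C * (∫ x in ball 0 1, F x ^ (d * (1 - m) / 2)) ^ (2 / (d * (1 - m))) * ((t - ε) / R ^ 2) ^ (-(m / (1 - m))) *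
        (K * (2 * u t x₀) ^ m) := by
  have hd0 : (0:ℝ) < d := by positivity
  have hd3 : (3:ℝ) ≤ d := by exact_mod_cast hd
  have hm1 : m < 1 := hmc.trans (by rw [div_lt_one hd0]; linarith)
  have hm : 0 < 1 - m := by linarith
  obtain ⟨C, hC, K, hK, H⟩ := stage1 hd hm0 hmc
  refine ⟨C, hC, K, hK, ?_⟩
  intro Ω hΩ T u hu x₀ R hR hsub ε t hε hεt htT F hF hF0 hFu
  have H' := fun ξ hξ => H hΩ hu hR hsub hε hεt htT F hF hF0 hFu ξ hξ
  set I := ∫ x in ball 0 1, F x with hI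
  set J := ∫ x in ball 0 1, F x ^ (d * (1 - m) / 2) with hJ
  have ha : (0:ℝ) ≤ 2 / (d * (1 - m)) := by positivity
  have c1 : Continuous fun ξ : ℝ => I - ξ := by fun_prop
  have c2 : Continuous fun ξ : ℝ => C * ((t - ε) / R ^ 2) ^ (1 / (1 - m)) + ξ +
      C * (J + ξ) ^ (2 / (d * (1 - m))) * ((t - ε) / R ^ 2) ^ (-(m / (1 - m))) *
        (K * ((2 * u t x₀) ^ m + ξ) + ξ) := by
    have : Continuous fun ξ : ℝ => (J + ξ) ^ (2 / (d * (1 - m))) :=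
      (continuous_const.add continuous_id).rpow_const (fun _ => Or.inr ha)
    exact (continuous_const.add continuous_id).add (((continuous_const.mul this).mul continuous_const).mul (by fun_prop))
  have t1 := (c1.tendsto 0).mono_left (nhdsWithin_le_nhds (s := Ioi 0))
  have t2 := (c2.tendsto 0).mono_left (nhdsWithin_le_nhds (s := Ioi 0))
  have := le_of_tendsto_of_tendsto t1 t2 (by
    filter_upwards [self_mem_nhdsWithin] with ξ hξ
    exact H' ξ hξ)
  simpa using this

theorem stage3 {d : ℕ} (hd : 3 ≤ d) {m : ℝ} (hm0 : 0 < m) (hmc : m < ((d:ℝ) - 2) / d) :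
    ∃ C > 0, ∃ K > 0, ∀ {Ω : Set (EuclideanSpace ℝ (Fin d))} (_ : IsOpen Ω) {T : ℝ}
    {u : ℝ → EuclideanSpace ℝ (Fin d) → ℝ} {u₀ : EuclideanSpace ℝ (Fin d) → ℝ} (_ : IsFDESol m (Ioo 0 T ×ˢ Ω) u)
    (_ : ∀ x ∈ Ω, 0 ≤ u₀ x) (_ : TakesInit T Ω u u₀) {x₀ : EuclideanSpace ℝ (Fin d)} {R : ℝ} (_ : 0 < R)
    (_ : closedBall x₀ (3 * R) ⊆ Ω) {t : ℝ} (_ : 0 < t) (_ : t < T),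
    (∫ x in ball 0 1, u₀ (x₀ + R • x)) ≤ C * (t / R ^ 2) ^ (1 / (1 - m)) +
      C * (∫ x in ball 0 1, u₀ (x₀ + R • x) ^ (d * (1 - m) / 2)) ^ (2 / (d * (1 - m))) * (t / R ^ 2) ^ (-(m / (1 - m))) *
        (K * (2 * u t x₀) ^ m) := by
  have hd0 : (0:ℝ) < d := by positivity
  have hd3 : (3:ℝ) ≤ d := by exact_mod_cast hd
  have hm1 : m < 1 := hmc.trans (by rw [div_lt_one hd0]; linarith)
  have hm : 0 < 1 - m := by linarith
  obtain ⟨C, hC, K, hK, H⟩ := stage2 hd hm0 hmc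
  refine ⟨C, hC, K, hK, ?_⟩
  intro Ω hΩ T u u₀ hu hu0 hinit x₀ R hR hsub t ht htT
  set p : ℝ := d * (1 - m) / 2 with hp
  have hp0 : 0 < p := by positivity
  set π' : EuclideanSpace ℝ (Fin d) → EuclideanSpace ℝ (Fin d) := fun x => x₀ + R • ((max 1 ‖x‖)⁻¹ • x) with hπ
  have hπc : Continuous π' := by
    have h0 : Continuous fun x : EuclideanSpace ℝ (Fin d) => (max 1 ‖x‖)⁻¹ := by
      refine Continuous.inv₀ (by fun_prop) (fun x => ?_)
      have : (1:ℝ) ≤ max 1 ‖x‖ := le_max_left _ _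
      linarith
    simp only [hπ]
    fun_prop
  have hπ1 : ∀ x, ‖x‖ ≤ 1 → π' x = x₀ + R • x := by
    intro x hx
    simp only [hπ]
    rw [max_eq_left hx, inv_one, one_smul]
  have hπm : ∀ x, π' x ∈ Ω := by
    intro x
    apply hsub
    simp only [hπ]
    rw [mem_closedBall, dist_eq_norm, add_sub_cancel_left, norm_smul, norm_smul, Real.norm_eq_abs, abs_of_pos hR, norm_inv,
      Real.norm_eq_abs]
    have h1 : (1:ℝ) ≤ max 1 ‖x‖ := le_max_left _ _
    rw [abs_of_pos (by linarith)]
    have h2 : (max 1 ‖x‖)⁻¹ * ‖x‖ ≤ 1 := by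
      rw [inv_mul_le_iff₀ (by linarith), mul_one]
      exact le_max_right _ _
    nlinarith
  set cl : ℝ → ℝ := fun e => max 0 (min e t) with hcl
  have hclc : Continuous cl := by fun_prop
  have hclm : ∀ e, cl e ∈ Ico 0 T := by
    intro e
    refine ⟨le_max_left _ _, max_lt (ht.trans htT) ((min_le_right _ _).trans_lt htT)⟩
  have hcl1 : ∀ e, 0 < e → e < t → cl e = e := by
    intro e h1 h2
    simp only [hcl]
    rw [min_eq_left h2.le, max_eq_right h1.le]
  have hcl0 : cl 0 = 0 := by
    simp only [hcl]
    rw [min_eq_left ht.le, max_self]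
  set Φ : ℝ → EuclideanSpace ℝ (Fin d) → ℝ := fun e x => u (cl e) (π' x) with hΦ
  have hΦc : Continuous (Function.uncurry Φ) := by
    have h := hinit.1.comp_continuous (f := fun q : ℝ × EuclideanSpace ℝ (Fin d) => (cl q.1, π' q.2))
      ((hclc.comp continuous_fst).prodMk (hπc.comp continuous_snd)) (fun q => ⟨hclm _, hπm _⟩)
    exact h
  have hΦ0 : ∀ e x, 0 ≤ Φ e x := by
    intro e x
    simp only [hΦ]
    rcases (hclm e).1.eq_or_lt with h | h
    · rw [← h, hinit.2 _ (hπm x)]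
      exact hu0 _ (hπm x)
    · exact (hu.1 (cl e, π' x) ⟨⟨h, (hclm e).2⟩, hπm x⟩).le
  have hΦpc : Continuous (Function.uncurry (fun e x => Φ e x ^ p)) := hΦc.rpow_const (fun _ => Or.inr hp0.le)
  have hIc : Continuous (fun e => ∫ x in ball 0 1, Φ e x) := by
    simp only [ball_int]
    exact continuous_parametric_integral_of_continuous hΦc (isCompact_closedBall _ _)
  have hJc : Continuous (fun e => ∫ x in ball 0 1, Φ e x ^ p) := by
    simp only [ball_int]
    exact continuous_parametric_integral_of_continuous hΦpc (isCompact_closedBall _ _)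
  have ha : (0:ℝ) ≤ 2 / (d * (1 - m)) := by positivity
  have hsc : ContinuousAt (fun e : ℝ => (t - e) / R ^ 2) 0 := by fun_prop
  have hsne : (t - 0) / R ^ 2 ≠ 0 := by
    rw [sub_zero]
    positivity
  have c2 : ContinuousAt (fun e : ℝ => C * ((t - e) / R ^ 2) ^ (1 / (1 - m)) +
      C * (∫ x in ball 0 1, Φ e x ^ p) ^ (2 / (d * (1 - m))) * ((t - e) / R ^ 2) ^ (-(m / (1 - m))) *
        (K * (2 * u t x₀) ^ m)) 0 := by
    have h1 := hsc.rpow_const (p := 1 / (1 - m)) (Or.inl hsne)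
    have h2 := hsc.rpow_const (p := -(m / (1 - m))) (Or.inl hsne)
    have h3 := hJc.continuousAt (x := 0).rpow_const (p := 2 / (d * (1 - m))) (Or.inr ha)
    exact (continuousAt_const.mul h1).add (((continuousAt_const.mul h3).mul h2).mul continuousAt_const)
  have t1 := (hIc.tendsto 0).mono_left (nhdsWithin_le_nhds (s := Ioi 0))
  have t2 := c2.tendsto.mono_left (nhdsWithin_le_nhds (s := Ioi 0))
  have key := le_of_tendsto_of_tendsto t1 t2 (by
    have e4 : ∀ᶠ e : ℝ in nhdsWithin 0 (Ioi 0), e < t := nhdsWithin_le_nhds (Iio_mem_nhds ht)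
    filter_upwards [self_mem_nhdsWithin, e4] with e he het
    refine H hΩ hu hR hsub he het htT (Φ e) (hΦc.comp (by fun_prop : Continuous fun x => (e, x))) (hΦ0 e) (fun x hx => ?_)
    simp only [hΦ]
    rw [hcl1 e he het, hπ1 x hx])
  have hΦu : ∀ x ∈ ball (0 : EuclideanSpace ℝ (Fin d)) 1, Φ 0 x = u₀ (x₀ + R • x) := by
    intro x hx
    rw [mem_ball, dist_zero_right] at hx
    simp only [hΦ]
    rw [hcl0, hinit.2 _ (hπm x), hπ1 x hx.le]
  rw [setIntegral_congr_fun (g := fun x => u₀ (x₀ + R • x)) measurableSet_ball hΦu,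
    setIntegral_congr_fun (f := fun x => Φ 0 x ^ p) (g := fun x => u₀ (x₀ + R • x) ^ p) measurableSet_ball (fun x hx => by
      change Φ 0 x ^ p = _
      rw [hΦu x hx]), sub_zero] at key
  exact key
/-- **Theorem 1.4: Aronson–Caffarelli type estimate without the extinction time,
via the `L^{p_c}` norm.** Here `p_c = d(1-m)/2`. -/
theorem aronson_caffarelli_via_Lpc
    (d : ℕ) (hd : 3 ≤ d) (m : ℝ) (hm0 : 0 < m) (hmc : m < (d - 2 : ℝ) / d) :
    ∃ C₁ C₃ : ℝ, 0 < C₁ ∧ 0 < C₃ ∧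
      ∀ (Ω : Set (EuclideanSpace ℝ (Fin d))), IsOpen Ω →
      ∀ (u : ℝ → EuclideanSpace ℝ (Fin d) → ℝ) (u₀ : EuclideanSpace ℝ (Fin d) → ℝ) (T : ℝ),
        0 < T →
        IsFDESol m (Ioo 0 T ×ˢ Ω) u →
        (∀ x ∈ Ω, 0 ≤ u₀ x) →
        TakesInit T Ω u u₀ →
        ExtinctAt T Ω u →
      ∀ (x₀ : EuclideanSpace ℝ (Fin d)) (R : ℝ), 0 < R →
        closedBall x₀ (3 * R) ⊆ Ω →
        IntegrableOn (fun x => u₀ x ^ (d * (1 - m) / 2)) (ball x₀ R) →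
      ∀ t : ℝ, 0 < t → t < T →
        R ^ (-(d : ℝ)) * ∫ x in ball x₀ R, u₀ x ≤
          C₁ * R ^ (-2 / (1 - m)) * t ^ ((1 : ℝ) / (1 - m)) +
          C₃ * (∫ x in ball x₀ R, u₀ x ^ (d * (1 - m) / 2)) ^ (2 / (d * (1 - m))) *
            R ^ (-2 : ℝ) * t ^ (-(m / (1 - m))) * u t x₀ ^ m := by
  have hd0 : (0:ℝ) < d := by positivity
  have hd3 : (3:ℝ) ≤ d := by exact_mod_cast hd
  have hm1 : m < 1 := hmc.trans (by rw [div_lt_one hd0]; linarith)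
  have hm : 0 < 1 - m := by linarith
  obtain ⟨C, hC, K, hK, H⟩ := stage3 hd hm0 hmc
  refine ⟨C, C * K * 2 ^ m, hC, by positivity, ?_⟩
  intro Ω hΩ u u₀ T _ hu hu0 hinit _ x₀ R hR hsub _ t ht htT
  have key := H hΩ hu hu0 hinit hR hsub ht htT
  rw [ball_resc u₀ x₀ hR, ball_resc (fun x => u₀ x ^ (d * (1 - m) / 2)) x₀ hR] at key
  have hx₀ : x₀ ∈ Ω := hsub (mem_closedBall_self (by positivity))
  have hut : 0 < u t x₀ := hu.1 (t, x₀) ⟨⟨ht, htT⟩, hx₀⟩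
  set P := ∫ x in ball x₀ R, u₀ x ^ (d * (1 - m) / 2) with hP
  have hP0 : 0 ≤ P := by
    refine setIntegral_nonneg measurableSet_ball fun x hx => Real.rpow_nonneg (hu0 x (hsub ?_)) _
    refine ball_subset_closedBall (ball_subset_ball ?_ hx)
    linarith
  have e0 : R ^ (-(d:ℝ)) = (R ^ d)⁻¹ := by rw [Real.rpow_neg hR.le, Real.rpow_natCast]
  have e1 : (t / R ^ 2) ^ ((1:ℝ) / (1 - m)) = R ^ (-2 / (1 - m)) * t ^ ((1:ℝ) / (1 - m)) := by
    rw [Real.div_rpow ht.le (by positivity), ← Real.rpow_natCast R 2, ← Real.rpow_mul hR.le, div_eq_mul_inv, ← Real.rpow_neg hR.le, mul_comm]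
    congr 2
    push_cast
    ring
  have e2 : (t / R ^ 2) ^ (-(m / (1 - m))) = R ^ (2 * m / (1 - m)) * t ^ (-(m / (1 - m))) := by
    rw [Real.div_rpow ht.le (by positivity), ← Real.rpow_natCast R 2, ← Real.rpow_mul hR.le, div_eq_mul_inv, ← Real.rpow_neg hR.le, mul_comm]
    congr 2
    push_cast
    ring
  have e3 : ((R ^ d)⁻¹ * P) ^ (2 / (d * (1 - m))) = R ^ (-2 / (1 - m)) * P ^ (2 / (d * (1 - m))) := by
    rw [Real.mul_rpow (by positivity) hP0, ← e0, ← Real.rpow_mul hR.le]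
    congr 2
    field_simp
  have e4 : R ^ (-2 / (1 - m)) * R ^ (2 * m / (1 - m)) = R ^ (-2 : ℝ) := by
    rw [← Real.rpow_add hR]
    congr 1
    field_simp
    ring
  rw [e0]
  refine key.trans_eq ?_
  rw [e1, e2, e3, Real.mul_rpow (by norm_num) hut.le, ← e4]
  ring
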